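/- Let Ω ⊂ ℝⁿ be a bounded C^{1,1} domain, x₀ ∈ ∂Ω, and ∂Ω ∩ B(x₀,10) ∈ Lip(τ) with τ < 1/100. Let h ∈ C(Ω̄) be harmonic in Ω with ∂h/∂ν = 0 on ∂Ω ∩ B(x₀,10), normalized so that sup_{Ω∩B(x₀,3)} |h| = 1. Let (x₁, S, Ω∩S) be the standard approximation near x₀ and Γ₋ = {(x',x'') ∈ S̄ : x'' = x₁''} the lower face of the cylinder S. Then there exists g ∈ C(S̄) with Δg = 0 in S and ∂g/∂e_n = 0 on Γ₋ such that sup_{Ω∩S} |g − h| < Cτ and sup_S |g| = sup_{Ω∩S} |h|, where C depends only on n and the C^{1,1} character of Ω. -/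

import Mathlib

noncomputable section

open MeasureTheory Metric Set Filter Asymptotics
open scoped Topology NNReal ENNReal RealInnerProductSpace

namespace NodalNeumann

/-- Euclidean space `ℝⁿ`. -/
abbrev Euc (n : ℕ) : Type := EuclideanSpace ℝ (Fin n)

/-- The first `n` coordinates `y'` of a point `y = (y', y'') ∈ ℝ^{n+1}`. -/
def front {n : ℕ} (y : Euc (n + 1)) : Euc n :=
  (EuclideanSpace.equiv (Fin n) ℝ).symm fun i => y i.castSucc

/-- The last coordinate `y''` of a point `y = (y', y'') ∈ ℝ^{n+1}`. -/
def lastc {n : ℕ} (y : Euc (n + 1)) : ℝ := y (Fin.last n)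

/-- `(v, a) ∈ ℝ^{n+1}` built from `v ∈ ℝⁿ` and `a ∈ ℝ`. -/
def snocVec {n : ℕ} (v : Euc n) (a : ℝ) : Euc (n + 1) :=
  (EuclideanSpace.equiv (Fin (n + 1)) ℝ).symm
    fun i => if h : i = Fin.last n then a else v (i.castPred h)

/-- The Laplacian of `u : ℝⁿ → ℝ`. -/
def laplacian {n : ℕ} (u : Euc n → ℝ) (x : Euc n) : ℝ :=
  ∑ i : Fin n, fderiv ℝ (fun y => fderiv ℝ u y (EuclideanSpace.single i 1)) x
    (EuclideanSpace.single i 1)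

/-- `u` is harmonic on `s`. -/
def HarmonicOn {n : ℕ} (u : Euc n → ℝ) (s : Set (Euc n)) : Prop :=
  ContDiffOn ℝ 2 u s ∧ ∀ x ∈ s, laplacian u x = 0

/-- `ν` is the outward unit normal vector of `Ω` at the boundary point `x`:
it is a unit vector, points out of `Ω`, `-ν` points into `Ω`, and it is
orthogonal to the boundary at `x` (in the little-o sense). -/
def OutwardNormalAt {n : ℕ} (Ω : Set (Euc n)) (x ν : Euc n) : Prop :=
  ‖ν‖ = 1 ∧
  (∀ᶠ t : ℝ in 𝓝[>] (0 : ℝ), x + t • ν ∉ closure Ω) ∧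
  (∀ᶠ t : ℝ in 𝓝[>] (0 : ℝ), x - t • ν ∈ Ω) ∧
  (fun y : Euc n => (⟪ν, y - x⟫)) =o[𝓝[frontier Ω] x] fun y => ‖y - x‖

/-- `ν` is an outward unit normal field of `Ω` along `∂Ω ∩ s`. -/
def OutwardNormalFieldOn {n : ℕ} (Ω : Set (Euc n)) (ν : Euc n → Euc n)
    (s : Set (Euc n)) : Prop :=
  ∀ x ∈ frontier Ω ∩ s, OutwardNormalAt Ω x (ν x)

/-- The homogeneous Neumann boundary condition `∂h/∂ν = 0` on `∂Ω ∩ s`. -/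
def NeumannBC {n : ℕ} (Ω : Set (Euc n)) (ν : Euc n → Euc n) (h : Euc n → ℝ)
    (s : Set (Euc n)) : Prop :=
  ∀ x ∈ frontier Ω ∩ s, DifferentiableWithinAt ℝ h (closure Ω) x ∧
    fderivWithin ℝ h (closure Ω) x (ν x) = 0

/-- `f : ℝⁿ → ℝ` is `C^{1,1}` with character `M`: differentiable with `M`-Lipschitz
derivative (and itself `M`-Lipschitz). -/
def IsC11FunWith {n : ℕ} (M : ℝ≥0) (f : Euc n → ℝ) : Prop :=
  Differentiable ℝ f ∧ LipschitzWith M f ∧ LipschitzWith M fun x => fderiv ℝ f x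

/-- `Ω ∩ B(x,r)` is, after an isometry `T` of `ℝ^{n+1}` with `T 0 = x`, the region
in the ball above the graph of a function `f` with `f 0 = 0` satisfying `P`. -/
def IsGraphBall {n : ℕ} (Ω : Set (Euc (n + 1))) (x : Euc (n + 1)) (r : ℝ)
    (P : (Euc n → ℝ) → Prop) : Prop :=
  ∃ (T : Euc (n + 1) ≃ᵃⁱ[ℝ] Euc (n + 1)) (f : Euc n → ℝ), P f ∧ T 0 = x ∧ f 0 = 0 ∧
    Ω ∩ ball x r =
      ⇑T '' {y : Euc (n + 1) | y ∈ ball (0 : Euc (n + 1)) r ∧ f (front y) < lastc y}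

/-- `∂Ω ∩ B(x,r) ∈ Lip(τ)`. -/
def LipGraphBall {n : ℕ} (Ω : Set (Euc (n + 1))) (x : Euc (n + 1)) (r τ : ℝ) : Prop :=
  IsGraphBall Ω x r fun f => LipschitzWith (Real.toNNReal τ) f

/-- `Ω` is a `C^{1,1}` domain with character `(ρ, M)`. -/
def IsC11DomainWith {n : ℕ} (Ω : Set (Euc (n + 1))) (ρ : ℝ) (M : ℝ≥0) : Prop :=
  IsOpen Ω ∧ IsConnected Ω ∧ 0 < ρ ∧
    ∀ x ∈ frontier Ω, IsGraphBall Ω x ρ (IsC11FunWith M)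

/-- `Ω` is a `C^{1,1}` domain. -/
def IsC11Domain {n : ℕ} (Ω : Set (Euc (n + 1))) : Prop :=
  ∃ (ρ : ℝ) (M : ℝ≥0), IsC11DomainWith Ω ρ M

/-- `Ω` is a Lipschitz domain with character `(ρ, M)`. -/
def IsLipDomainWith {n : ℕ} (Ω : Set (Euc (n + 1))) (ρ : ℝ) (M : ℝ≥0) : Prop :=
  IsOpen Ω ∧ IsConnected Ω ∧ 0 < ρ ∧
    ∀ x ∈ frontier Ω, IsGraphBall Ω x ρ fun f => LipschitzWith M f

/-- The portion `∂Ω ∩ s` of the boundary has `C^{1,1}` character `(ρ, M)`. -/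
def HasC11CharacterOn {n : ℕ} (Ω : Set (Euc (n + 1))) (s : Set (Euc (n + 1)))
    (ρ : ℝ) (M : ℝ≥0) : Prop :=
  0 < ρ ∧ ∀ x ∈ frontier Ω ∩ s, IsGraphBall Ω x ρ (IsC11FunWith M)

/-- `H_h(x,r) = ∫_{B(x,r) ∩ Ω} h²`. -/
def Hfun {n : ℕ} (Ω : Set (Euc n)) (h : Euc n → ℝ) (x : Euc n) (r : ℝ) : ℝ :=
  ∫ y in ball x r ∩ Ω, h y ^ 2

/-- The doubling index `N_h(x,r) = log (H_h(x,2r) / H_h(x,r))`. -/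
def Nfun {n : ℕ} (Ω : Set (Euc n)) (h : Euc n → ℝ) (x : Euc n) (r : ℝ) : ℝ :=
  Real.log (Hfun Ω h x (2 * r) / Hfun Ω h x r)

/-- Closed axis-parallel cube with centre `c` and side length `s`. -/
def cube {n : ℕ} (c : Euc n) (s : ℝ) : Set (Euc n) :=
  {y : Euc n | ∀ i, |y i - c i| ≤ s / 2}

/-- Maximal doubling index `N*_h(Q)` over the cube of centre `c` and side `s`
(whose diameter is `√n · s`). -/
def Nstar {n : ℕ} (Ω : Set (Euc n)) (h : Euc n → ℝ) (c : Euc n) (s : ℝ) : ℝ :=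
  sSup {N : ℝ | ∃ x ∈ cube c s ∩ closure Ω, ∃ r : ℝ,
    0 < r ∧ r ≤ Real.sqrt n * s ∧ N = Nfun Ω h x r}

/-- The nodal set `Z(h) = {x ∈ Ω : h x = 0}`. -/
def zeroSet {n : ℕ} (Ω : Set (Euc n)) (h : Euc n → ℝ) : Set (Euc n) :=
  {x ∈ Ω | h x = 0}

/-- `sup_s g`. -/
def supOn {α : Type*} (g : α → ℝ) (s : Set α) : ℝ := sSup (g '' s)

/-- The open cylinder `S(x,r,t)` of radius `r` and height `t` whose lower face is
centred at `x`. -/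
def cyl {n : ℕ} (x : Euc (n + 1)) (r t : ℝ) : Set (Euc (n + 1)) :=
  {y : Euc (n + 1) | ‖front y - front x‖ < r ∧ 0 < lastc y - lastc x ∧
    lastc y - lastc x < t}

/-- In the chosen coordinates (centred at `x`, with `e_n = -ν(x)`), `Ω ∩ B(x,R)`
is the region above the graph of the `τ`-Lipschitz function `f` with `f 0 = 0`. -/
def AlignedLipGraphOn {n : ℕ} (Ω : Set (Euc (n + 1))) (x : Euc (n + 1)) (R τ : ℝ)
    (f : Euc n → ℝ) : Prop :=
  LipschitzWith (Real.toNNReal τ) f ∧ f 0 = 0 ∧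
    Ω ∩ ball x R = {y ∈ ball x R | f (front (y - x)) < lastc (y - x)}

/-- `z` is the centre of one of the boundary cubes `q ∈ 𝓑_k(Q)` of the standard
construction for the cube `Q` of centre `xQ` and side `s`: the projection of `z` is
the centre of one of the `2^{k·n}` subcubes of side `s/2^k` of the projection of
`Q`, and `z` lies on `∂Ω`. The cube `q` itself is `cube z (s/2^k)`. -/
def IsBdryCubeCenter {n : ℕ} (Ω : Set (Euc (n + 1))) (xQ : Euc (n + 1)) (s : ℝ)
    (k : ℕ) (z : Euc (n + 1)) : Prop :=
  z ∈ frontier Ω ∧ ∃ a : Fin n → ℕ, (∀ i, a i < 2 ^ k) ∧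
    ∀ i : Fin n, z i.castSucc = xQ i.castSucc - s / 2 + ((a i : ℝ) + 1 / 2) * (s / 2 ^ k)

/-- The infinite cylinder `Ω₀ × ℝ ⊂ ℝ^{n+1}` over `Ω₀ ⊂ ℝⁿ`. -/
def prodDomain {n : ℕ} (Ω₀ : Set (Euc n)) : Set (Euc (n + 1)) :=
  {y : Euc (n + 1) | front y ∈ Ω₀}

/-- The harmonic extension `h(x,t) = e^{√λ t} u(x)` of `u` to `Ω₀ × ℝ`. -/
def hExt {n : ℕ} (lam : ℝ) (u : Euc n → ℝ) : Euc (n + 1) → ℝ :=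
  fun y => Real.exp (Real.sqrt lam * lastc y) * u (front y)


/-- The point `x₁ = x₀ - 3τ e_n` of the standard approximation (in coordinates
where `x₀ = 0` and `e_n = -ν(x₀)`). -/
def xOne (n : ℕ) (τ : ℝ) : Euc (n + 1) :=
  (-(3 * τ)) • EuclideanSpace.single (Fin.last n) (1 : ℝ)

/-- The lower face `Γ₋ = {(y',y'') ∈ S̄(x,r,·) : y'' = x''}` of a cylinder. -/
def lowerFace {n : ℕ} (x : Euc (n + 1)) (r : ℝ) : Set (Euc (n + 1)) :=
  {y : Euc (n + 1) | ‖front y - front x‖ ≤ r ∧ lastc y = lastc x}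

/-! ### Coordinates -/

@[simp] lemma front_apply {n : ℕ} (y : Euc (n + 1)) (i : Fin n) : front y i = y i.castSucc := rfl

@[simp] lemma front_add {n : ℕ} (x y : Euc (n + 1)) : front (x + y) = front x + front y := by
  ext i; simp

@[simp] lemma front_sub {n : ℕ} (x y : Euc (n + 1)) : front (x - y) = front x - front y := by
  ext i; simp

@[simp] lemma front_smul {n : ℕ} (c : ℝ) (y : Euc (n + 1)) : front (c • y) = c • front y := by
  ext i; simp

@[simp] lemma front_neg {n : ℕ} (y : Euc (n + 1)) : front (-y) = -front y := by
  ext i; simp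

@[simp] lemma front_zero {n : ℕ} : front (0 : Euc (n + 1)) = 0 := by
  ext i; simp

@[simp] lemma lastc_add {n : ℕ} (x y : Euc (n + 1)) : lastc (x + y) = lastc x + lastc y := by
  simp [lastc]

@[simp] lemma lastc_sub {n : ℕ} (x y : Euc (n + 1)) : lastc (x - y) = lastc x - lastc y := by
  simp [lastc]

@[simp] lemma lastc_smul {n : ℕ} (c : ℝ) (y : Euc (n + 1)) : lastc (c • y) = c * lastc y := by
  simp [lastc]

@[simp] lemma lastc_neg {n : ℕ} (y : Euc (n + 1)) : lastc (-y) = -lastc y := by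
  simp [lastc]

@[simp] lemma lastc_zero {n : ℕ} : lastc (0 : Euc (n + 1)) = 0 := by
  simp [lastc]

@[simp] lemma front_snocVec {n : ℕ} (v : Euc n) (a : ℝ) : front (snocVec v a) = v := by
  ext i
  simp [snocVec, EuclideanSpace.equiv, Fin.castSucc_ne_last]

@[simp] lemma lastc_snocVec {n : ℕ} (v : Euc n) (a : ℝ) : lastc (snocVec v a) = a := by
  simp [snocVec, EuclideanSpace.equiv, lastc]

lemma euc_ext {n : ℕ} {x y : Euc (n + 1)} (h1 : front x = front y) (h2 : lastc x = lastc y) :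
    x = y := by
  ext i
  refine Fin.lastCases h2 (fun j => ?_) i
  have := congrArg (fun v : Euc n => v j) h1
  simpa using this

@[simp] lemma snocVec_front_lastc {n : ℕ} (x : Euc (n + 1)) : snocVec (front x) (lastc x) = x :=
  euc_ext (by simp) (by simp)

lemma inner_eq {n : ℕ} (x y : Euc (n + 1)) :
    ⟪x, y⟫ = ⟪front x, front y⟫ + lastc x * lastc y := by
  simp [PiLp.inner_apply, Fin.sum_univ_castSucc, lastc, mul_comm]

lemma norm_sq_eq {n : ℕ} (x : Euc (n + 1)) : ‖x‖ ^ 2 = ‖front x‖ ^ 2 + lastc x ^ 2 := by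
  rw [← real_inner_self_eq_norm_sq, ← real_inner_self_eq_norm_sq, inner_eq, sq]

lemma norm_front_le {n : ℕ} (x : Euc (n + 1)) : ‖front x‖ ≤ ‖x‖ := by
  have := norm_sq_eq x
  exact abs_le_of_sq_le_sq' (by nlinarith [sq_nonneg (lastc x)]) (norm_nonneg _) |>.2

lemma abs_lastc_le {n : ℕ} (x : Euc (n + 1)) : |lastc x| ≤ ‖x‖ := by
  have := norm_sq_eq x
  exact abs_le_of_sq_le_sq (by nlinarith [sq_nonneg ‖front x‖]) (norm_nonneg _)

lemma norm_le_add {n : ℕ} (x : Euc (n + 1)) : ‖x‖ ≤ ‖front x‖ + |lastc x| := by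
  have := norm_sq_eq x
  have h0 := norm_nonneg (front x)
  have h1 := abs_nonneg (lastc x)
  refine abs_le_of_sq_le_sq' (by nlinarith [sq_abs (lastc x)]) (by positivity) |>.2

/-- `front` as a continuous linear map. -/
def frontL (n : ℕ) : Euc (n + 1) →L[ℝ] Euc n :=
  LinearMap.mkContinuous
    { toFun := front, map_add' := front_add, map_smul' := by intro c x; simp } 1
    (by intro x; simpa using norm_front_le x)

/-- `lastc` as a continuous linear map. -/
def lastL (n : ℕ) : Euc (n + 1) →L[ℝ] ℝ :=
  LinearMap.mkContinuous
    { toFun := lastc, map_add' := lastc_add, map_smul' := by intro c x; simp } 1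
    (by intro x; simpa using abs_lastc_le x)

@[simp] lemma frontL_apply {n : ℕ} (x : Euc (n + 1)) : frontL n x = front x := rfl
@[simp] lemma lastL_apply {n : ℕ} (x : Euc (n + 1)) : lastL n x = lastc x := rfl

@[fun_prop] lemma continuous_front {n : ℕ} : Continuous (front : Euc (n + 1) → Euc n) :=
  (frontL n).continuous
@[fun_prop] lemma continuous_lastc {n : ℕ} : Continuous (lastc : Euc (n + 1) → ℝ) :=
  (lastL n).continuous

/-- The last unit vector. -/
def en (n : ℕ) : Euc (n + 1) := EuclideanSpace.single (Fin.last n) (1 : ℝ)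

@[simp] lemma front_en {n : ℕ} : front (en n) = 0 := by
  ext i
  simp [en, Fin.castSucc_ne_last]

@[simp] lemma lastc_en {n : ℕ} : lastc (en n) = 1 := by
  simp [en, lastc]

@[simp] lemma norm_en {n : ℕ} : ‖en n‖ = 1 := by
  simp [en]

/-! ### Laplacian -/

open InnerProductSpace in
lemma laplacian_eq_mathlib {n : ℕ} {u : Euc n → ℝ} {x : Euc n} (hu : ContDiffAt ℝ 2 u x) :
    laplacian u x = Laplacian.laplacian u x := by
  have hd : DifferentiableAt ℝ (fderiv ℝ u) x :=
    (hu.fderiv_right (m := 1) (by norm_num)).differentiableAt (by norm_num)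
  rw [laplacian_eq_iteratedFDeriv_orthonormalBasis u (EuclideanSpace.basisFun (Fin n) ℝ)]
  simp only [laplacian, iteratedFDeriv_two_apply]
  refine Finset.sum_congr rfl fun i _ => ?_
  have : fderiv ℝ (fun y => fderiv ℝ u y (EuclideanSpace.single i 1)) x
      = (fderiv ℝ (fderiv ℝ u) x).flip (EuclideanSpace.single i 1) := by
    have h1 := hd.hasFDerivAt.clm_apply (hasFDerivAt_const (EuclideanSpace.single i (1:ℝ)) x)
    rw [h1.fderiv]
    ext v
    simp
  rw [this]
  simp

open InnerProductSpace in
lemma laplacian_eq_sum {n : ℕ} {u : Euc n → ℝ} {x : Euc n} (hu : ContDiffAt ℝ 2 u x)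
    {ι : Type*} [Fintype ι] (b : OrthonormalBasis ι ℝ (Euc n)) :
    laplacian u x = ∑ i, fderiv ℝ (fderiv ℝ u) x (b i) (b i) := by
  rw [laplacian_eq_mathlib hu, laplacian_eq_iteratedFDeriv_orthonormalBasis u b]
  simp [iteratedFDeriv_two_apply]

/-- Second differences along a line. -/
lemma second_diff_line {k k' : ℝ → ℝ} {c : ℝ} (hk : ∀ᶠ s in 𝓝 (0 : ℝ), HasDerivAt k (k' s) s)
    (hk' : HasDerivAt k' c 0) :
    (fun s => k s + k (-s) - 2 * k 0 - s ^ 2 * c) =o[𝓝 0] fun s : ℝ => s ^ 2 := by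
  rw [isLittleO_iff]
  intro ε hε
  have h1 : ∀ᶠ s in 𝓝 (0 : ℝ), |k' s - k' 0 - s * c| ≤ ε / 2 * |s| := by
    have := hk'.isLittleO
    rw [isLittleO_iff] at this
    simpa using this (half_pos hε)
  obtain ⟨r, hr, hball⟩ := Metric.eventually_nhds_iff_ball.1 (hk.and h1)
  filter_upwards [Metric.ball_mem_nhds (0 : ℝ) hr] with s hs
  have hs' : |s| < r := by simpa using hs
  set D : ℝ → ℝ := fun s => k s + k (-s) - 2 * k 0 - s ^ 2 * c with hD
  have hder : ∀ t ∈ Icc (-|s|) |s|, HasDerivWithinAt D (k' t - k' (-t) - 2 * t * c)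
      (Icc (-|s|) |s|) t := by
    intro t ht
    have ht' : |t| < r := lt_of_le_of_lt (abs_le.2 ht) hs'
    have e1 := (hball t (by simpa using ht')).1
    have e2 := (hball (-t) (by simpa using ht')).1
    have e3 : HasDerivAt (fun s => k (-s)) (k' (-t) * (-1)) t :=
      e2.comp t (hasDerivAt_neg t)
    have e4 : HasDerivAt (fun s : ℝ => s ^ 2 * c) (2 * t * c) t := by
      simpa using (hasDerivAt_pow 2 t).mul_const c
    have := (((e1.add e3).sub_const (2 * k 0)).sub e4)
    refine HasDerivAt.hasDerivWithinAt ?_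
    have e5 : k' t - k' (-t) - 2 * t * c = k' t + k' (-t) * -1 - 2 * t * c := by ring
    rw [e5]
    exact this
  have hbd : ∀ t ∈ Icc (-|s|) |s|, ‖k' t - k' (-t) - 2 * t * c‖ ≤ ε * |s| := by
    intro t ht
    have ht' : |t| < r := lt_of_le_of_lt (abs_le.2 ht) hs'
    have e1 := (hball t (by simpa using ht')).2
    have e2 := (hball (-t) (by simpa using ht')).2
    have : k' t - k' (-t) - 2 * t * c
      = (k' t - k' 0 - t * c) - (k' (-t) - k' 0 - (-t) * c) := by ring
    rw [this, Real.norm_eq_abs]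
    have h3 := abs_sub (k' t - k' 0 - t * c) (k' (-t) - k' 0 - (-t) * c)
    rw [abs_neg] at e2
    have : |t| ≤ |s| := abs_le.2 ht
    nlinarith
  have hmv := (convex_Icc (-|s|) |s|).norm_image_sub_le_of_norm_hasDerivWithin_le hder hbd
    (x := 0) (y := s) (by constructor <;> simp) ⟨neg_abs_le s, le_abs_self s⟩
  have hD0 : D 0 = 0 := by simp [hD]; ring
  rw [hD0, sub_zero, sub_zero] at hmv
  have e : ‖s ^ 2‖ = |s| * |s| := by rw [norm_pow, Real.norm_eq_abs, sq]
  rw [e]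
  calc ‖D s‖ ≤ ε * |s| * ‖s‖ := hmv
    _ = ε * (|s| * |s|) := by rw [Real.norm_eq_abs]; ring

lemma second_diff {n : ℕ} {u : Euc n → ℝ} {x : Euc n} (hu : ContDiffAt ℝ 2 u x) (v : Euc n) :
    (fun s : ℝ => u (x + s • v) + u (x - s • v) - 2 * u x
      - s ^ 2 * fderiv ℝ (fderiv ℝ u) x v v) =o[𝓝 0] fun s : ℝ => s ^ 2 := by
  have hd : DifferentiableAt ℝ (fderiv ℝ u) x :=
    (hu.fderiv_right (m := 1) (by norm_num)).differentiableAt (by norm_num)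
  have hev : ∀ᶠ y in 𝓝 x, DifferentiableAt ℝ u y := by
    have := hu.eventually (by simp)
    filter_upwards [this] with y hy
    exact hy.differentiableAt (by norm_num)
  have hl : ∀ s : ℝ, HasDerivAt (fun s : ℝ => x + s • v) v s := by
    intro s
    simpa using ((hasDerivAt_id s).smul_const v).const_add x
  have hc : Tendsto (fun s : ℝ => x + s • v) (𝓝 0) (𝓝 x) := by
    have := (hl 0).continuousAt.tendsto
    simpa using this
  have h := second_diff_line (k := fun s => u (x + s • v))
    (k' := fun s => fderiv ℝ u (x + s • v) v) (c := fderiv ℝ (fderiv ℝ u) x v v) ?_ ?_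
  · simpa [sub_eq_add_neg] using h
  · filter_upwards [hc.eventually hev] with s hs
    exact hs.hasFDerivAt.comp_hasDerivAt s (hl s)
  · have h0 : HasFDerivAt (fderiv ℝ u) (fderiv ℝ (fderiv ℝ u) x) (x + (0:ℝ) • v) := by
      simpa using hd.hasFDerivAt
    have := h0.comp_hasDerivAt (0:ℝ) (hl 0)
    have h2 := this.clm_apply (hasDerivAt_const (0:ℝ) v)
    simpa using h2

/-- Sum of second differences over an orthonormal basis. -/
lemma second_diff_sum {n : ℕ} {u : Euc n → ℝ} {x : Euc n} (hu : ContDiffAt ℝ 2 u x)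
    {ι : Type*} [Fintype ι] (b : OrthonormalBasis ι ℝ (Euc n)) :
    (fun s : ℝ => (∑ i, (u (x + s • b i) + u (x - s • b i) - 2 * u x))
      - s ^ 2 * laplacian u x) =o[𝓝 0] fun s : ℝ => s ^ 2 := by
  rw [laplacian_eq_sum hu b]
  have := IsLittleO.sum (A := fun i s => u (x + s • b i) + u (x - s • b i) - 2 * u x
      - s ^ 2 * fderiv ℝ (fderiv ℝ u) x (b i) (b i)) (s := Finset.univ)
      (fun i _ => second_diff hu (b i))
  refine this.congr_left fun s => ?_
  simp only [Finset.sum_apply, Finset.sum_sub_distrib, Finset.mul_sum]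

lemma HarmonicOn.contDiffAt {n : ℕ} {u : Euc n → ℝ} {s : Set (Euc n)} (hu : HarmonicOn u s)
    (hs : IsOpen s) {x : Euc n} (hx : x ∈ s) : ContDiffAt ℝ 2 u x :=
  (hu.1 x hx).contDiffAt (hs.mem_nhds hx)

lemma HarmonicOn.second_diff_sum {n : ℕ} {u : Euc n → ℝ} {s : Set (Euc n)} (hu : HarmonicOn u s)
    (hs : IsOpen s) {x : Euc n} (hx : x ∈ s)
    {ι : Type*} [Fintype ι] (b : OrthonormalBasis ι ℝ (Euc n)) :
    (fun s : ℝ => (∑ i, (u (x + s • b i) + u (x - s • b i) - 2 * u x)))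
      =o[𝓝 0] fun s : ℝ => s ^ 2 := by
  have := NodalNeumann.second_diff_sum (hu.contDiffAt hs hx) b
  simpa [hu.2 x hx] using this

/-- little-o versus a strictly positive quadratic lower bound. -/
lemma not_isLittleO_of_ge {A : ℝ → ℝ} {c : ℝ} (hc : 0 < c)
    (hA : A =o[𝓝 (0 : ℝ)] fun s : ℝ => s ^ 2) (h : ∀ᶠ s in 𝓝[>] (0 : ℝ), A s ≤ -(c * s ^ 2)) :
    False := by
  have h1 := (isLittleO_iff.1 hA) (half_pos hc)
  have h2 : ∀ᶠ s in 𝓝[>] (0 : ℝ), ‖A s‖ ≤ c / 2 * ‖s ^ 2‖ := nhdsWithin_le_nhds h1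
  obtain ⟨s, ⟨hs1, hs2⟩, hs3⟩ := ((h.and h2).and self_mem_nhdsWithin).exists
  have hs3 : 0 < s := hs3
  rw [Real.norm_eq_abs, Real.norm_eq_abs, abs_of_nonneg (sq_nonneg s)] at hs2
  have := neg_abs_le (A s)
  have : 0 < s ^ 2 := by positivity
  nlinarith

lemma harmonicOn_neg {n : ℕ} {u : Euc n → ℝ} {s : Set (Euc n)} (hs : IsOpen s)
    (hu : HarmonicOn u s) : HarmonicOn (fun x => - u x) s := by
  refine ⟨hu.1.neg, fun x hx => ?_⟩
  have h1 := hu.contDiffAt hs hx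
  have e : (fun x => - u x) = -u := rfl
  have h2 : ContDiffAt ℝ 2 (-u) x := h1.neg
  rw [e, laplacian_eq_mathlib h2, InnerProductSpace.laplacian_neg, Pi.neg_apply,
    ← laplacian_eq_mathlib h1, hu.2 x hx, neg_zero]

lemma harmonicOn_sub {n : ℕ} {u v : Euc n → ℝ} {s : Set (Euc n)} (hs : IsOpen s)
    (hu : HarmonicOn u s) (hv : HarmonicOn v s) : HarmonicOn (fun x => u x - v x) s := by
  refine ⟨hu.1.sub hv.1, fun x hx => ?_⟩
  have h1 := hu.contDiffAt hs hx
  have h2 := hv.contDiffAt hs hx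
  have e : (fun x => u x - v x) = u - v := rfl
  have h3 : ContDiffAt ℝ 2 (u - v) x := h1.sub h2
  rw [e, laplacian_eq_mathlib h3, h1.laplacian_sub h2,
    ← laplacian_eq_mathlib h1, ← laplacian_eq_mathlib h2, hu.2 x hx, hv.2 x hx, sub_zero]

lemma harmonicOn_const_mul {n : ℕ} {u : Euc n → ℝ} {s : Set (Euc n)} (hs : IsOpen s) (c : ℝ)
    (hu : HarmonicOn u s) : HarmonicOn (fun x => c * u x) s := by
  refine ⟨contDiffOn_const.mul hu.1, fun x hx => ?_⟩
  have h1 := hu.contDiffAt hs hx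
  have e : (fun x => c * u x) = c • u := rfl
  have h3 : ContDiffAt ℝ 2 (c • u) x := h1.const_smul c
  rw [e, laplacian_eq_mathlib h3, InnerProductSpace.laplacian_smul c h1,
    ← laplacian_eq_mathlib h1, hu.2 x hx, smul_zero]

/-! ### Graph domains -/

/-- In the ball `B(0,R)` the set `Ω` is the strict epigraph of `f`. -/
def Gr {n : ℕ} (Ω : Set (Euc (n + 1))) (R : ℝ) (f : Euc n → ℝ) : Prop :=
  ∀ y ∈ ball (0 : Euc (n + 1)) R, (y ∈ Ω ↔ f (front y) < lastc y)

lemma Gr.closure_le {n : ℕ} {Ω : Set (Euc (n + 1))} {R : ℝ} {f : Euc n → ℝ} (hG : Gr Ω R f)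
    (hf : Continuous f) {x : Euc (n + 1)} (hx : x ∈ closure Ω) (hxR : x ∈ ball 0 R) :
    f (front x) ≤ lastc x := by
  by_contra hcon
  push Not at hcon
  have hopen : IsOpen (ball (0 : Euc (n + 1)) R ∩ {y | lastc y < f (front y)}) :=
    isOpen_ball.inter (isOpen_lt continuous_lastc (hf.comp continuous_front))
  obtain ⟨y, ⟨hy1, hy2⟩, hy3⟩ := mem_closure_iff.1 hx _ hopen ⟨hxR, hcon⟩
  have := (hG y hy1).1 hy3
  exact absurd this (not_lt.2 (le_of_lt hy2))

lemma Gr.mem_closure {n : ℕ} {Ω : Set (Euc (n + 1))} {R : ℝ} {f : Euc n → ℝ} (hG : Gr Ω R f)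
    {x : Euc (n + 1)} (hxR : x ∈ ball 0 R) (hx : f (front x) ≤ lastc x) :
    x ∈ closure Ω := by
  rw [Metric.mem_closure_iff]
  intro ε hε
  have hxR' : ‖x‖ < R := by simpa using hxR
  obtain ⟨t, ht0, ht1⟩ := exists_between (lt_min hε (sub_pos.2 hxR'))
  refine ⟨x + t • en n, ?_, ?_⟩
  · refine (hG _ ?_).2 (by simp; linarith)
    rw [mem_ball_zero_iff]
    have h1 := norm_add_le x (t • en n)
    rw [norm_smul, norm_en, Real.norm_eq_abs, abs_of_pos ht0] at h1
    have := lt_of_lt_of_le ht1 (min_le_right _ _)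
    linarith
  · rw [dist_eq_norm]
    simp only [sub_add_cancel_left, norm_neg, norm_smul, norm_en, Real.norm_eq_abs,
      abs_of_pos ht0, mul_one]
    exact lt_of_lt_of_le ht1 (min_le_left _ _)

lemma Gr.mem_frontier_iff {n : ℕ} {Ω : Set (Euc (n + 1))} {R : ℝ} {f : Euc n → ℝ} (hG : Gr Ω R f)
    (hf : Continuous f) {x : Euc (n + 1)} (hxR : x ∈ ball 0 R) :
    x ∈ frontier Ω ↔ f (front x) = lastc x := by
  constructor
  · intro hx
    refine le_antisymm (hG.closure_le hf hx.1 hxR) ?_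
    by_contra hcon
    push Not at hcon
    apply hx.2
    rw [mem_interior]
    refine ⟨ball (0 : Euc (n + 1)) R ∩ {y | f (front y) < lastc y}, ?_, ?_, hxR, hcon⟩
    · rintro y ⟨hy1, hy2⟩
      exact (hG y hy1).2 hy2
    · exact isOpen_ball.inter (isOpen_lt (hf.comp continuous_front) continuous_lastc)
  · intro hx
    refine ⟨hG.mem_closure hxR hx.le, fun hmi => ?_⟩
    have := (hG x hxR).1 (interior_subset hmi)
    linarith

/-- Tangential information contained in the outward normal. -/
lemma normal_tangent {n : ℕ} {Ω : Set (Euc (n + 1))} {R : ℝ} {f : Euc n → ℝ} (hG : Gr Ω R f)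
    {K : ℝ≥0} (hf : LipschitzWith K f) {x ν : Euc (n + 1)} (hxR : x ∈ ball 0 R)
    (hx : x ∈ frontier Ω) (hν : OutwardNormalAt Ω x ν) (v : Euc n) :
    (fun t : ℝ => t * ⟪front ν, v⟫ + lastc ν * (f (front x + t • v) - f (front x)))
      =o[𝓝 0] fun t : ℝ => t := by
  have hxf := (hG.mem_frontier_iff hf.continuous hxR).1 hx
  set Y : ℝ → Euc (n + 1) := fun t => x + snocVec (t • v) (f (front x + t • v) - f (front x))
    with hY
  have hbd : ∀ t, ‖Y t - x‖ ≤ ((1 + K) * ‖v‖) * ‖t‖ := by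
    intro t
    have h1 := norm_le_add (Y t - x)
    have h2 : |f (front x + t • v) - f (front x)| ≤ K * (‖t‖ * ‖v‖) := by
      have := hf.dist_le_mul (front x + t • v) (front x)
      simpa [Real.dist_eq, dist_eq_norm, norm_smul] using this
    simp only [hY, add_sub_cancel_left, front_snocVec, lastc_snocVec, norm_smul] at h1 ⊢
    nlinarith
  have hO : (fun t => ‖Y t - x‖) =O[𝓝 0] fun t : ℝ => t := by
    refine IsBigO.of_bound ((1 + K) * ‖v‖) (Eventually.of_forall fun t => ?_)
    rw [norm_norm]
    exact hbd t
  have hlim : Tendsto Y (𝓝 0) (𝓝 x) := by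
    rw [tendsto_iff_norm_sub_tendsto_zero]
    refine squeeze_zero (fun _ => norm_nonneg _) hbd ?_
    have : Tendsto (fun t : ℝ => ((1 + K) * ‖v‖) * ‖t‖) (𝓝 0) (𝓝 (((1 + K) * ‖v‖) * ‖(0:ℝ)‖)) :=
      (continuous_const.mul continuous_norm).tendsto 0
    simpa using this
  have hlim2 : Tendsto Y (𝓝 0) (𝓝[frontier Ω] x) := by
    rw [tendsto_nhdsWithin_iff]
    refine ⟨hlim, ?_⟩
    filter_upwards [hlim.eventually (isOpen_ball.mem_nhds hxR)] with t ht
    rw [hG.mem_frontier_iff hf.continuous ht]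
    simp [hY, hxf]
  have h := (hν.2.2.2.comp_tendsto hlim2).trans_isBigO hO
  refine h.congr_left fun t => ?_
  simp only [Function.comp, hY, add_sub_cancel_left, inner_eq, front_snocVec, lastc_snocVec,
    inner_smul_right]

lemma limit_le_of_littleO {a : ℝ} {A : ℝ → ℝ} (hA : A =o[𝓝 (0 : ℝ)] fun t : ℝ => t)
    (h : ∀ᶠ t in 𝓝[>] (0 : ℝ), t * a ≤ A t) : a ≤ 0 := by
  by_contra hcon
  push Not at hcon
  have h1 : ∀ᶠ t in 𝓝[>] (0 : ℝ), ‖A t‖ ≤ a / 2 * ‖t‖ :=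
    nhdsWithin_le_nhds ((isLittleO_iff.1 hA) (half_pos hcon))
  obtain ⟨t, ⟨ht1, ht2⟩, ht3⟩ := ((h.and h1).and self_mem_nhdsWithin).exists
  have ht3 : 0 < t := ht3
  rw [Real.norm_eq_abs, Real.norm_eq_abs, abs_of_pos ht3] at ht2
  have := le_abs_self (A t)
  nlinarith

lemma eventually_sub_smul_mem {E : Type*} [NormedAddCommGroup E] [NormedSpace ℝ E]
    {x v : E} {U : Set E} (hU : U ∈ 𝓝 x) : ∀ᶠ t : ℝ in 𝓝[>] (0 : ℝ), x - t • v ∈ U := by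
  have : Tendsto (fun t : ℝ => x - t • v) (𝓝 0) (𝓝 (x - (0:ℝ) • v)) :=
    (continuous_const.sub (continuous_id.smul continuous_const)).tendsto 0
  simp only [zero_smul, sub_zero] at this
  exact nhdsWithin_le_nhds (this.eventually hU)

/-- For a small Lipschitz constant the outward normal is almost `-e_n`. -/
lemma normal_lip {n : ℕ} {Ω : Set (Euc (n + 1))} {R : ℝ} {f : Euc n → ℝ} (hG : Gr Ω R f)
    {τ : ℝ} (hτ0 : 0 < τ) (hτ : τ < 1 / 100)
    (hf : LipschitzWith (Real.toNNReal τ) f) {x ν : Euc (n + 1)} (hxR : x ∈ ball 0 R)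
    (hx : x ∈ frontier Ω) (hν : OutwardNormalAt Ω x ν) :
    ‖front ν‖ ≤ τ * (-lastc ν) ∧ lastc ν ≤ -(99 / 100) ∧ -1 ≤ lastc ν := by
  have hxf := (hG.mem_frontier_iff hf.continuous hxR).1 hx
  have hlip : ∀ a b, |f a - f b| ≤ τ * ‖a - b‖ := by
    intro a b
    have := hf.dist_le_mul a b
    rwa [Real.coe_toNNReal _ hτ0.le, Real.dist_eq, dist_eq_norm] at this
  have h1 : ‖front ν‖ ≤ τ * |lastc ν| := by
    have h := normal_tangent hG hf hxR hx hν (front ν)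
    have h2 := limit_le_of_littleO (a := ‖front ν‖ ^ 2 - |lastc ν| * (τ * ‖front ν‖)) h ?_
    · rcases eq_or_lt_of_le (norm_nonneg (front ν)) with h0 | h0
      · rw [← h0]; positivity
      · by_contra hcon
        push Not at hcon
        nlinarith
    · filter_upwards [self_mem_nhdsWithin] with t ht
      have ht : 0 < t := ht
      rw [real_inner_self_eq_norm_sq]
      have h3 := hlip (front x + t • front ν) (front x)
      rw [add_sub_cancel_left, norm_smul, Real.norm_eq_abs, abs_of_pos ht] at h3
      have h4 : |lastc ν * (f (front x + t • front ν) - f (front x))|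
          ≤ |lastc ν| * (τ * (t * ‖front ν‖)) := by
        rw [abs_mul]
        exact mul_le_mul_of_nonneg_left h3 (abs_nonneg _)
      have := (abs_le.1 h4).1
      nlinarith
  have h2 : lastc ν < 0 ∨ lastc ν < τ * ‖front ν‖ := by
    obtain ⟨t, ⟨ht1, ht2⟩, ht3⟩ := ((hν.2.2.1.and (eventually_sub_smul_mem (v := ν)
      (isOpen_ball.mem_nhds hxR))).and self_mem_nhdsWithin).exists
    have ht3 : 0 < t := ht3
    have h5 := (hG _ ht2).1 ht1
    simp only [front_sub, front_smul, lastc_sub, lastc_smul] at h5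
    have h6 := hlip (front x - t • front ν) (front x)
    rw [sub_sub_cancel_left, norm_neg, norm_smul, Real.norm_eq_abs, abs_of_pos ht3] at h6
    have h7 := (abs_le.1 h6).1
    right
    rw [← hxf] at h5
    have : t * lastc ν < t * (τ * ‖front ν‖) := by nlinarith
    exact lt_of_mul_lt_mul_left this ht3.le
  have hneg : lastc ν < 0 := by
    rcases h2 with h | h
    · exact h
    · by_contra hcon
      push Not at hcon
      rw [abs_of_nonneg hcon] at h1
      nlinarith [norm_nonneg (front ν)]
  rw [abs_of_neg hneg] at h1
  have hn := norm_sq_eq ν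
  rw [hν.1] at hn
  refine ⟨h1, ?_, ?_⟩
  · by_contra hcon
    push Not at hcon
    have : ‖front ν‖ ^ 2 ≤ (τ * -lastc ν) ^ 2 := by
      gcongr
    have h8 : τ * -lastc ν ≤ 1 / 100 := by nlinarith
    have h9 : (τ * -lastc ν) ^ 2 ≤ (1 / 100) ^ 2 := by
      have : 0 ≤ τ * -lastc ν := by nlinarith
      gcongr
    nlinarith
  · nlinarith [sq_nonneg ‖front ν‖]

/-- Exterior paraboloid condition in graph coordinates. -/
lemma normal_c11 {n : ℕ} {Ω : Set (Euc (n + 1))} {R : ℝ} {f : Euc n → ℝ} (hG : Gr Ω R f)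
    (hR : 0 < R) {M : ℝ≥0} (hf : IsC11FunWith M f) (hf0 : f 0 = 0) {ν : Euc (n + 1)}
    (hν : OutwardNormalAt Ω 0 ν) {z : Euc (n + 1)} (hz : z ∈ closure Ω) (hzR : z ∈ ball 0 R) :
    ⟪z, ν⟫ ≤ M * ‖z‖ ^ 2 := by
  obtain ⟨hdiff, hlip, hlip'⟩ := hf
  have h0R : (0 : Euc (n + 1)) ∈ ball 0 R := by simpa using hR
  have h0 : (0 : Euc (n + 1)) ∈ frontier Ω := by
    rw [hG.mem_frontier_iff hlip.continuous h0R]; simp [hf0]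
  set a := fderiv ℝ f 0 with ha
  have hder : ∀ v : Euc n, (fun t : ℝ => f (t • v) - t * a v) =o[𝓝 0] fun t : ℝ => t := by
    intro v
    have h1 : HasDerivAt (fun t : ℝ => t • v) v 0 := by
      simpa using (hasDerivAt_id (0:ℝ)).smul_const v
    have h2 : HasFDerivAt f a ((0:ℝ) • v) := by
      rw [zero_smul]; exact (hdiff 0).hasFDerivAt
    have h3 := (h2.comp_hasDerivAt (0:ℝ) h1).isLittleO
    simpa [hf0] using h3
  have htan : ∀ v : Euc n, ⟪front ν, v⟫ + lastc ν * a v = 0 := by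
    intro v
    have h1 := normal_tangent hG hlip h0R h0 hν v
    simp only [front_zero, zero_add, hf0, sub_zero] at h1
    have h2 : (fun t : ℝ => t * (⟪front ν, v⟫ + lastc ν * a v)) =o[𝓝 0] fun t : ℝ => t := by
      refine (h1.sub ((hder v).const_mul_left (lastc ν))).congr_left fun t => ?_
      ring
    refine le_antisymm (limit_le_of_littleO h2 (Eventually.of_forall fun t => le_rfl)) ?_
    have := limit_le_of_littleO (a := -(⟪front ν, v⟫ + lastc ν * a v)) h2.neg_left
      (Eventually.of_forall fun t => le_of_eq (by ring))
    linarith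
  have hneg : lastc ν ≤ 0 := by
    by_contra hcon
    push Not at hcon
    have h1 : lastc ν ≤ a (front ν) := by
      have h2 := limit_le_of_littleO (a := lastc ν - a (front ν))
        (hder (-front ν)).neg_left ?_
      · linarith
      · filter_upwards [hν.2.2.1, eventually_sub_smul_mem (v := ν)
          (isOpen_ball.mem_nhds h0R)] with t ht1 ht2
        have h5 := (hG _ ht2).1 ht1
        simp only [front_sub, front_smul, lastc_sub, lastc_smul, front_zero, lastc_zero,
          zero_sub, front_neg, lastc_neg] at h5
        rw [smul_neg, map_neg]
        nlinarith
    have h3 := htan (front ν)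
    rw [real_inner_self_eq_norm_sq] at h3
    nlinarith [sq_nonneg ‖front ν‖]
  have hge : -1 ≤ lastc ν := by
    have := abs_lastc_le ν
    rw [hν.1] at this
    exact (abs_le.1 this).1
  have hz1 := hG.closure_le hlip.continuous hz hzR
  have htay : |f (front z) - a (front z)| ≤ M * ‖front z‖ ^ 2 := by
    have h := (convex_closedBall (0 : Euc n) ‖front z‖).norm_image_sub_le_of_norm_fderiv_le'
      (f := f) (φ := a) (C := M * ‖front z‖) (x := 0) (y := front z)
      (fun y _ => hdiff y) ?_ (by simp) (by simp)
    · simpa [hf0, sq, mul_assoc] using h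
    · intro y hy
      have h1 := hlip'.dist_le_mul y 0
      rw [dist_eq_norm, dist_zero_right] at h1
      refine h1.trans ?_
      have : ‖y‖ ≤ ‖front z‖ := by simpa using hy
      gcongr
  have h3 := htan (front z)
  rw [real_inner_comm, inner_eq]
  have h4 : ⟪front ν, front z⟫ + lastc ν * lastc z = lastc ν * (lastc z - a (front z)) := by
    linarith
  rw [h4]
  have h5 := (abs_le.1 htay).1
  have h6 : ‖front z‖ ^ 2 ≤ ‖z‖ ^ 2 := by
    have := norm_front_le z
    gcongr
  have h7 : (M : ℝ) * ‖front z‖ ^ 2 ≤ M * ‖z‖ ^ 2 := by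
    gcongr
  have h8 : 0 ≤ (M : ℝ) * ‖front z‖ ^ 2 := by positivity
  nlinarith

/-- Exterior paraboloid condition for `C^{1,1}` domains. -/
lemma exterior_condition {n : ℕ} {Ω : Set (Euc (n + 1))} {ρ : ℝ} {M : ℝ≥0}
    (hΩ : IsC11DomainWith Ω ρ M) {x ν z : Euc (n + 1)} (hx : x ∈ frontier Ω)
    (hν : OutwardNormalAt Ω x ν) (hz : z ∈ closure Ω) (hzx : ‖z - x‖ < ρ) :
    ⟪z - x, ν⟫ ≤ M * ‖z - x‖ ^ 2 := by
  obtain ⟨-, -, hρ, hall⟩ := hΩ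
  obtain ⟨T, f, hf, hT0, hf0, hset⟩ := hall x hx
  set Ω' : Set (Euc (n + 1)) := ⇑T ⁻¹' Ω with hΩ'
  have hG : Gr Ω' ρ f := by
    intro y hy
    have hTy : T y ∈ ball x ρ := by
      rw [← hT0, mem_ball, T.dist_map]; exact hy
    constructor
    · intro h
      have : T y ∈ ⇑T '' {y : Euc (n + 1) | y ∈ ball (0 : Euc (n + 1)) ρ ∧ f (front y) < lastc y} := by
        rw [← hset]; exact ⟨h, hTy⟩
      obtain ⟨w, hw, hwe⟩ := this
      rw [← T.injective hwe]
      exact hw.2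
    · intro h
      have : T y ∈ Ω ∩ ball x ρ := by
        rw [hset]; exact ⟨y, ⟨hy, h⟩, rfl⟩
      exact this.1
  set L := T.linearIsometryEquiv with hL
  have hTadd : ∀ v, T v = x + L v := by
    intro v
    have := T.map_vadd 0 v
    simp only [vadd_eq_add, add_zero, hT0] at this
    rw [this]; exact add_comm _ _
  have hcl : ∀ y, T y ∈ closure Ω ↔ y ∈ closure Ω' := by
    intro y
    rw [hΩ']
    have := T.toHomeomorph.preimage_closure Ω
    rw [show (⇑T ⁻¹' Ω) = ⇑T.toHomeomorph ⁻¹' Ω from rfl, ← this]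
    rfl
  have hfr : ∀ y, T y ∈ frontier Ω ↔ y ∈ frontier Ω' := by
    intro y
    rw [hΩ']
    have := T.toHomeomorph.preimage_frontier Ω
    rw [show (⇑T ⁻¹' Ω) = ⇑T.toHomeomorph ⁻¹' Ω from rfl, ← this]
    rfl
  have hν' : OutwardNormalAt Ω' 0 (L.symm ν) := by
    refine ⟨by simpa using hν.1, ?_, ?_, ?_⟩
    · filter_upwards [hν.2.1] with t ht
      rw [← hcl, hTadd]
      simpa using ht
    · filter_upwards [hν.2.2.1] with t ht
      change T _ ∈ Ω
      rw [hTadd]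
      simpa [sub_eq_add_neg] using ht
    · have hlim : Tendsto T (𝓝[frontier Ω'] 0) (𝓝[frontier Ω] x) := by
        rw [tendsto_nhdsWithin_iff]
        constructor
        · have := T.continuous.tendsto 0
          rw [hT0] at this
          exact this.mono_left nhdsWithin_le_nhds
        · filter_upwards [self_mem_nhdsWithin] with y hy
          exact (hfr y).2 hy
      have := hν.2.2.2.comp_tendsto hlim
      refine (this.congr_left fun y => ?_).congr_right fun y => ?_
      · simp only [Function.comp, hTadd, add_sub_cancel_left, sub_zero]
        rw [← L.inner_map_map (L.symm ν) y, L.apply_symm_apply]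
      · simp only [Function.comp, hTadd, add_sub_cancel_left, sub_zero, L.norm_map]
  have hzT : z = T (T.symm z) := (T.apply_symm_apply z).symm
  set ζ := T.symm z with hζ
  have hzζ : z - x = L ζ := by rw [hzT, hTadd]; simp
  have h := normal_c11 hG hρ hf hf0 hν' (z := ζ) ((hcl ζ).1 (by rw [← hzT]; exact hz))
    (by rw [mem_ball_zero_iff, ← L.norm_map, ← hzζ]; exact hzx)
  rw [hzζ, L.norm_map]
  rw [← L.inner_map_map ζ (L.symm ν), L.apply_symm_apply] at h
  exact h

lemma AlignedLipGraphOn.gr {n : ℕ} {Ω : Set (Euc (n + 1))} {R τ : ℝ} {f : Euc n → ℝ}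
    (h : AlignedLipGraphOn Ω 0 R τ f) : Gr Ω R f := by
  intro y hy
  have := Set.ext_iff.1 h.2.2 y
  simp only [mem_inter_iff, hy, and_true, sub_zero, mem_setOf_eq, true_and] at this
  exact this

/-- Moving inward from a boundary point along the normal changes `h` to first order by zero. -/
lemma neumann_inward {n : ℕ} {Ω : Set (Euc n)} {h : Euc n → ℝ} {x ν : Euc n}
    (hx : x ∈ frontier Ω) (hν : OutwardNormalAt Ω x ν)
    (hd : DifferentiableWithinAt ℝ h (closure Ω) x)
    (h0 : fderivWithin ℝ h (closure Ω) x ν = 0) {ε : ℝ} (hε : 0 < ε) :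
    ∀ᶠ t : ℝ in 𝓝[>] (0 : ℝ), x - t • ν ∈ Ω ∧ |h (x - t • ν) - h x| ≤ ε * t := by
  have h1 := hd.hasFDerivWithinAt.isLittleO
  have hlim : Tendsto (fun t : ℝ => x - t • ν) (𝓝[>] 0) (𝓝[closure Ω] x) := by
    rw [tendsto_nhdsWithin_iff]
    constructor
    · have : Tendsto (fun t : ℝ => x - t • ν) (𝓝 0) (𝓝 (x - (0:ℝ) • ν)) :=
        (continuous_const.sub (continuous_id.smul continuous_const)).tendsto 0
      simp only [zero_smul, sub_zero] at this
      exact this.mono_left nhdsWithin_le_nhds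
    · filter_upwards [hν.2.2.1] with t ht
      exact subset_closure ht
  have h2 := (isLittleO_iff.1 (h1.comp_tendsto hlim)) hε
  filter_upwards [h2, hν.2.2.1, self_mem_nhdsWithin] with t ht1 ht2 ht3
  have ht3 : 0 < t := ht3
  refine ⟨ht2, ?_⟩
  simpa [h0, norm_smul, hν.1, abs_of_pos ht3] using ht1

/-- The standing assumptions, with the normalization rewritten as a pointwise bound. -/
structure Setup {n : ℕ} (ρ : ℝ) (M : ℝ≥0) (Ω : Set (Euc (n + 1)))
    (ν : Euc (n + 1) → Euc (n + 1)) (τ : ℝ) (f : Euc n → ℝ) (h : Euc (n + 1) → ℝ) : Prop where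
  c11 : IsC11DomainWith Ω ρ M
  τ0 : 0 < τ
  τ1 : τ < 1 / 100
  gr : Gr Ω 10 f
  lip : LipschitzWith (Real.toNNReal τ) f
  f0 : f 0 = 0
  nu : OutwardNormalFieldOn Ω ν (ball 0 10)
  cont : ContinuousOn h (closure Ω)
  harm : HarmonicOn h Ω
  neu : ∀ x ∈ frontier Ω ∩ ball 0 10, ∀ ε : ℝ, 0 < ε → ∀ᶠ t : ℝ in 𝓝[>] (0 : ℝ),
    x - t • ν x ∈ Ω ∧ |h (x - t • ν x) - h x| ≤ ε * t
  bd : ∀ x ∈ closure Ω, ‖x‖ < 3 → |h x| ≤ 1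

lemma Setup.neg {n : ℕ} {ρ : ℝ} {M : ℝ≥0} {Ω : Set (Euc (n + 1))}
    {ν : Euc (n + 1) → Euc (n + 1)} {τ : ℝ} {f : Euc n → ℝ} {h : Euc (n + 1) → ℝ}
    (H : Setup ρ M Ω ν τ f h) : Setup ρ M Ω ν τ f (fun x => - h x) where
  c11 := H.c11
  τ0 := H.τ0
  τ1 := H.τ1
  gr := H.gr
  lip := H.lip
  f0 := H.f0
  nu := H.nu
  cont := H.cont.neg
  harm := harmonicOn_neg H.c11.1 H.harm
  neu := by
    intro x hx ε hε
    filter_upwards [H.neu x hx ε hε] with t ht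
    refine ⟨ht.1, ?_⟩
    rw [← abs_neg]
    refine le_trans (le_of_eq ?_) ht.2
    congr 1; ring
  bd := by intro x h1 h2; rw [abs_neg]; exact H.bd x h1 h2

lemma boundary_contra {n : ℕ} {Ω : Set (Euc n)} {h : Euc n → ℝ} {x ν : Euc n}
    (hN : ∀ ε : ℝ, 0 < ε → ∀ᶠ t : ℝ in 𝓝[>] (0 : ℝ),
      x - t • ν ∈ Ω ∧ |h (x - t • ν) - h x| ≤ ε * t) {k : ℝ → ℝ} {d : ℝ} (hk : HasDerivAt k d 0)
    (hk2 : ∀ᶠ t in 𝓝[>] (0 : ℝ), x - t • ν ∈ Ω → k 0 - k t ≤ |h (x - t • ν) - h x|) : 0 ≤ d := by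
  by_contra hd'
  push Not at hd'
  have h1 := hN (-d / 4) (by linarith)
  have h2 : (fun t : ℝ => k t - k 0 - t * d) =o[𝓝 0] fun t : ℝ => t := by
    simpa using hk.isLittleO
  have h3 : ∀ᶠ t in 𝓝[>] (0 : ℝ), ‖k t - k 0 - t * d‖ ≤ (-d / 4) * ‖t‖ :=
    nhdsWithin_le_nhds (isLittleO_iff.1 h2 (by linarith))
  obtain ⟨t, ⟨⟨ht1, ht2⟩, ht3⟩, ht4⟩ := ((h1.and hk2).and h3 |>.and self_mem_nhdsWithin).exists
  have ht4 : 0 < t := ht4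
  have ht2 := ht2 ht1.1
  rw [Real.norm_eq_abs, Real.norm_eq_abs, abs_of_pos ht4] at ht3
  have := neg_abs_le (k t - k 0 - t * d)
  have := le_abs_self (k t - k 0 - t * d)
  nlinarith [ht1.2, mul_pos ht4 (neg_pos.2 hd')]

lemma interior_contra {n : ℕ} {Ω : Set (Euc n)} (hΩ : IsOpen Ω) {h : Euc n → ℝ}
    (hh : HarmonicOn h Ω) {x y : Euc n} (hx : x ∈ Ω) (hy : y ∈ Ω)
    {ι : Type*} [Fintype ι] (b : OrthonormalBasis ι ℝ (Euc n)) (σ : ι → ℝ)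
    (hσ : ∀ i, σ i = 1 ∨ σ i = -1) (Φ : Euc n → Euc n → ℝ) (c : ι → ℝ)
    (hmax : ∀ᶠ p in 𝓝 (x, y), h p.1 - h p.2 - Φ p.1 p.2 ≤ h x - h y - Φ x y)
    (hΦ : ∀ i, ∀ᶠ s in 𝓝[>] (0 : ℝ), Φ (x + s • b i) (y + (s * σ i) • b i)
      + Φ (x - s • b i) (y - (s * σ i) • b i) - 2 * Φ x y ≤ c i * s ^ 2)
    (hc : ∑ i, c i < 0) : False := by
  have h1 := hh.second_diff_sum hΩ hx b
  have h2 := hh.second_diff_sum hΩ hy b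
  refine not_isLittleO_of_ge (A := fun s : ℝ =>
    (∑ i, (h (x + s • b i) + h (x - s • b i) - 2 * h x))
    - (∑ i, (h (y + s • b i) + h (y - s • b i) - 2 * h y))) (c := - ∑ i, c i)
    (by linarith) (h1.sub h2) ?_
  have hcont : ∀ (i : ι) (ε : ℝ), Tendsto (fun s : ℝ => (x + (s * ε) • b i, y + (s * ε * σ i) • b i))
      (𝓝[>] 0) (𝓝 (x, y)) := by
    intro i ε
    have : Continuous (fun s : ℝ => (x + (s * ε) • b i, y + (s * ε * σ i) • b i)) := by fun_prop
    have := this.tendsto 0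
    simp only [zero_mul, zero_smul, add_zero] at this
    exact this.mono_left nhdsWithin_le_nhds
  have e1 : ∀ᶠ s in 𝓝[>] (0 : ℝ), ∀ i, h (x + (s * 1) • b i) - h (y + (s * 1 * σ i) • b i)
      - Φ (x + (s * 1) • b i) (y + (s * 1 * σ i) • b i) ≤ h x - h y - Φ x y :=
    eventually_all.2 fun i => (hcont i 1).eventually hmax
  have e2 : ∀ᶠ s in 𝓝[>] (0 : ℝ), ∀ i, h (x + (s * (-1)) • b i) - h (y + (s * (-1) * σ i) • b i)
      - Φ (x + (s * (-1)) • b i) (y + (s * (-1) * σ i) • b i) ≤ h x - h y - Φ x y :=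
    eventually_all.2 fun i => (hcont i (-1)).eventually hmax
  filter_upwards [e1, e2, eventually_all.2 hΦ] with s s1 s2 s3
  rw [← Finset.sum_sub_distrib, neg_mul, neg_neg, Finset.sum_mul]
  refine Finset.sum_le_sum fun i _ => ?_
  have t1 := s1 i
  have t2 := s2 i
  have t3 := s3 i
  simp only [mul_one, mul_neg, neg_mul, neg_smul, ← sub_eq_add_neg] at t1 t2
  rcases hσ i with hs | hs <;> rw [hs] at t1 t2 t3 <;>
    simp only [mul_one, mul_neg, neg_smul, ← sub_eq_add_neg, sub_neg_eq_add] at t1 t2 t3 <;>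
    linarith

lemma exists_onb {n : ℕ} (e : Euc (n + 1)) (he : ‖e‖ = 1) :
    ∃ b : OrthonormalBasis (Fin (n + 1)) ℝ (Euc (n + 1)), b 0 = e := by
  have h : Orthonormal ℝ (({0} : Set (Fin (n + 1))).domRestrict fun _ => e) := by
    constructor
    · intro i; exact he
    · intro i j hij
      exact absurd (Subsingleton.elim i j) hij
  obtain ⟨b, hb⟩ := h.exists_orthonormalBasis_extension_of_card_eq (by simp)
  exact ⟨b, hb 0 rfl⟩

lemma hasDerivAt_norm_line {n : ℕ} {u : Euc n} (hu : u ≠ 0) (v : Euc n) :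
    HasDerivAt (fun t : ℝ => ‖u - t • v‖) (-⟪u, v⟫ / ‖u‖) 0 := by
  have h1 : HasDerivAt (fun t : ℝ => u - t • v) (-v) 0 := by
    have := ((hasDerivAt_id (0 : ℝ)).smul_const v).const_sub u
    simpa using this
  have h2 := h1.norm_sq.sqrt (by simpa using hu)
  simp only [Real.sqrt_sq (norm_nonneg _)] at h2
  convert h2 using 1
  simp only [zero_smul, sub_zero, inner_neg_right]
  rw [mul_div_mul_left _ _ two_ne_zero]

lemma hasDerivAt_normsq_line {n : ℕ} (u v : Euc n) :
    HasDerivAt (fun t : ℝ => ‖u - t • v‖ ^ 2) (-2 * ⟪u, v⟫) 0 := by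
  have h1 : HasDerivAt (fun t : ℝ => u - t • v) (-v) 0 := by
    have := ((hasDerivAt_id (0 : ℝ)).smul_const v).const_sub u
    simpa using this
  convert h1.norm_sq using 1
  simp

lemma second_diff_weight {n : ℕ} (a v : Euc n) (w c s : ℝ) :
    ‖a + s • v‖ ^ 2 * (w - s * c) + ‖a - s • v‖ ^ 2 * (w + s * c) - 2 * (‖a‖ ^ 2 * w)
      = (2 * ‖v‖ ^ 2 * w - 4 * ⟪a, v⟫ * c) * s ^ 2 := by
  rw [norm_add_sq_real, norm_sub_sq_real, inner_smul_right, norm_smul, Real.norm_eq_abs,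
    mul_pow, sq_abs]
  ring

/-- The barrier of the doubling-of-variables argument. -/
def lipBarrier {n : ℕ} (A1 A2 κ B : ℝ) (z x y : Euc (n + 1)) : ℝ :=
  A1 * (‖x - y‖ - κ * ‖x - y‖ ^ 2) * (1 - B * (lastc x + lastc y - 2 * lastc z))
    + A2 * (‖x - z‖ ^ 2 * (1 - B * (lastc x - lastc z)))

lemma lipBarrier_deriv {n : ℕ} {A1 A2 κ B : ℝ} {z x y : Euc (n + 1)} (hxy : x - y ≠ 0)
    (ν : Euc (n + 1)) :
    HasDerivAt (fun t : ℝ => lipBarrier A1 A2 κ B z (x - t • ν) y)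
      (A1 * ((-⟪x - y, ν⟫ / ‖x - y‖) * (1 - 2 * κ * ‖x - y‖)
          * (1 - B * (lastc x + lastc y - 2 * lastc z))
        + (‖x - y‖ - κ * ‖x - y‖ ^ 2) * (B * lastc ν))
        + A2 * (-2 * ⟪x - z, ν⟫ * (1 - B * (lastc x - lastc z))
          + ‖x - z‖ ^ 2 * (B * lastc ν))) 0 := by
  have h1 := hasDerivAt_norm_line hxy ν
  have h2 := hasDerivAt_normsq_line (x - y) ν
  have h3 := hasDerivAt_normsq_line (x - z) ν
  have h4 : ∀ w : ℝ, HasDerivAt (fun t : ℝ => w + t * (B * lastc ν)) (B * lastc ν) 0 := by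
    intro w
    simpa using ((hasDerivAt_id (0 : ℝ)).mul_const (B * lastc ν)).const_add w
  have h5 := (((h1.sub (h2.const_mul κ)).const_mul A1).mul
    (h4 (1 - B * (lastc x + lastc y - 2 * lastc z)))).add
    ((h3.mul (h4 (1 - B * (lastc x - lastc z)))).const_mul A2)
  have hne : ‖x - y‖ ≠ 0 := norm_ne_zero_iff.2 hxy
  refine (h5.congr_of_eventuallyEq (Eventually.of_forall fun t => ?_)).congr_deriv ?_
  · have e1 : x - t • ν - y = x - y - t • ν := by abel
    have e2 : x - t • ν - z = x - z - t • ν := by abel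
    simp only [lipBarrier, e1, e2, lastc_sub, lastc_smul, Pi.add_apply, Pi.mul_apply,
      Pi.sub_apply]
    ring
  · simp only [zero_smul, sub_zero, zero_mul, add_zero, Pi.sub_apply]
    field_simp
    ring

lemma lipBarrier_deriv' {n : ℕ} {A1 A2 κ B : ℝ} {z x y : Euc (n + 1)} (hxy : x - y ≠ 0)
    (ν : Euc (n + 1)) :
    HasDerivAt (fun t : ℝ => lipBarrier A1 A2 κ B z x (y - t • ν))
      (A1 * ((⟪x - y, ν⟫ / ‖x - y‖) * (1 - 2 * κ * ‖x - y‖)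
          * (1 - B * (lastc x + lastc y - 2 * lastc z))
        + (‖x - y‖ - κ * ‖x - y‖ ^ 2) * (B * lastc ν))) 0 := by
  have h1 := hasDerivAt_norm_line hxy (-ν)
  have h2 := hasDerivAt_normsq_line (x - y) (-ν)
  have h4 : ∀ w : ℝ, HasDerivAt (fun t : ℝ => w + t * (B * lastc ν)) (B * lastc ν) 0 := by
    intro w
    simpa using ((hasDerivAt_id (0 : ℝ)).mul_const (B * lastc ν)).const_add w
  have h5 := ((((h1.sub (h2.const_mul κ)).const_mul A1).mul
    (h4 (1 - B * (lastc x + lastc y - 2 * lastc z))))).add_const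
      (A2 * (‖x - z‖ ^ 2 * (1 - B * (lastc x - lastc z))))
  have hne : ‖x - y‖ ≠ 0 := norm_ne_zero_iff.2 hxy
  refine (h5.congr_of_eventuallyEq (Eventually.of_forall fun t => ?_)).congr_deriv ?_
  · have e1 : x - (y - t • ν) = x - y - t • (-ν) := by rw [smul_neg]; abel
    simp only [lipBarrier, e1, lastc_sub, lastc_smul, Pi.add_apply, Pi.mul_apply,
      Pi.sub_apply]
    ring
  · simp only [zero_smul, sub_zero, zero_mul, add_zero, Pi.sub_apply, inner_neg_right]
    field_simp

set_option maxHeartbeats 2000000 in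
lemma Setup.local_lip {n : ℕ} {ρ : ℝ} {M : ℝ≥0} {Ω : Set (Euc (n + 1))}
    {ν : Euc (n + 1) → Euc (n + 1)} {τ : ℝ} {f : Euc n → ℝ} {h : Euc (n + 1) → ℝ}
    (H : Setup ρ M Ω ν τ f h) {δ : ℝ} (hδ0 : 0 < δ) (hδ1 : δ ≤ 1 / 10) (hδρ : δ < ρ)
    (hδB : 12 * (4 * M + 1) * δ ≤ 1) {z y₀ : Euc (n + 1)} (hz : z ∈ closure Ω)
    (hz2 : ‖z‖ ≤ 5 / 2) (hy₀ : y₀ ∈ closure Ω) (hzy : ‖z - y₀‖ ≤ δ) :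
    h z - h y₀ ≤ 15 * (n + 1) / δ * ‖z - y₀‖ := by
  obtain ⟨B, hB⟩ : ∃ B : ℝ, B = 4 * M + 1 := ⟨_, rfl⟩
  obtain ⟨κ, hκ⟩ : ∃ κ : ℝ, κ = 1 / (4 * δ) := ⟨_, rfl⟩
  obtain ⟨A1, hA1⟩ : ∃ A1 : ℝ, A1 = 12 * (n + 1) / δ := ⟨_, rfl⟩
  obtain ⟨A2, hA2⟩ : ∃ A2 : ℝ, A2 = 4 / δ ^ 2 := ⟨_, rfl⟩
  have hM0 : (0 : ℝ) ≤ M := M.2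
  have hB0 : 0 < B := by rw [hB]; positivity
  rw [← hB] at hδB
  have hκδ : κ * δ = 1 / 4 := by rw [hκ]; field_simp
  have hκ0 : 0 < κ := by rw [hκ]; positivity
  have hn1 : (1 : ℝ) ≤ n + 1 := by simp
  have hA1δ : A1 * δ = 12 * (n + 1) := by rw [hA1]; field_simp
  have hA10 : 0 < A1 := by rw [hA1]; positivity
  have hA2δ : A2 * δ ^ 2 = 4 := by rw [hA2]; field_simp
  have hA20 : 0 < A2 := by rw [hA2]; positivity
  have hwt : ∀ u : ℝ, |u| ≤ 3 * δ → 3 / 4 ≤ 1 - B * u ∧ 1 - B * u ≤ 5 / 4 := by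
    intro u hu
    obtain ⟨h1, h2⟩ := abs_le.1 hu
    have k1 := mul_le_mul_of_nonneg_left h1 hB0.le
    have k2 := mul_le_mul_of_nonneg_left h2 hB0.le
    constructor <;> linarith
  have hφ : ∀ r : ℝ, 0 ≤ r → r ≤ δ → 3 / 4 * r ≤ r - κ * r ^ 2 ∧ r - κ * r ^ 2 ≤ r := by
    intro r h0 h1
    constructor
    · have k1 : κ * δ * r = 1 / 4 * r := by rw [hκδ]
      linarith [mul_nonneg h0 (mul_nonneg hκ0.le (sub_nonneg.2 h1))]
    · linarith [mul_nonneg hκ0.le (sq_nonneg r)]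
  set Φ := lipBarrier A1 A2 κ B z with hΦ
  set K : Set (Euc (n + 1) × Euc (n + 1)) :=
    {p | (p.1 ∈ closure Ω ∧ p.2 ∈ closure Ω) ∧ ‖p.1 - z‖ ≤ δ ∧ ‖p.1 - p.2‖ ≤ δ} with hK
  have hKc : IsCompact K := by
    refine ((isCompact_closedBall z δ).prod (isCompact_closedBall z (2 * δ))).of_isClosed_subset
      ?_ ?_
    · have c1 : Continuous fun p : Euc (n + 1) × Euc (n + 1) => ‖p.1 - z‖ := by fun_prop
      have c2 : Continuous fun p : Euc (n + 1) × Euc (n + 1) => ‖p.1 - p.2‖ := by fun_prop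
      refine IsClosed.inter (IsClosed.inter (isClosed_closure.preimage continuous_fst)
        (isClosed_closure.preimage continuous_snd)) (IsClosed.inter ?_ ?_)
      · exact isClosed_le c1 continuous_const
      · exact isClosed_le c2 continuous_const
    · rintro ⟨x, y⟩ ⟨-, h1, h2⟩
      simp only at h1 h2
      refine ⟨by simpa [dist_eq_norm] using h1, ?_⟩
      simp only [mem_closedBall, dist_eq_norm]
      have : y - z = (x - z) - (x - y) := by abel
      rw [this]
      linarith [norm_sub_le (x - z) (x - y)]
  have hΦc : Continuous fun p : Euc (n + 1) × Euc (n + 1) => Φ p.1 p.2 := by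
    simp only [hΦ, lipBarrier]
    have := continuous_lastc (n := n)
    fun_prop
  have hFc : ContinuousOn (fun p : Euc (n + 1) × Euc (n + 1) => h p.1 - h p.2 - Φ p.1 p.2) K := by
    refine ContinuousOn.sub (ContinuousOn.sub ?_ ?_) hΦc.continuousOn
    · exact H.cont.comp continuous_fst.continuousOn fun p hp => hp.1.1
    · exact H.cont.comp continuous_snd.continuousOn fun p hp => hp.1.2
  have hzyK : (z, y₀) ∈ K := ⟨⟨hz, hy₀⟩, by simpa using hδ0.le, hzy⟩
  obtain ⟨⟨x, y⟩, hxyK, hmax⟩ := hKc.exists_isMaxOn ⟨_, hzyK⟩ hFc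
  have hmax' : ∀ x' y', x' ∈ closure Ω → y' ∈ closure Ω → ‖x' - z‖ ≤ δ → ‖x' - y'‖ ≤ δ →
      h x' - h y' - Φ x' y' ≤ h x - h y - Φ x y := fun x' y' a b c d =>
    hmax (show (x', y') ∈ K from ⟨⟨a, b⟩, c, d⟩)
  suffices hle : h x - h y - Φ x y ≤ 0 by
    have h1 := (hmax' z y₀ hz hy₀ (by simpa using hδ0.le) hzy).trans hle
    have h2 : Φ z y₀ ≤ A1 * ‖z - y₀‖ * (5 / 4) := by
      simp only [hΦ, lipBarrier, sub_self, norm_zero]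
      have h3 := hφ _ (norm_nonneg (z - y₀)) hzy
      have h4 := hwt (lastc z + lastc y₀ - 2 * lastc z) (by
        have := abs_lastc_le (z - y₀)
        rw [lastc_sub, abs_sub_comm] at this
        have e : lastc z + lastc y₀ - 2 * lastc z = lastc y₀ - lastc z := by ring
        rw [e]; linarith)
      have h5 : A1 * (‖z - y₀‖ - κ * ‖z - y₀‖ ^ 2) *
          (1 - B * (lastc z + lastc y₀ - 2 * lastc z)) ≤ A1 * ‖z - y₀‖ * (5 / 4) := by
        refine mul_le_mul (mul_le_mul_of_nonneg_left h3.2 hA10.le) h4.2 (by linarith) ?_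
        positivity
      simpa using h5
    have h6 : 15 * (n + 1) / δ = A1 * (5 / 4) := by rw [hA1]; ring
    rw [h6]; linarith
  by_contra hpos
  push Not at hpos
  obtain ⟨⟨hxc, hyc⟩, hxz, hxy⟩ := hxyK
  simp only at hxc hyc hxz hxy
  have hxn : ‖x‖ < 3 := by
    have := norm_le_norm_add_norm_sub' x z
    linarith
  have hyn : ‖y‖ < 3 := by
    have := norm_le_norm_add_norm_sub' y z
    have h2 : y - z = (x - z) - (x - y) := by abel
    have h3 := norm_sub_le (x - z) (x - y)
    rw [← h2] at h3
    linarith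
  have hr0 := norm_nonneg (x - y)
  have ha0 := norm_nonneg (x - z)
  have hr := hφ _ hr0 hxy
  have hw1 := hwt (lastc x + lastc y - 2 * lastc z) (by
    have h1 := abs_lastc_le (x - z)
    have h2 := abs_lastc_le (x - y)
    rw [lastc_sub] at h1 h2
    have e : lastc x + lastc y - 2 * lastc z
      = 2 * (lastc x - lastc z) - (lastc x - lastc y) := by ring
    rw [e]
    refine (abs_sub _ _).trans ?_
    rw [abs_mul, abs_two]; linarith)
  have hw2 := hwt (lastc x - lastc z) (by
    have h1 := abs_lastc_le (x - z)
    rw [lastc_sub] at h1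
    linarith)
  have hT1 : 0 ≤ A1 * (‖x - y‖ - κ * ‖x - y‖ ^ 2) * (1 - B * (lastc x + lastc y - 2 * lastc z)) :=
    mul_nonneg (mul_nonneg hA10.le (by linarith)) (by linarith)
  have hT2 : 0 ≤ A2 * (‖x - z‖ ^ 2 * (1 - B * (lastc x - lastc z))) :=
    mul_nonneg hA20.le (mul_nonneg (sq_nonneg _) (by linarith))
  have hΦxy : Φ x y = A1 * (‖x - y‖ - κ * ‖x - y‖ ^ 2) * (1 - B * (lastc x + lastc y - 2 * lastc z))
    + A2 * (‖x - z‖ ^ 2 * (1 - B * (lastc x - lastc z))) := rfl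
  have hb1 := abs_le.1 (H.bd x hxc hxn)
  have hb2 := abs_le.1 (H.bd y hyc hyn)
  have hΦ2 : Φ x y < 2 := by linarith [hb1.2, hb2.1]
  have hne : x - y ≠ 0 := by
    intro h0
    have : h x = h y := by rw [sub_eq_zero.1 h0]
    linarith
  have hrpos : 0 < ‖x - y‖ := norm_pos_iff.2 hne
  have hxz' : ‖x - z‖ < δ := by
    refine lt_of_le_of_ne hxz fun h0 => ?_
    rw [h0] at hT2 hΦxy
    have : A2 * (δ ^ 2 * (1 - B * (lastc x - lastc z))) = 4 * (1 - B * (lastc x - lastc z)) := by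
      rw [← mul_assoc, hA2δ]
    rw [this] at hΦxy
    linarith
  have hxy' : ‖x - y‖ < δ := by
    refine lt_of_le_of_ne hxy fun h0 => ?_
    rw [h0] at hT1 hΦxy hr
    have h1 : 9 ≤ A1 * (δ - κ * δ ^ 2) := by
      have := mul_le_mul_of_nonneg_left hr.1 hA10.le
      linarith
    have h2 := mul_le_mul_of_nonneg_left hw1.1 (show 0 ≤ A1 * (δ - κ * δ ^ 2) by linarith)
    linarith
  -- neighbourhoods
  have hop1 : {x' : Euc (n + 1) | ‖x' - z‖ ≤ δ ∧ ‖x' - y‖ ≤ δ} ∈ 𝓝 x := by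
    have e1 : ∀ᶠ x' in 𝓝 x, ‖x' - z‖ < δ :=
      (show Continuous fun x' : Euc (n + 1) => ‖x' - z‖ by fun_prop).tendsto x
        |>.eventually (gt_mem_nhds hxz')
    have e2 : ∀ᶠ x' in 𝓝 x, ‖x' - y‖ < δ :=
      (show Continuous fun x' : Euc (n + 1) => ‖x' - y‖ by fun_prop).tendsto x
        |>.eventually (gt_mem_nhds hxy')
    filter_upwards [e1, e2] with x' a b using ⟨a.le, b.le⟩
  have hop2 : {y' : Euc (n + 1) | ‖x - y'‖ ≤ δ} ∈ 𝓝 y := by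
    have e2 : ∀ᶠ y' in 𝓝 y, ‖x - y'‖ < δ :=
      (show Continuous fun y' : Euc (n + 1) => ‖x - y'‖ by fun_prop).tendsto y
        |>.eventually (gt_mem_nhds hxy')
    filter_upwards [e2] with x' b using b.le
  have hc1 : 0 ≤ 1 - 2 * κ * ‖x - y‖ ∧ 1 - 2 * κ * ‖x - y‖ ≤ 1 := by
    constructor
    · linarith [mul_le_mul_of_nonneg_left hxy hκ0.le]
    · linarith [mul_pos hκ0 hrpos]
  -- key inequality
  have hkey : ∀ q νn : ℝ, q ≤ M * ‖x - y‖ ^ 2 → νn ≤ -(99 / 100) →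
      (q / ‖x - y‖) * (1 - 2 * κ * ‖x - y‖) * (1 - B * (lastc x + lastc y - 2 * lastc z))
        + (‖x - y‖ - κ * ‖x - y‖ ^ 2) * (B * νn) < 0 := by
    intro q νn hq hνn
    have h1 : q / ‖x - y‖ ≤ M * ‖x - y‖ := by
      rw [div_le_iff₀ hrpos]; linarith
    have hp : 0 ≤ M * ‖x - y‖ := by positivity
    have h2 : (q / ‖x - y‖) * (1 - 2 * κ * ‖x - y‖) ≤ M * ‖x - y‖ := by
      linarith [mul_le_mul_of_nonneg_left hc1.2 hp, mul_le_mul_of_nonneg_right h1 hc1.1]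
    have h3 : (q / ‖x - y‖) * (1 - 2 * κ * ‖x - y‖)
        * (1 - B * (lastc x + lastc y - 2 * lastc z)) ≤ M * ‖x - y‖ * (5 / 4) := by
      have := mul_le_mul_of_nonneg_right h2
        (show 0 ≤ 1 - B * (lastc x + lastc y - 2 * lastc z) by linarith)
      linarith [mul_le_mul_of_nonneg_left hw1.2 hp]
    have h4 : (‖x - y‖ - κ * ‖x - y‖ ^ 2) * (B * νn) ≤ 3 / 4 * ‖x - y‖ * (B * (-(99 / 100))) := by
      have h5 : B * νn ≤ B * (-(99 / 100)) := mul_le_mul_of_nonneg_left hνn hB0.le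
      have h6 : B * (-(99 / 100)) ≤ 0 := by linarith
      linarith [mul_le_mul_of_nonneg_left h5 (show 0 ≤ ‖x - y‖ - κ * ‖x - y‖ ^ 2 by linarith),
        mul_nonneg (sub_nonneg.2 hr.1) (neg_nonneg.2 h6)]
    have h7 : M * ‖x - y‖ * (5 / 4) + 3 / 4 * ‖x - y‖ * (B * (-(99 / 100)))
      = ‖x - y‖ * (M * (5 / 4) - 3 / 4 * B * (99 / 100)) := by ring
    have h8 : ‖x - y‖ * (M * (5 / 4) - 3 / 4 * B * (99 / 100)) < 0 := by
      refine mul_neg_of_pos_of_neg hrpos ?_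
      rw [hB]; linarith
    linarith
  by_cases hxΩ : x ∈ Ω
  · by_cases hyΩ : y ∈ Ω
    · -- both interior
      obtain ⟨b, hb⟩ := exists_onb (‖x - y‖⁻¹ • (x - y)) (by
        rw [norm_smul, norm_inv, norm_norm, inv_mul_cancel₀ hrpos.ne'])
      have hxye : x - y = ‖x - y‖ • b 0 := by
        rw [hb, smul_smul, mul_inv_cancel₀ hrpos.ne', one_smul]
      have hbn : ∀ i, ‖b i‖ = 1 := fun i => b.norm_eq_one i
      have hquad : ∀ i, ∀ s : ℝ, A2 * (‖x + s • b i - z‖ ^ 2 * (1 - B * (lastc (x + s • b i) - lastc z)))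
          + A2 * (‖x - s • b i - z‖ ^ 2 * (1 - B * (lastc (x - s • b i) - lastc z)))
          - 2 * (A2 * (‖x - z‖ ^ 2 * (1 - B * (lastc x - lastc z)))) ≤ A2 * 3 * s ^ 2 := by
        intro i s
        have e := second_diff_weight (x - z) (b i) (1 - B * (lastc x - lastc z))
          (B * lastc (b i)) s
        have e1 : x + s • b i - z = x - z + s • b i := by abel
        have e2 : x - s • b i - z = x - z - s • b i := by abel
        rw [e1, e2]
        simp only [lastc_add, lastc_sub, lastc_smul]
        rw [hbn] at e
        have hin : |⟪x - z, b i⟫| ≤ δ := by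
          have := abs_real_inner_le_norm (x - z) (b i)
          rw [hbn] at this; linarith
        have hl : |lastc (b i)| ≤ 1 := by
          have := abs_lastc_le (b i); rwa [hbn] at this
        have hm : |⟪x - z, b i⟫ * lastc (b i)| ≤ δ := by
          rw [abs_mul]
          have := mul_le_mul hin hl (abs_nonneg _) hδ0.le
          linarith
        have hm2 := abs_le.1 hm
        have hfin : 2 * 1 ^ 2 * (1 - B * (lastc x - lastc z)) - 4 * ⟪x - z, b i⟫ * (B * lastc (b i))
            ≤ 3 := by
          have := mul_le_mul_of_nonneg_left hm2.1 hB0.le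
          linarith
        have := mul_le_mul_of_nonneg_left (mul_le_mul_of_nonneg_right hfin (sq_nonneg s)) hA20.le
        rw [← e] at this
        linarith
      refine interior_contra H.c11.1 H.harm hxΩ hyΩ b (fun i => if i = 0 then -1 else 1)
        (fun i => by by_cases hi : i = 0 <;> simp [hi]) Φ
        (fun i => A2 * 3 - if i = 0 then 6 * κ * A1 else 0) ?_ ?_ ?_
      · have e1 : ∀ᶠ p in 𝓝 (x, y), p.1 ∈ Ω :=
          continuous_fst.tendsto (x, y) |>.eventually (H.c11.1.mem_nhds hxΩ)
        have e2 : ∀ᶠ p in 𝓝 (x, y), p.2 ∈ Ω :=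
          continuous_snd.tendsto (x, y) |>.eventually (H.c11.1.mem_nhds hyΩ)
        have e3 : ∀ᶠ p in 𝓝 (x, y), ‖p.1 - z‖ < δ :=
          (show Continuous fun p : Euc (n + 1) × Euc (n + 1) => ‖p.1 - z‖ by fun_prop).tendsto (x, y)
            |>.eventually (gt_mem_nhds hxz')
        have e4 : ∀ᶠ p in 𝓝 (x, y), ‖p.1 - p.2‖ < δ :=
          (show Continuous fun p : Euc (n + 1) × Euc (n + 1) => ‖p.1 - p.2‖ by fun_prop).tendsto (x, y)
            |>.eventually (gt_mem_nhds hxy')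
        filter_upwards [e1, e2, e3, e4] with p p1 p2 p3 p4
        exact hmax' _ _ (subset_closure p1) (subset_closure p2) p3.le p4.le
      · intro i
        by_cases hi : i = 0
        · subst hi
          have hsm : ∀ᶠ s in 𝓝[>] (0 : ℝ), s < ‖x - y‖ / 2 :=
            nhdsWithin_le_nhds (gt_mem_nhds (by positivity))
          filter_upwards [hsm, self_mem_nhdsWithin] with s hs1 hs2
          have hs2 : 0 < s := hs2
          have hq := hquad 0 s
          simp only [if_true, mul_neg, mul_one, neg_smul, hΦ, lipBarrier]
          have e1 : x + s • b 0 - (y + -(s • b 0)) = (‖x - y‖ + 2 * s) • b 0 := by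
            rw [add_smul, ← hxye]; module
          have e2 : x - s • b 0 - (y - -(s • b 0)) = (‖x - y‖ - 2 * s) • b 0 := by
            rw [sub_smul, ← hxye]; module
          rw [e1, e2, norm_smul, norm_smul, hbn, Real.norm_eq_abs, Real.norm_eq_abs,
            abs_of_pos (show 0 < ‖x - y‖ + 2 * s by linarith),
            abs_of_pos (show 0 < ‖x - y‖ - 2 * s by linarith)]
          simp only [lastc_add, lastc_sub, lastc_neg, lastc_smul] at hq ⊢
          have e3 : lastc x + s * lastc (b 0) + (lastc y + -(s * lastc (b 0)))
            = lastc x + lastc y := by ring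
          have e4 : lastc x - s * lastc (b 0) + (lastc y - -(s * lastc (b 0)))
            = lastc x + lastc y := by ring
          rw [e3, e4]
          have e5 : 6 * κ * A1 * s ^ 2 ≤ 8 * κ * A1 * s ^ 2
              * (1 - B * (lastc x + lastc y - 2 * lastc z)) := by
            have : 0 ≤ 8 * κ * A1 * s ^ 2 := by positivity
            linarith [mul_le_mul_of_nonneg_left hw1.1 this]
          linarith
        · refine Eventually.of_forall fun s => ?_
          have hq := hquad i s
          simp only [hi, if_false, mul_one, hΦ, lipBarrier, add_sub_add_right_eq_sub,
            sub_sub_sub_cancel_right, sub_zero]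
          simp only [lastc_add, lastc_sub, lastc_smul] at hq ⊢
          linarith
      · rw [Finset.sum_sub_distrib]
        simp only [Finset.sum_const, Finset.card_univ, Fintype.card_fin, nsmul_eq_mul,
          Finset.sum_ite_eq', Finset.mem_univ, if_true, Nat.cast_add, Nat.cast_one]
        have : 6 * κ * A1 = A2 * (18 / 4 * (n + 1)) := by
          rw [hκ, hA1, hA2]; field_simp; ring
        rw [this]
        have : 0 < A2 * ((n : ℝ) + 1) := mul_pos hA20 (by linarith)
        linarith
    · -- y on the boundary
      have hyf : y ∈ frontier Ω := ⟨hyc, fun hi => hyΩ (interior_subset hi)⟩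
      have hy10 : y ∈ ball (0 : Euc (n + 1)) 10 := by rw [mem_ball_zero_iff]; linarith
      have hνy := H.nu y ⟨hyf, hy10⟩
      have hν1 := normal_lip H.gr H.τ0 H.τ1 H.lip hy10 hyf hνy
      have hext := exterior_condition H.c11 hyf hνy hxc (by linarith)
      have hd := lipBarrier_deriv' (A1 := A1) (A2 := A2) (κ := κ) (B := B) (z := z) hne (ν y)
      have hge := boundary_contra (H.neu y ⟨hyf, hy10⟩) hd (by
        filter_upwards [eventually_sub_smul_mem (v := ν y) hop2] with t ht htΩ
        have h1 := hmax' x (y - t • ν y) hxc (subset_closure htΩ) hxz ht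
        have h2 := le_abs_self (h (y - t • ν y) - h y)
        simp only [zero_smul, sub_zero]
        simp only [hΦ] at h1
        linarith)
      have := mul_neg_of_pos_of_neg hA10 (hkey _ _ hext hν1.2.1)
      linarith
  · have hxf : x ∈ frontier Ω := ⟨hxc, fun hi => hxΩ (interior_subset hi)⟩
    have hx10 : x ∈ ball (0 : Euc (n + 1)) 10 := by rw [mem_ball_zero_iff]; linarith
    have hνx := H.nu x ⟨hxf, hx10⟩
    have hν1 := normal_lip H.gr H.τ0 H.τ1 H.lip hx10 hxf hνx
    have hext := exterior_condition H.c11 hxf hνx hyc (by rw [norm_sub_rev]; linarith)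
    have hext2 := exterior_condition H.c11 hxf hνx hz (by rw [norm_sub_rev]; linarith)
    rw [norm_sub_rev, ← neg_sub x y, inner_neg_left] at hext
    rw [norm_sub_rev, ← neg_sub x z, inner_neg_left] at hext2
    have hd := lipBarrier_deriv (A1 := A1) (A2 := A2) (κ := κ) (B := B) (z := z) hne (ν x)
    have hge := boundary_contra (H.neu x ⟨hxf, hx10⟩) hd (by
      filter_upwards [eventually_sub_smul_mem (v := ν x) hop1] with t ht htΩ
      have h1 := hmax' (x - t • ν x) y (subset_closure htΩ) hyc ht.1 ht.2
      have h2 := neg_abs_le (h (x - t • ν x) - h x)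
      simp only [zero_smul, sub_zero]
      simp only [hΦ] at h1
      linarith)
    have h1 := hkey _ _ hext hν1.2.1
    have h2 : -2 * ⟪x - z, ν x⟫ * (1 - B * (lastc x - lastc z))
          + ‖x - z‖ ^ 2 * (B * lastc (ν x)) ≤ 0 := by
      have h3 : -⟪x - z, ν x⟫ * (1 - B * (lastc x - lastc z)) ≤ M * ‖x - z‖ ^ 2 * (5 / 4) := by
        have := mul_le_mul_of_nonneg_right hext2
          (show 0 ≤ 1 - B * (lastc x - lastc z) by linarith)
        have hp : 0 ≤ M * ‖x - z‖ ^ 2 := by positivity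
        linarith [mul_le_mul_of_nonneg_left hw2.2 hp]
      have h5 : B * lastc (ν x) ≤ B * (-(99 / 100)) := mul_le_mul_of_nonneg_left hν1.2.1 hB0.le
      have h6 := mul_le_mul_of_nonneg_left h5 (sq_nonneg ‖x - z‖)
      have h7 : 0 ≤ M * ‖x - z‖ ^ 2 := by positivity
      have h8 : ‖x - z‖ ^ 2 * (B * (-(99 / 100))) ≤ -(5 / 2) * (M * ‖x - z‖ ^ 2) := by
        have h9 : B * (-(99 / 100)) ≤ -(5 / 2) * M := by rw [hB]; linarith
        have := mul_le_mul_of_nonneg_left h9 (sq_nonneg ‖x - z‖)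
        linarith
      linarith
    have h3 := mul_neg_of_pos_of_neg hA10 h1
    have h4 := mul_nonpos_of_nonneg_of_nonpos hA20.le h2
    linarith

/-- The radius used in the Lipschitz estimate. -/
def lipRad (ρ : ℝ) (M : ℝ≥0) : ℝ := min (1 / 10) (min (ρ / 2) (1 / (12 * (4 * M + 1))))

/-- The Lipschitz constant. -/
def lipConst (n : ℕ) (ρ : ℝ) (M : ℝ≥0) : ℝ := 15 * (n + 1) / lipRad ρ M

lemma lipRad_pos {ρ : ℝ} (hρ : 0 < ρ) (M : ℝ≥0) : 0 < lipRad ρ M := by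
  unfold lipRad
  have : (0 : ℝ) ≤ M := M.2
  refine lt_min (by norm_num) (lt_min (by linarith) (by positivity))

lemma lipConst_ge {n : ℕ} {ρ : ℝ} (hρ : 0 < ρ) (M : ℝ≥0) : 8 ≤ lipConst n ρ M := by
  unfold lipConst
  rw [le_div_iff₀ (lipRad_pos hρ M)]
  have : lipRad ρ M ≤ 1 / 10 := min_le_left _ _
  have hn : (0 : ℝ) ≤ n := by positivity
  linarith

lemma Setup.lip_est {n : ℕ} {ρ : ℝ} {M : ℝ≥0} {Ω : Set (Euc (n + 1))}
    {ν : Euc (n + 1) → Euc (n + 1)} {τ : ℝ} {f : Euc n → ℝ} {h : Euc (n + 1) → ℝ}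
    (H : Setup ρ M Ω ν τ f h) {x y : Euc (n + 1)} (hx : x ∈ closure Ω)
    (hx2 : ‖x‖ ≤ 5 / 2) (hy : y ∈ closure Ω) (hy2 : ‖y‖ ≤ 5 / 2) :
    |h x - h y| ≤ lipConst n ρ M * ‖x - y‖ := by
  have hρ := H.c11.2.2.1
  have hδ0 := lipRad_pos hρ M
  have hM : (0 : ℝ) ≤ M := M.2
  have hδ1 : lipRad ρ M ≤ 1 / 10 := min_le_left _ _
  have hδ2 : lipRad ρ M < ρ := by
    have : lipRad ρ M ≤ ρ / 2 := (min_le_right _ _).trans (min_le_left _ _)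
    linarith
  have hδ3 : 12 * (4 * M + 1) * lipRad ρ M ≤ 1 := by
    have : lipRad ρ M ≤ 1 / (12 * (4 * M + 1)) := (min_le_right _ _).trans (min_le_right _ _)
    rw [le_div_iff₀ (by positivity)] at this
    linarith
  by_cases hd : ‖x - y‖ ≤ lipRad ρ M
  · rw [abs_le]
    have h1 := H.local_lip hδ0 hδ1 hδ2 hδ3 hx hx2 hy hd
    have h2 := H.local_lip hδ0 hδ1 hδ2 hδ3 hy hy2 hx (by rwa [norm_sub_rev])
    rw [norm_sub_rev] at h2
    unfold lipConst
    constructor <;> linarith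
  · push Not at hd
    have hb1 := abs_le.1 (H.bd x hx (by linarith))
    have hb2 := abs_le.1 (H.bd y hy (by linarith))
    have h3 : 2 ≤ lipConst n ρ M * ‖x - y‖ := by
      have h4 : lipConst n ρ M * lipRad ρ M = 15 * (n + 1) := by
        unfold lipConst; field_simp
      have h5 := mul_le_mul_of_nonneg_left hd.le
        (show 0 ≤ lipConst n ρ M by linarith [lipConst_ge (n := n) hρ M])
      have hn : (0 : ℝ) ≤ n := by positivity
      linarith
    rw [abs_le]
    constructor <;> linarith [hb1.1, hb1.2, hb2.1, hb2.2]

/-- The weight of the vertical estimate. -/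
def vertWeight (n : ℕ) (L τ : ℝ) (z' : Euc n) (y : Euc (n + 1)) : ℝ :=
  L * (4 * ‖front y - z'‖ ^ 2 + (8 * n + 16) * (lastc y + 3 * τ)
    - (4 * n + 4) * (lastc y + 3 * τ) ^ 2)

/-- The barrier of the vertical estimate. -/
def vertBarrier (n : ℕ) (L τ : ℝ) (z' : Euc n) (y x : Euc (n + 1)) : ℝ :=
  L * ‖front x - front y‖ + (lastc y - lastc x) * (4 * L * τ + vertWeight n L τ z' y)

lemma vertWeight_diff {n : ℕ} (L τ : ℝ) (z' : Euc n) (y v : Euc (n + 1)) (s : ℝ) :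
    vertWeight n L τ z' (y + s • v) + vertWeight n L τ z' (y - s • v)
      - 2 * vertWeight n L τ z' y
      = L * (8 * ‖front v‖ ^ 2 - (8 * n + 8) * lastc v ^ 2) * s ^ 2 := by
  have e1 : front (y + s • v) - z' = (front y - z') + s • front v := by
    rw [front_add, front_smul]; abel
  have e2 : front (y - s • v) - z' = (front y - z') - s • front v := by
    rw [front_sub, front_smul]; abel
  simp only [vertWeight, e1, e2, lastc_add, lastc_sub, lastc_smul]
  rw [norm_add_sq_real, norm_sub_sq_real (front y - z') (s • front v), inner_smul_right, norm_smul, Real.norm_eq_abs,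
    mul_pow, sq_abs]
  ring

lemma Setup.f_abs {n : ℕ} {ρ : ℝ} {M : ℝ≥0} {Ω : Set (Euc (n + 1))}
    {ν : Euc (n + 1) → Euc (n + 1)} {τ : ℝ} {f : Euc n → ℝ} {h : Euc (n + 1) → ℝ}
    (H : Setup ρ M Ω ν τ f h) (a b : Euc n) : |f a - f b| ≤ τ * ‖a - b‖ := by
  have := H.lip.dist_le_mul a b
  rwa [Real.coe_toNNReal _ H.τ0.le, Real.dist_eq, dist_eq_norm] at this

lemma Setup.f_abs0 {n : ℕ} {ρ : ℝ} {M : ℝ≥0} {Ω : Set (Euc (n + 1))}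
    {ν : Euc (n + 1) → Euc (n + 1)} {τ : ℝ} {f : Euc n → ℝ} {h : Euc (n + 1) → ℝ}
    (H : Setup ρ M Ω ν τ f h) (a : Euc n) : |f a| ≤ τ * ‖a‖ := by
  have := H.f_abs a 0
  simpa [H.f0] using this

set_option maxHeartbeats 1000000 in
lemma Setup.vert_one {n : ℕ} {ρ : ℝ} {M : ℝ≥0} {Ω : Set (Euc (n + 1))}
    {ν : Euc (n + 1) → Euc (n + 1)} {τ : ℝ} {f : Euc n → ℝ} {h : Euc (n + 1) → ℝ}
    (H : Setup ρ M Ω ν τ f h) {z' : Euc n} (hz' : ‖z'‖ ≤ 13 / 10) {a b : ℝ} (hab : a ≤ b)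
    (hb1 : b ≤ 1) (ha1 : -1 ≤ a) (ha : snocVec z' a ∈ closure Ω)
    (hb : snocVec z' b ∈ closure Ω) :
    h (snocVec z' b) - h (snocVec z' a)
      ≤ (b - a) * (lipConst n ρ M * (4 * τ + (8 * n + 16) * (b + 3 * τ))) := by
  have hρ := H.c11.2.2.1
  obtain ⟨L, hL⟩ : ∃ L, L = lipConst n ρ M := ⟨_, rfl⟩
  have hL8 : 8 ≤ L := by rw [hL]; exact lipConst_ge hρ M
  have hτ0 := H.τ0
  have hτ1 := H.τ1
  have hn0 : (0 : ℝ) ≤ n := by positivity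
  have hlipE : ∀ x y : Euc (n + 1), x ∈ closure Ω → ‖x‖ ≤ 5 / 2 → y ∈ closure Ω → ‖y‖ ≤ 5 / 2 →
      h y - h x ≤ L * ‖x - y‖ := by
    intro x y h1 h2 h3 h4
    have := H.lip_est h3 h4 h1 h2
    rw [norm_sub_rev, ← hL] at this
    exact (le_abs_self _).trans this
  rw [← hL]
  set N := vertBarrier n L τ z' with hN
  set β := vertWeight n L τ z' with hβ
  set K : Set (Euc (n + 1) × Euc (n + 1)) :=
    {p | (p.1 ∈ closure Ω ∧ p.2 ∈ closure Ω) ∧ (‖front p.1 - z'‖ ≤ 1 / 2 ∧ lastc p.1 ≤ 1) ∧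
      (‖front p.2 - front p.1‖ ≤ 1 / 4 ∧ lastc p.2 ≤ lastc p.1) ∧ -1 ≤ lastc p.2} with hK
  have cf : Continuous (front (n := n)) := continuous_front
  have cl : Continuous (lastc (n := n)) := continuous_lastc
  have hnorm : ∀ y x : Euc (n + 1), ‖front y - z'‖ ≤ 1 / 2 → lastc y ≤ 1 →
      ‖front x - front y‖ ≤ 1 / 4 → lastc x ≤ lastc y → -1 ≤ lastc x →
      ‖y‖ ≤ 5 / 2 ∧ ‖x‖ ≤ 5 / 2 ∧ ‖front y‖ ≤ 18 / 10 ∧ ‖front x‖ ≤ 205 / 100 := by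
    intro y x h1 h2 h3 h4 h5
    have g1 := norm_le_norm_add_norm_sub' (front y) z'
    have g2 := norm_le_norm_add_norm_sub' (front x) (front y)
    have g3 : ‖front y‖ ≤ 18 / 10 := by linarith
    have g4 : ‖front x‖ ≤ 205 / 100 := by linarith
    have k : ∀ w : Euc (n + 1), ‖front w‖ ≤ 205 / 100 → -1 ≤ lastc w → lastc w ≤ 1 →
        ‖w‖ ≤ 5 / 2 := by
      intro w a1 a2 a3
      refine abs_le_of_sq_le_sq' ?_ (by norm_num) |>.2
      rw [norm_sq_eq]
      nlinarith [norm_nonneg (front w)]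
    exact ⟨k y (by linarith) (by linarith) h2, k x g4 h5 (by linarith), g3, g4⟩
  have hKc : IsCompact K := by
    refine ((isCompact_closedBall (0 : Euc (n + 1)) (5 / 2)).prod
      (isCompact_closedBall (0 : Euc (n + 1)) (5 / 2))).of_isClosed_subset ?_ ?_
    · have c1 : Continuous fun p : Euc (n + 1) × Euc (n + 1) => ‖front p.1 - z'‖ := by fun_prop
      have c2 : Continuous fun p : Euc (n + 1) × Euc (n + 1) => ‖front p.2 - front p.1‖ := by
        fun_prop
      have c3 : Continuous fun p : Euc (n + 1) × Euc (n + 1) => lastc p.1 := by fun_prop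
      have c4 : Continuous fun p : Euc (n + 1) × Euc (n + 1) => lastc p.2 := by fun_prop
      refine IsClosed.inter (IsClosed.inter (isClosed_closure.preimage continuous_fst)
        (isClosed_closure.preimage continuous_snd)) (IsClosed.inter (IsClosed.inter ?_ ?_)
          (IsClosed.inter (IsClosed.inter ?_ ?_) ?_))
      · exact isClosed_le c1 continuous_const
      · exact isClosed_le c3 continuous_const
      · exact isClosed_le c2 continuous_const
      · exact isClosed_le c4 c3
      · exact isClosed_le continuous_const c4
    · rintro ⟨y, x⟩ ⟨-, ⟨h1, h2⟩, ⟨h3, h4⟩, h5⟩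
      have := hnorm y x h1 h2 h3 h4 h5
      exact ⟨by simpa using this.1, by simpa using this.2.1⟩
  have hNc : Continuous fun p : Euc (n + 1) × Euc (n + 1) => N p.1 p.2 := by
    simp only [hN, vertBarrier, vertWeight]
    fun_prop
  have hFc : ContinuousOn (fun p : Euc (n + 1) × Euc (n + 1) => h p.1 - h p.2 - N p.1 p.2) K := by
    refine ContinuousOn.sub (ContinuousOn.sub ?_ ?_) hNc.continuousOn
    · exact H.cont.comp continuous_fst.continuousOn fun p hp => hp.1.1
    · exact H.cont.comp continuous_snd.continuousOn fun p hp => hp.1.2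
  have hK0 : (snocVec z' b, snocVec z' a) ∈ K := by
    refine ⟨⟨hb, ha⟩, ⟨?_, ?_⟩, ⟨?_, ?_⟩, ?_⟩ <;> simp <;> assumption
  obtain ⟨⟨y, x⟩, hyxK, hmax⟩ := hKc.exists_isMaxOn ⟨_, hK0⟩ hFc
  have hmax' : ∀ y' x', (y', x') ∈ K → h y' - h x' - N y' x' ≤ h y - h x - N y x :=
    fun y' x' hp => hmax hp
  suffices hle : h y - h x - N y x ≤ 0 by
    have h1 := (hmax' _ _ hK0).trans hle
    have h2 : N (snocVec z' b) (snocVec z' a)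
        ≤ (b - a) * (L * (4 * τ + (8 * n + 16) * (b + 3 * τ))) := by
      simp only [hN, vertBarrier, vertWeight, front_snocVec, lastc_snocVec, sub_self, norm_zero]
      have h3 : 0 ≤ (b - a) * (L * ((4 * n + 4) * (b + 3 * τ) ^ 2)) :=
        mul_nonneg (by linarith) (by positivity)
      linarith
    linarith
  by_contra hpos
  push Not at hpos
  obtain ⟨⟨hyc, hxc⟩, ⟨hy1, hy2⟩, ⟨hp, hq⟩, hx1⟩ := hyxK
  simp only at hyc hxc hy1 hy2 hp hq hx1
  obtain ⟨hyn, hxn, hyn', hxn'⟩ := hnorm y x hy1 hy2 hp hq hx1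
  have hy10 : y ∈ ball (0 : Euc (n + 1)) 10 := by rw [mem_ball_zero_iff]; linarith
  have hx10 : x ∈ ball (0 : Euc (n + 1)) 10 := by rw [mem_ball_zero_iff]; linarith
  have hfy := H.gr.closure_le H.lip.continuous hyc hy10
  have hfx := H.gr.closure_le H.lip.continuous hxc hx10
  have hfy0 := (abs_le.1 (H.f_abs0 (front y))).1
  have hfx0 := (abs_le.1 (H.f_abs0 (front x))).1
  have hylow : -(18 / 10 * τ) ≤ lastc y := by
    have := mul_le_mul_of_nonneg_left hyn' hτ0.le
    linarith
  have hxlow : -1 < lastc x := by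
    have := mul_le_mul_of_nonneg_left hxn' hτ0.le
    linarith
  obtain ⟨s, hs⟩ : ∃ s, s = lastc y + 3 * τ := ⟨_, rfl⟩
  have hs0 : 0 < s := by rw [hs]; linarith
  have hs1 : s ≤ 2 := by rw [hs]; linarith
  have hpoly : 8 * s ≤ (8 * n + 16) * s - (4 * n + 4) * s ^ 2 := by
    have : 0 ≤ (4 * n + 4) * (s * (2 - s)) := by
      have : 0 ≤ 2 - s := by linarith
      positivity
    nlinarith
  have hβy : β y = L * (4 * ‖front y - z'‖ ^ 2 + (8 * n + 16) * s - (4 * n + 4) * s ^ 2) := by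
    rw [hs, hβ, vertWeight]
  have hβ0 : 0 ≤ β y := by
    rw [hβy]
    refine mul_nonneg (by linarith) ?_
    nlinarith [sq_nonneg ‖front y - z'‖]
  have hNyx : N y x = L * ‖front x - front y‖ + (lastc y - lastc x) * (4 * L * τ + β y) := rfl
  have hp0 := norm_nonneg (front x - front y)
  have hdiff := hlipE x y hxc hxn hyc hyn
  have hxy_le : ‖x - y‖ ≤ ‖front x - front y‖ + (lastc y - lastc x) := by
    have := norm_le_add (x - y)
    rw [front_sub, lastc_sub, abs_sub_comm, abs_of_nonneg (by linarith)] at this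
    exact this
  have hsteep : 8 * τ * ‖front x - front y‖ < lastc y - lastc x := by
    by_contra hcon
    push Not at hcon
    have h1 : ‖x - y‖ ≤ ‖front x - front y‖ + 4 * τ * (lastc y - lastc x) := by
      have hq0 : 0 ≤ lastc y - lastc x := by linarith
      refine abs_le_of_sq_le_sq' ?_ (by positivity) |>.2
      rw [norm_sq_eq, front_sub, lastc_sub]
      have := mul_le_mul_of_nonneg_left hcon hq0
      nlinarith [sq_nonneg (4 * τ * (lastc y - lastc x))]
    have h2 := mul_le_mul_of_nonneg_left h1 (show 0 ≤ L by linarith)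
    have h3 : 0 ≤ (lastc y - lastc x) * β y := mul_nonneg (by linarith) hβ0
    linarith
  have hqpos : 0 < lastc y - lastc x := lt_of_le_of_lt (by positivity) hsteep
  have hbig : ¬ L ≤ β y := by
    intro hcon
    have h2 := mul_le_mul_of_nonneg_left hxy_le (show 0 ≤ L by linarith)
    have h3 := mul_le_mul_of_nonneg_left hcon hqpos.le
    have h4 : 0 ≤ (lastc y - lastc x) * (4 * L * τ) := by
      have : 0 ≤ L := by linarith
      positivity
    linarith
  have hp' : ‖front x - front y‖ < 1 / 4 := by
    refine lt_of_le_of_ne hp fun h0 => ?_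
    have hb1 := abs_le.1 (H.bd x hxc (by linarith))
    have hb2 := abs_le.1 (H.bd y hyc (by linarith))
    have h4 : 0 ≤ (lastc y - lastc x) * (4 * L * τ + β y) := by
      refine mul_nonneg hqpos.le (add_nonneg ?_ hβ0)
      have : 0 ≤ L := by linarith
      positivity
    rw [h0] at hNyx
    linarith [hb1.1, hb2.2]
  have hy1' : ‖front y - z'‖ < 1 / 2 := by
    refine lt_of_le_of_ne hy1 fun h0 => hbig ?_
    rw [hβy, h0]
    have : (1 : ℝ) ≤ 4 * (1 / 2) ^ 2 + (8 * n + 16) * s - (4 * n + 4) * s ^ 2 := by linarith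
    have := mul_le_mul_of_nonneg_left this (show 0 ≤ L by linarith)
    linarith
  have hy2' : lastc y < 1 := by
    refine lt_of_le_of_ne hy2 fun h0 => hbig ?_
    rw [hβy]
    have hs2 : 1 ≤ s := by rw [hs, h0]; linarith
    have : (1 : ℝ) ≤ 4 * ‖front y - z'‖ ^ 2 + (8 * n + 16) * s - (4 * n + 4) * s ^ 2 := by
      linarith [sq_nonneg ‖front y - z'‖]
    have := mul_le_mul_of_nonneg_left this (show 0 ≤ L by linarith)
    linarith
  have hq' : lastc x < lastc y := by linarith
  have hyΩ : y ∈ Ω := by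
    rw [H.gr y hy10]
    refine lt_of_le_of_ne hfy fun h0 => ?_
    have h1 := (abs_le.1 (H.f_abs (front x) (front y))).1
    have h2 : 0 ≤ τ * ‖front x - front y‖ := by positivity
    linarith
  have hall : ∀ᶠ p in 𝓝 (y, x), (‖front p.1 - z'‖ ≤ 1 / 2 ∧ lastc p.1 ≤ 1) ∧
      (‖front p.2 - front p.1‖ ≤ 1 / 4 ∧ lastc p.2 ≤ lastc p.1) ∧ -1 ≤ lastc p.2 := by
    have c1 : Continuous fun p : Euc (n + 1) × Euc (n + 1) => ‖front p.1 - z'‖ := by fun_prop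
    have c2 : Continuous fun p : Euc (n + 1) × Euc (n + 1) => ‖front p.2 - front p.1‖ := by
      fun_prop
    have c3 : Continuous fun p : Euc (n + 1) × Euc (n + 1) => lastc p.1 := by fun_prop
    have c4 : Continuous fun p : Euc (n + 1) × Euc (n + 1) => lastc p.2 := by fun_prop
    have e1 := (c1.tendsto (y, x)).eventually (gt_mem_nhds hy1')
    have e2 := (c2.tendsto (y, x)).eventually (gt_mem_nhds hp')
    have e3 := (c3.tendsto (y, x)).eventually (gt_mem_nhds hy2')
    have e4 := (c4.tendsto (y, x)).eventually (lt_mem_nhds hxlow)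
    have e5 := ((c3.sub c4).tendsto (y, x)).eventually (lt_mem_nhds hqpos)
    filter_upwards [e1, e2, e3, e4, e5] with p p1 p2 p3 p4 p5
    have p5 : 0 < lastc p.1 - lastc p.2 := p5
    exact ⟨⟨p1.le, p3.le⟩, ⟨p2.le, by linarith⟩, p4.le⟩
  by_cases hxΩ : x ∈ Ω
  · refine interior_contra H.c11.1 H.harm hyΩ hxΩ (EuclideanSpace.basisFun (Fin (n + 1)) ℝ)
      (fun i => 1) (fun i => Or.inl rfl) N
      (fun i => (lastc y - lastc x) *
        (L * (8 * ‖front (EuclideanSpace.basisFun (Fin (n + 1)) ℝ i)‖ ^ 2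
        - (8 * n + 8) * lastc (EuclideanSpace.basisFun (Fin (n + 1)) ℝ i) ^ 2))) ?_ ?_ ?_
    · have e1 : ∀ᶠ p in 𝓝 (y, x), p.1 ∈ Ω :=
        continuous_fst.tendsto (y, x) |>.eventually (H.c11.1.mem_nhds hyΩ)
      have e2 : ∀ᶠ p in 𝓝 (y, x), p.2 ∈ Ω :=
        continuous_snd.tendsto (y, x) |>.eventually (H.c11.1.mem_nhds hxΩ)
      filter_upwards [e1, e2, hall] with p p1 p2 p3
      exact hmax' _ _ ⟨⟨subset_closure p1, subset_closure p2⟩, p3⟩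
    · intro i
      refine Eventually.of_forall fun s => ?_
      have e := vertWeight_diff L τ z' y (EuclideanSpace.basisFun (Fin (n + 1)) ℝ i) s
      rw [← hβ] at e
      simp only [hN, vertBarrier, mul_one, front_add, front_sub, add_sub_add_right_eq_sub,
        sub_sub_sub_cancel_right, lastc_add, lastc_sub, ← hβ]
      have := congrArg (fun u => (lastc y - lastc x) * u) e
      linarith
    · rw [Fin.sum_univ_castSucc]
      have f1 : ∀ j : Fin n, ‖front (EuclideanSpace.single (Fin.castSucc j) (1 : ℝ))‖ = 1
          ∧ lastc (EuclideanSpace.single (Fin.castSucc j) (1 : ℝ)) = 0 := by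
        intro j
        have l0 : lastc (EuclideanSpace.single (Fin.castSucc j) (1 : ℝ)) = 0 := by
          simp [lastc, (Fin.castSucc_ne_last j).symm]
        have := norm_sq_eq (EuclideanSpace.single (Fin.castSucc j) (1 : ℝ))
        rw [l0] at this
        simp only [EuclideanSpace.norm_single, norm_one] at this
        refine ⟨?_, l0⟩
        nlinarith [norm_nonneg (front (EuclideanSpace.single (Fin.castSucc j) (1 : ℝ)))]
      have f2 : front (EuclideanSpace.single (Fin.last n) (1 : ℝ)) = 0 := front_en
      have f3 : lastc (EuclideanSpace.single (Fin.last n) (1 : ℝ)) = 1 := lastc_en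
      simp only [EuclideanSpace.basisFun_apply, f1, f2, f3, norm_zero, Finset.sum_const,
        Finset.card_univ, Fintype.card_fin, nsmul_eq_mul]
      have : 0 < (lastc y - lastc x) * L := mul_pos hqpos (by linarith)
      linarith
  · have hxf : x ∈ frontier Ω := ⟨hxc, fun hi => hxΩ (interior_subset hi)⟩
    have hν1 := normal_lip H.gr H.τ0 H.τ1 H.lip hx10 hxf (H.nu x ⟨hxf, hx10⟩)
    have hd : HasDerivAt (fun t : ℝ => L * (‖front x - front y‖ + t * ‖front (ν x)‖)
        + (lastc y - lastc x + t * lastc (ν x)) * (4 * L * τ + β y))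
        (L * ‖front (ν x)‖ + lastc (ν x) * (4 * L * τ + β y)) 0 := by
      have l : ∀ c d : ℝ, HasDerivAt (fun t : ℝ => c + t * d) d 0 := fun c d => by
        simpa using ((hasDerivAt_id (0 : ℝ)).mul_const d).const_add c
      exact ((l _ _).const_mul L).add ((l _ _).mul_const _)
    have hge := boundary_contra (H.neu x ⟨hxf, hx10⟩) hd (by
      have hev : ∀ᶠ t in 𝓝[>] (0 : ℝ), x - t • ν x ∈ {x' | (‖front y - z'‖ ≤ 1 / 2 ∧ lastc y ≤ 1) ∧
        (‖front x' - front y‖ ≤ 1 / 4 ∧ lastc x' ≤ lastc y) ∧ -1 ≤ lastc x'} := by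
        refine eventually_sub_smul_mem ?_
        have hc : Continuous fun x' : Euc (n + 1) => (y, x') := by fun_prop
        exact (hc.tendsto x).eventually hall
      filter_upwards [hev, self_mem_nhdsWithin] with t ht ht0 htΩ
      have ht0 : 0 < t := ht0
      have h1 := hmax' y (x - t • ν x) ⟨⟨hyc, subset_closure htΩ⟩, ht⟩
      have h2 := le_abs_self (h (x - t • ν x) - h x)
      simp only [hN, vertBarrier, ← hβ] at h1
      rw [lastc_sub, lastc_smul] at h1
      have h3 : ‖front (x - t • ν x) - front y‖ ≤ ‖front x - front y‖ + t * ‖front (ν x)‖ := by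
        have e : front (x - t • ν x) - front y = (front x - front y) - t • front (ν x) := by
          rw [front_sub, front_smul]; abel
        rw [e]
        refine (norm_sub_le _ _).trans ?_
        rw [norm_smul, Real.norm_eq_abs, abs_of_pos ht0]
      have h4 := mul_le_mul_of_nonneg_left h3 (show 0 ≤ L by linarith)
      simp only [zero_mul, add_zero]
      linarith)
    have h1 := mul_le_mul_of_nonneg_left hν1.1 (show 0 ≤ L by linarith)
    have h2 : lastc (ν x) * β y ≤ 0 := mul_nonpos_of_nonpos_of_nonneg (by linarith) hβ0
    have h3 : L * τ * lastc (ν x) < 0 :=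
      mul_neg_of_pos_of_neg (mul_pos (by linarith) hτ0) (by linarith)
    linarith

lemma Setup.vert_est {n : ℕ} {ρ : ℝ} {M : ℝ≥0} {Ω : Set (Euc (n + 1))}
    {ν : Euc (n + 1) → Euc (n + 1)} {τ : ℝ} {f : Euc n → ℝ} {h : Euc (n + 1) → ℝ}
    (H : Setup ρ M Ω ν τ f h) {z' : Euc n} (hz' : ‖z'‖ ≤ 13 / 10) {a b : ℝ} (hab : a ≤ b)
    (hb1 : b ≤ 1) (ha1 : -1 ≤ a) (ha : snocVec z' a ∈ closure Ω)
    (hb : snocVec z' b ∈ closure Ω) :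
    |h (snocVec z' b) - h (snocVec z' a)|
      ≤ (b - a) * (lipConst n ρ M * (4 * τ + (8 * n + 16) * (b + 3 * τ))) := by
  have h1 := H.vert_one hz' hab hb1 ha1 ha hb
  have h2 := H.neg.vert_one hz' hab hb1 ha1 ha hb
  rw [abs_le]
  constructor <;> linarith

/-! ### An auxiliary harmonic function in a slab, by Fourier transform -/

/-- The kernel `cosh((t-1)s)/cosh s`. -/
def bk (s t : ℝ) : ℝ := Real.cosh ((t - 1) * s) / Real.cosh s

/-- Its primitive in `t` vanishing at `t = 1`. -/
def bm (s t : ℝ) : ℝ := ∫ r in (1 : ℝ)..t, bk s r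

lemma continuous_bk : Continuous fun p : ℝ × ℝ => bk p.1 p.2 := by
  unfold bk
  exact Continuous.div (by fun_prop) (by fun_prop) (fun p => (Real.cosh_pos _).ne')

lemma continuous_bk_right (s : ℝ) : Continuous (bk s) :=
  continuous_bk.comp (by fun_prop : Continuous fun t : ℝ => (s, t))

lemma continuous_bm : Continuous fun p : ℝ × ℝ => bm p.1 p.2 := by
  have h := intervalIntegral.continuous_parametric_intervalIntegral_of_continuous
    (μ := volume) (f := fun (p : ℝ × ℝ) (r : ℝ) => bk p.1 r) (a₀ := 1) (s := fun p => p.2)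
    (continuous_bk.comp (by fun_prop : Continuous fun q : (ℝ × ℝ) × ℝ => (q.1.1, q.2)))
    continuous_snd
  exact h

lemma hasDerivAt_bm (s t : ℝ) : HasDerivAt (bm s) (bk s t) t :=
  intervalIntegral.integral_hasDerivAt_right
    ((continuous_bk_right s).intervalIntegrable _ _)
    ((continuous_bk_right s).stronglyMeasurableAtFilter _ _) (continuous_bk_right s).continuousAt

lemma mul_bm (s t : ℝ) : s * bm s t = Real.sinh ((t - 1) * s) / Real.cosh s := by
  have h := intervalIntegral.integral_eq_sub_of_hasDerivAt (a := 1) (b := t)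
    (f := fun r => Real.sinh ((r - 1) * s) / Real.cosh s) (f' := fun r => s * bk s r) (fun r _ => ?_)
    ((continuous_const.mul (continuous_bk_right s)).intervalIntegrable _ _)
  · rw [intervalIntegral.integral_const_mul] at h
    simpa [bm] using h
  · have h1 : HasDerivAt (fun r : ℝ => (r - 1) * s) s r := by
      simpa using ((hasDerivAt_id r).sub_const 1).mul_const s
    refine (h1.sinh.div_const (Real.cosh s)).congr_deriv ?_
    unfold bk
    ring

lemma hasDerivAt_bk (s t : ℝ) : HasDerivAt (bk s) (s ^ 2 * bm s t) t := by
  have h1 : HasDerivAt (fun r : ℝ => (r - 1) * s) s t := by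
    simpa using ((hasDerivAt_id t).sub_const 1).mul_const s
  refine (h1.cosh.div_const (Real.cosh s)).congr_deriv ?_
  have := mul_bm s t
  rw [pow_two, mul_assoc, this]
  ring

lemma bk_abs {s t : ℝ} (h0 : 0 ≤ t) (h2 : t ≤ 2) : |bk s t| ≤ 1 := by
  unfold bk
  rw [abs_of_nonneg (by positivity), div_le_one (Real.cosh_pos s), Real.cosh_le_cosh, abs_mul]
  have : |t - 1| ≤ 1 := abs_le.2 ⟨by linarith, by linarith⟩
  nlinarith [abs_nonneg s]

lemma bm_abs {s t : ℝ} (h0 : 0 ≤ t) (h2 : t ≤ 2) : |bm s t| ≤ 1 := by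
  have := intervalIntegral.norm_integral_le_of_norm_le_const (a := 1) (b := t) (C := 1)
    (f := bk s) (fun x hx => ?_)
  · rw [Real.norm_eq_abs] at this
    have h3 : |t - 1| ≤ 1 := abs_le.2 ⟨by linarith, by linarith⟩
    unfold bm
    linarith
  · rw [Real.norm_eq_abs]
    rcases le_total 1 t with h | h
    · rw [uIoc_of_le h] at hx
      exact bk_abs (by linarith [hx.1]) (by linarith [hx.2])
    · rw [uIoc_of_ge h] at hx
      exact bk_abs (by linarith [hx.1]) (by linarith [hx.2])

lemma bk_zero (s : ℝ) : bk s 0 = 1 := by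
  unfold bk
  rw [zero_sub, neg_one_mul, Real.cosh_neg, div_self (Real.cosh_pos s).ne']

lemma bm_one (s : ℝ) : bm s 1 = 0 := by simp [bm]

/-- The open slab. -/
def slab (n : ℕ) : Set (Euc (n + 1)) := {x | 0 < lastc x ∧ lastc x < 2}

/-- The closed slab. -/
def cslab (n : ℕ) : Set (Euc (n + 1)) := {x | 0 ≤ lastc x ∧ lastc x ≤ 2}

lemma isOpen_slab (n : ℕ) : IsOpen (slab n) :=
  (isOpen_lt continuous_const continuous_lastc).inter (isOpen_lt continuous_lastc continuous_const)

lemma slab_subset (n : ℕ) : slab n ⊆ cslab n := fun _ hx => ⟨hx.1.le, hx.2.le⟩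

lemma convex_slab (n : ℕ) : Convex ℝ (slab n) := by
  intro x hx y hy a b ha hb hab
  have h1 := hx.1
  have h2 := hx.2
  have h3 := hy.1
  have h4 := hy.2
  constructor
  · simp only [lastc_add, lastc_smul]
    rcases eq_or_lt_of_le ha with h | h
    · have : b = 1 := by linarith
      subst h; subst this; simpa using h3
    · have := mul_pos h h1
      have := mul_nonneg hb h3.le
      linarith
  · simp only [lastc_add, lastc_smul]
    rcases eq_or_lt_of_le ha with h | h
    · have : b = 1 := by linarith
      subst h; subst this; simpa using h4
    · have := mul_lt_mul_of_pos_left h2 h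
      have := mul_le_mul_of_nonneg_left h4.le hb
      linarith

lemma closure_slab (n : ℕ) : closure (slab n) = cslab n := by
  apply Subset.antisymm
  · refine closure_minimal (slab_subset n) ?_
    exact (isClosed_le continuous_const continuous_lastc).inter
      (isClosed_le continuous_lastc continuous_const)
  · intro x hx
    have ht : Tendsto (fun t : ℝ => x + (t * (1 - lastc x)) • en n) (𝓝[>] 0) (𝓝 x) := by
      have hc : Continuous fun t : ℝ => x + (t * (1 - lastc x)) • en n := by fun_prop
      have := hc.tendsto 0
      simp only [zero_mul, zero_smul, add_zero] at this
      exact this.mono_left nhdsWithin_le_nhds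
    refine mem_closure_of_tendsto ht ?_
    filter_upwards [Ioo_mem_nhdsGT (zero_lt_one)] with t ht
    have h1 := hx.1
    have h2 := hx.2
    have h3 := ht.1
    have h4 := ht.2
    constructor
    · simp only [lastc_add, lastc_smul, lastc_en, smul_eq_mul, mul_one]
      nlinarith
    · simp only [lastc_add, lastc_smul, lastc_en, smul_eq_mul, mul_one]
      nlinarith

/-- Continuity of a parametric integral. -/
lemma param_cont {X Y E : Type*} [TopologicalSpace X] [FirstCountableTopology X]
    [TopologicalSpace Y] [MeasurableSpace Y] [OpensMeasurableSpace Y] [SecondCountableTopology Y]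
    [NormedAddCommGroup E] [NormedSpace ℝ E] {μ : Measure Y}
    {s : Set X} {G : X → Y → E} {B : Y → ℝ} (hB : Integrable B μ)
    (hG : Continuous fun p : X × Y => G p.1 p.2) (hb : ∀ x ∈ s, ∀ y, ‖G x y‖ ≤ B y) :
    ContinuousOn (fun x => ∫ y, G x y ∂μ) s := by
  refine continuousOn_of_dominated (bound := B) (fun x hx => ?_) (fun x hx => ?_) hB ?_
  · exact (hG.comp (by fun_prop : Continuous fun y : Y => (x, y))).aestronglyMeasurable
  · exact Eventually.of_forall (hb x hx)
  · exact Eventually.of_forall fun y =>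
      (hG.comp (by fun_prop : Continuous fun x : X => (x, y))).continuousOn

/-- Differentiability of a parametric integral. -/
lemma param_deriv {X Y E : Type*} [NormedAddCommGroup X] [NormedSpace ℝ X]
    [TopologicalSpace Y] [MeasurableSpace Y] [OpensMeasurableSpace Y] [SecondCountableTopology Y]
    [NormedAddCommGroup E] [NormedSpace ℝ E] {μ : Measure Y}
    {s : Set X} (hs : IsOpen s) {G : X → Y → E} {G' : X → Y → X →L[ℝ] E} {B : Y → ℝ}
    (hB : Integrable B μ)
    (hG : Continuous fun p : X × Y => G p.1 p.2) (hb : ∀ x ∈ s, ∀ y, ‖G x y‖ ≤ B y)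
    (hG' : Continuous fun p : X × Y => G' p.1 p.2) (hb' : ∀ x ∈ s, ∀ y, ‖G' x y‖ ≤ B y)
    (hd : ∀ x y, HasFDerivAt (fun x => G x y) (G' x y) x) {x : X} (hx : x ∈ s) :
    HasFDerivAt (fun x => ∫ y, G x y ∂μ) (∫ y, G' x y ∂μ) x := by
  have hm : ∀ x, AEStronglyMeasurable (G x) μ := fun x =>
    (hG.comp (by fun_prop : Continuous fun y : Y => (x, y))).aestronglyMeasurable
  refine hasFDerivAt_integral_of_dominated_of_fderiv_le (bound := B) (hs.mem_nhds hx)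
    (Eventually.of_forall hm) ?_ ?_ ?_ hB ?_
  · exact hB.mono' (hm x) (Eventually.of_forall (hb x hx))
  · exact (hG'.comp (by fun_prop : Continuous fun y : Y => (x, y))).aestronglyMeasurable
  · exact Eventually.of_forall fun y x hx => hb' x hx y
  · exact Eventually.of_forall fun y x _ => hd x y

/-- The phase `2π⟪ξ, x'⟫` as a linear map in `x`. -/
def ell {n : ℕ} (ξ : Euc n) : Euc (n + 1) →L[ℝ] ℝ :=
  (2 * Real.pi) • (innerSL ℝ ξ).comp (frontL n)

lemma ell_apply {n : ℕ} (ξ : Euc n) (x : Euc (n + 1)) :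
    ell ξ x = 2 * Real.pi * ⟪ξ, front x⟫ := by
  simp [ell]

lemma continuous_ell {n : ℕ} : Continuous (ell : Euc n → Euc (n + 1) →L[ℝ] ℝ) := by
  unfold ell
  have h1 : Continuous fun ξ : Euc n => innerSL ℝ ξ := (innerSL ℝ).continuous
  have h2 : Continuous fun ξ : Euc n => (innerSL ℝ ξ).comp (frontL n) :=
    h1.clm_comp continuous_const
  exact h2.const_smul (2 * Real.pi)

lemma norm_ell {n : ℕ} (ξ : Euc n) : ‖ell ξ‖ ≤ 2 * Real.pi * ‖ξ‖ := by
  refine ContinuousLinearMap.opNorm_le_bound _ (by positivity) fun x => ?_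
  rw [ell_apply, Real.norm_eq_abs, abs_mul, abs_of_pos (by positivity : 0 < 2 * Real.pi), mul_assoc]
  have h1 : |⟪ξ, front x⟫| ≤ ‖ξ‖ * ‖x‖ := (abs_real_inner_le_norm ξ (front x)).trans
    (mul_le_mul_of_nonneg_left (norm_front_le x) (norm_nonneg ξ))
  have h2 := mul_le_mul_of_nonneg_left h1 (by positivity : (0 : ℝ) ≤ 2 * Real.pi)
  linarith

lemma norm_lastL {n : ℕ} : ‖lastL n‖ ≤ 1 := by
  refine ContinuousLinearMap.opNorm_le_bound _ (by positivity) fun x => ?_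
  simpa using abs_lastc_le x

/-- frequency -/
def freq {n : ℕ} (ξ : Euc n) : ℝ := 2 * Real.pi * ‖ξ‖

lemma freq_nonneg {n : ℕ} (ξ : Euc n) : 0 ≤ freq ξ := by unfold freq; positivity

/-- Real part of `c e^{iθ}`. -/
def pc {n : ℕ} (c : Euc n → ℂ) (x : Euc (n + 1)) (ξ : Euc n) : ℝ :=
  (c ξ).re * Real.cos (ell ξ x) - (c ξ).im * Real.sin (ell ξ x)

/-- Derivative in the phase. -/
def pd {n : ℕ} (c : Euc n → ℂ) (x : Euc (n + 1)) (ξ : Euc n) : ℝ :=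
  -((c ξ).re * Real.sin (ell ξ x)) - (c ξ).im * Real.cos (ell ξ x)

/-- integrand -/
def gz {n : ℕ} (c : Euc n → ℂ) (x : Euc (n + 1)) (ξ : Euc n) : ℝ :=
  pc c x ξ * bm (freq ξ) (lastc x)

/-- first derivative -/
def go {n : ℕ} (c : Euc n → ℂ) (x : Euc (n + 1)) (ξ : Euc n) : Euc (n + 1) →L[ℝ] ℝ :=
  (pd c x ξ * bm (freq ξ) (lastc x)) • ell ξ + (pc c x ξ * bk (freq ξ) (lastc x)) • lastL n

/-- second derivative -/
def gt {n : ℕ} (c : Euc n → ℂ) (x : Euc (n + 1)) (ξ : Euc n) :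
    Euc (n + 1) →L[ℝ] Euc (n + 1) →L[ℝ] ℝ :=
  (((-pc c x ξ) * bm (freq ξ) (lastc x)) • ell ξ
      + (pd c x ξ * bk (freq ξ) (lastc x)) • lastL n).smulRight (ell ξ)
  + ((pd c x ξ * bk (freq ξ) (lastc x)) • ell ξ
      + (pc c x ξ * (freq ξ ^ 2 * bm (freq ξ) (lastc x))) • lastL n).smulRight (lastL n)

section
variable {n : ℕ} {c : Euc n → ℂ}

lemma hasFDerivAt_pc (x : Euc (n + 1)) (ξ : Euc n) :
    HasFDerivAt (fun x => pc c x ξ) (pd c x ξ • ell ξ) x := by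
  have h := (ell ξ).hasFDerivAt (x := x)
  have h1 := (h.cos.const_mul (c ξ).re).sub (h.sin.const_mul (c ξ).im)
  refine h1.congr_fderiv ?_
  ext v
  simp [pd]
  ring

lemma hasFDerivAt_pd (x : Euc (n + 1)) (ξ : Euc n) :
    HasFDerivAt (fun x => pd c x ξ) ((-pc c x ξ) • ell ξ) x := by
  have h := (ell ξ).hasFDerivAt (x := x)
  have h1 := (h.sin.const_mul (c ξ).re).neg.sub (h.cos.const_mul (c ξ).im)
  refine h1.congr_fderiv ?_
  ext v
  simp [pc]
  ring

lemma hasFDerivAt_bm (s : ℝ) (x : Euc (n + 1)) :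
    HasFDerivAt (fun x : Euc (n + 1) => bm s (lastc x)) (bk s (lastc x) • lastL n) x :=
  (hasDerivAt_bm s (lastc x)).comp_hasFDerivAt x ((lastL n).hasFDerivAt (x := x))

lemma hasFDerivAt_bk (s : ℝ) (x : Euc (n + 1)) :
    HasFDerivAt (fun x : Euc (n + 1) => bk s (lastc x)) ((s ^ 2 * bm s (lastc x)) • lastL n) x :=
  (hasDerivAt_bk s (lastc x)).comp_hasFDerivAt x ((lastL n).hasFDerivAt (x := x))

lemma hasFDerivAt_gz (x : Euc (n + 1)) (ξ : Euc n) :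
    HasFDerivAt (fun x => gz c x ξ) (go c x ξ) x := by
  refine ((hasFDerivAt_pc (c := c) x ξ).mul (hasFDerivAt_bm (freq ξ) x)).congr_fderiv ?_
  ext v
  simp [go]
  ring

lemma hasFDerivAt_go (x : Euc (n + 1)) (ξ : Euc n) :
    HasFDerivAt (fun x => go c x ξ) (gt c x ξ) x := by
  have h1 := ((hasFDerivAt_pd (c := c) x ξ).mul (hasFDerivAt_bm (freq ξ) x)).smul_const (ell ξ)
  have h2 := ((hasFDerivAt_pc (c := c) x ξ).mul (hasFDerivAt_bk (freq ξ) x)).smul_const (lastL n)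
  refine (h1.add h2).congr_fderiv ?_
  ext v w
  simp [gt]
  ring

lemma cont_freq : Continuous (freq : Euc n → ℝ) := by unfold freq; fun_prop

lemma cont_pc (hc : Continuous c) : Continuous fun p : Euc (n + 1) × Euc n => pc c p.1 p.2 := by
  have h1 : Continuous fun p : Euc (n + 1) × Euc n => ell p.2 p.1 :=
    (continuous_ell.comp continuous_snd).clm_apply continuous_fst
  have h2 : Continuous fun p : Euc (n + 1) × Euc n => (c p.2).re :=
    Complex.continuous_re.comp (hc.comp continuous_snd)
  have h3 : Continuous fun p : Euc (n + 1) × Euc n => (c p.2).im :=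
    Complex.continuous_im.comp (hc.comp continuous_snd)
  unfold pc
  fun_prop

lemma cont_pd (hc : Continuous c) : Continuous fun p : Euc (n + 1) × Euc n => pd c p.1 p.2 := by
  have h1 : Continuous fun p : Euc (n + 1) × Euc n => ell p.2 p.1 :=
    (continuous_ell.comp continuous_snd).clm_apply continuous_fst
  have h2 : Continuous fun p : Euc (n + 1) × Euc n => (c p.2).re :=
    Complex.continuous_re.comp (hc.comp continuous_snd)
  have h3 : Continuous fun p : Euc (n + 1) × Euc n => (c p.2).im :=
    Complex.continuous_im.comp (hc.comp continuous_snd)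
  unfold pd
  fun_prop

lemma cont_bm' : Continuous fun p : Euc (n + 1) × Euc n => bm (freq p.2) (lastc p.1) :=
  continuous_bm.comp ((cont_freq.comp continuous_snd).prodMk
    (continuous_lastc.comp continuous_fst))

lemma cont_bk' : Continuous fun p : Euc (n + 1) × Euc n => bk (freq p.2) (lastc p.1) :=
  continuous_bk.comp ((cont_freq.comp continuous_snd).prodMk
    (continuous_lastc.comp continuous_fst))

lemma cont_gz (hc : Continuous c) : Continuous fun p : Euc (n + 1) × Euc n => gz c p.1 p.2 :=
  (cont_pc hc).mul cont_bm'

lemma cont_go (hc : Continuous c) : Continuous fun p : Euc (n + 1) × Euc n => go c p.1 p.2 :=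
  (((cont_pd hc).mul cont_bm').smul (continuous_ell.comp continuous_snd)).add
    (((cont_pc hc).mul cont_bk').smul continuous_const)

lemma cont_smulRight {X : Type*} [TopologicalSpace X] {E F : Type*} [NormedAddCommGroup E]
    [NormedSpace ℝ E] [NormedAddCommGroup F] [NormedSpace ℝ F] {u : X → E →L[ℝ] ℝ} {v : X → F}
    (hu : Continuous u) (hv : Continuous v) : Continuous fun x => (u x).smulRight (v x) := by
  have h := (ContinuousLinearMap.smulRightL ℝ E F).continuous.comp hu
  exact h.clm_apply hv

lemma cont_gt (hc : Continuous c) : Continuous fun p : Euc (n + 1) × Euc n => gt c p.1 p.2 := by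
  have he : Continuous fun p : Euc (n + 1) × Euc n => ell p.2 := continuous_ell.comp continuous_snd
  have hf : Continuous fun p : Euc (n + 1) × Euc n => freq p.2 := cont_freq.comp continuous_snd
  have hl : Continuous fun _ : Euc (n + 1) × Euc n => lastL n := continuous_const
  unfold gt
  exact (cont_smulRight ((((cont_pc hc).neg.mul cont_bm').smul he).add
    (((cont_pd hc).mul cont_bk').smul hl)) he).add
    (cont_smulRight ((((cont_pd hc).mul cont_bk').smul he).add
    (((cont_pc hc).mul ((hf.pow 2).mul cont_bm')).smul hl)) hl)

lemma pc_abs (x : Euc (n + 1)) (ξ : Euc n) : |pc c x ξ| ≤ 2 * ‖c ξ‖ := by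
  unfold pc
  refine (abs_sub _ _).trans ?_
  rw [abs_mul, abs_mul]
  have h1 := Complex.abs_re_le_norm (c ξ)
  have h2 := Complex.abs_im_le_norm (c ξ)
  have h3 := Real.abs_cos_le_one (ell ξ x)
  have h4 := Real.abs_sin_le_one (ell ξ x)
  have := mul_le_mul h1 h3 (abs_nonneg _) (norm_nonneg _)
  have := mul_le_mul h2 h4 (abs_nonneg _) (norm_nonneg _)
  linarith

lemma pd_abs (x : Euc (n + 1)) (ξ : Euc n) : |pd c x ξ| ≤ 2 * ‖c ξ‖ := by
  unfold pd
  refine (abs_sub _ _).trans ?_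
  rw [abs_neg, abs_mul, abs_mul]
  have h1 := Complex.abs_re_le_norm (c ξ)
  have h2 := Complex.abs_im_le_norm (c ξ)
  have h3 := Real.abs_cos_le_one (ell ξ x)
  have h4 := Real.abs_sin_le_one (ell ξ x)
  have := mul_le_mul h1 h4 (abs_nonneg _) (norm_nonneg _)
  have := mul_le_mul h2 h3 (abs_nonneg _) (norm_nonneg _)
  linarith

/-- dominating function -/
def gB (c : Euc n → ℂ) (ξ : Euc n) : ℝ := 4 * ‖c ξ‖ * (1 + freq ξ) ^ 2

lemma mul_abs_le {p q A : ℝ} (hp : |p| ≤ A) (hq : |q| ≤ 1) : |p * q| ≤ A := by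
  rw [abs_mul]
  have := mul_le_mul hp hq (abs_nonneg _) ((abs_nonneg _).trans hp)
  linarith

lemma gz_norm {x : Euc (n + 1)} (hx : x ∈ cslab n) (ξ : Euc n) : ‖gz c x ξ‖ ≤ gB c ξ := by
  have h1 := mul_abs_le (pc_abs (c := c) x ξ) (bm_abs (s := freq ξ) hx.1 hx.2)
  rw [Real.norm_eq_abs]
  refine h1.trans ?_
  unfold gB
  have := freq_nonneg ξ
  have : 1 ≤ (1 + freq ξ) ^ 2 := by nlinarith
  have := mul_le_mul_of_nonneg_left this (by positivity : 0 ≤ 4 * ‖c ξ‖)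
  linarith [norm_nonneg (c ξ)]

lemma norm_comb_le {p q A : ℝ} (hp : |p| ≤ A) (hq : |q| ≤ A) (ξ : Euc n) :
    ‖p • ell ξ + q • lastL n‖ ≤ A * (freq ξ + 1) := by
  have hA : 0 ≤ A := (abs_nonneg _).trans hp
  refine (norm_add_le _ _).trans ?_
  rw [norm_smul, norm_smul, Real.norm_eq_abs, Real.norm_eq_abs]
  have := mul_le_mul hp (norm_ell ξ) (norm_nonneg _) hA
  have := mul_le_mul hq (norm_lastL (n := n)) (norm_nonneg _) hA
  unfold freq
  linarith

lemma go_norm {x : Euc (n + 1)} (hx : x ∈ cslab n) (ξ : Euc n) : ‖go c x ξ‖ ≤ gB c ξ := by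
  have h := norm_comb_le (mul_abs_le (pd_abs (c := c) x ξ) (bm_abs (s := freq ξ) hx.1 hx.2))
    (mul_abs_le (pc_abs (c := c) x ξ) (bk_abs (s := freq ξ) hx.1 hx.2)) ξ
  refine h.trans ?_
  unfold gB
  have := freq_nonneg ξ
  have h2 : freq ξ + 1 ≤ 2 * (1 + freq ξ) ^ 2 := by nlinarith
  have := mul_le_mul_of_nonneg_left h2 (by positivity : 0 ≤ 2 * ‖c ξ‖)
  linarith [norm_nonneg (c ξ)]

lemma gt_norm {x : Euc (n + 1)} (hx : x ∈ cslab n) (ξ : Euc n) : ‖gt c x ξ‖ ≤ gB c ξ := by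
  have hf := freq_nonneg ξ
  have hc0 := norm_nonneg (c ξ)
  have hbm := bm_abs (s := freq ξ) hx.1 hx.2
  have hbk := bk_abs (s := freq ξ) hx.1 hx.2
  have h1 : |(-pc c x ξ) * bm (freq ξ) (lastc x)| ≤ 2 * ‖c ξ‖ :=
    mul_abs_le (by rw [abs_neg]; exact pc_abs x ξ) hbm
  have h2 := mul_abs_le (pd_abs (c := c) x ξ) hbk
  have h3 : |pc c x ξ * (freq ξ ^ 2 * bm (freq ξ) (lastc x))| ≤ 2 * ‖c ξ‖ * freq ξ ^ 2 := by
    rw [← mul_assoc]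
    refine mul_abs_le ?_ hbm
    rw [abs_mul, abs_of_nonneg (sq_nonneg (freq ξ))]
    gcongr
    exact pc_abs x ξ
  have hl := norm_lastL (n := n)
  have he := norm_ell ξ
  rw [← freq] at he
  unfold gt
  refine (norm_add_le (E := Euc (n + 1) →L[ℝ] Euc (n + 1) →L[ℝ] ℝ) _ _).trans ?_
  rw [ContinuousLinearMap.norm_smulRight_apply, ContinuousLinearMap.norm_smulRight_apply]
  have h4 := mul_le_mul (norm_comb_le h1 h2 ξ) he (norm_nonneg _) (by positivity)
  have h5 : ‖(pd c x ξ * bk (freq ξ) (lastc x)) • ell ξ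
      + (pc c x ξ * (freq ξ ^ 2 * bm (freq ξ) (lastc x))) • lastL n‖
      ≤ 2 * ‖c ξ‖ * freq ξ + 2 * ‖c ξ‖ * freq ξ ^ 2 := by
    refine (norm_add_le _ _).trans ?_
    rw [norm_smul, norm_smul, Real.norm_eq_abs, Real.norm_eq_abs]
    have := mul_le_mul h2 he (norm_nonneg _) (by positivity)
    have := mul_le_mul h3 hl (norm_nonneg _) (by positivity)
    linarith
  have h6 := mul_le_mul h5 hl (norm_nonneg _) (by positivity)
  unfold gB
  have h7 : 0 ≤ ‖c ξ‖ * freq ξ := by positivity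
  refine (add_le_add h4 h6).trans ?_
  nlinarith

lemma gt_trace (x : Euc (n + 1)) (ξ : Euc n) :
    ∑ i : Fin (n + 1), gt c x ξ (EuclideanSpace.basisFun (Fin (n + 1)) ℝ i)
      (EuclideanSpace.basisFun (Fin (n + 1)) ℝ i) = 0 := by
  have hl : ∀ i : Fin n, lastc (EuclideanSpace.single (i.castSucc) (1 : ℝ) : Euc (n + 1)) = 0 := by
    intro i
    simp [lastc, (Fin.castSucc_ne_last i).symm]
  have hf : ∀ i : Fin n, front (EuclideanSpace.single (i.castSucc) (1 : ℝ) : Euc (n + 1))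
      = EuclideanSpace.single i (1 : ℝ) := by
    intro i
    ext j
    simp [front, Pi.single_apply]
  have he : (EuclideanSpace.single (Fin.last n) (1 : ℝ) : Euc (n + 1)) = en n := rfl
  have hs : freq ξ ^ 2 = ∑ i : Fin n, (2 * Real.pi * ξ i) ^ 2 := by
    unfold freq
    rw [mul_pow, EuclideanSpace.norm_sq_eq, Finset.mul_sum]
    refine Finset.sum_congr rfl fun i _ => ?_
    rw [Real.norm_eq_abs, sq_abs]
    ring
  rw [Fin.sum_univ_castSucc]
  simp only [EuclideanSpace.basisFun_apply, he]
  simp only [gt, ContinuousLinearMap.add_apply, ContinuousLinearMap.smulRight_apply,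
    ContinuousLinearMap.smul_apply, ell_apply, lastL_apply, hl, hf, front_en, lastc_en,
    EuclideanSpace.inner_single_right, smul_eq_mul, inner_zero_right]
  rw [hs]
  simp only [Finset.sum_mul, Finset.mul_sum, mul_zero, add_zero, zero_add, mul_one, one_mul,
    ← Finset.sum_add_distrib]
  simp
  refine Finset.sum_eq_zero fun i _ => ?_
  ring

end

/-- The solution of the Neumann problem in the slab. -/
def wsol {n : ℕ} (c : Euc n → ℂ) (x : Euc (n + 1)) : ℝ := ∫ ξ, gz c x ξ

section
variable {n : ℕ} {c : Euc n → ℂ}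

lemma wsol_deriv (hc : Continuous c) (hB : Integrable (gB c)) {x : Euc (n + 1)} (hx : x ∈ slab n) :
    HasFDerivAt (wsol c) (∫ ξ, go c x ξ) x :=
  param_deriv (isOpen_slab n) hB (cont_gz hc) (fun _ hx ξ => gz_norm (slab_subset n hx) ξ)
    (cont_go hc) (fun _ hx ξ => go_norm (slab_subset n hx) ξ) (fun x ξ => hasFDerivAt_gz x ξ) hx

lemma wsol_deriv2 (hc : Continuous c) (hB : Integrable (gB c)) {x : Euc (n + 1)}
    (hx : x ∈ slab n) :
    HasFDerivAt (fderiv ℝ (wsol c)) (∫ ξ, gt c x ξ) x := by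
  have h : HasFDerivAt (fun x => ∫ ξ, go c x ξ) (∫ ξ, gt c x ξ) x :=
    param_deriv (isOpen_slab n) hB (cont_go hc) (fun _ hx ξ => go_norm (slab_subset n hx) ξ)
      (cont_gt hc) (fun _ hx ξ => gt_norm (slab_subset n hx) ξ) (fun x ξ => hasFDerivAt_go x ξ) hx
  refine h.congr_of_eventuallyEq ?_
  filter_upwards [(isOpen_slab n).mem_nhds hx] with y hy
  exact (wsol_deriv hc hB hy).fderiv

set_option maxSynthPendingDepth 3 in
lemma wsol_harm (hc : Continuous c) (hB : Integrable (gB c)) : HarmonicOn (wsol c) (slab n) := by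
  have hcd : ContDiffOn ℝ 2 (wsol c) (slab n) := by
    have h1 : ContDiffOn ℝ 1 (fderiv ℝ (wsol c)) (slab n) := by
      rw [show (1 : WithTop ℕ∞) = 0 + 1 by norm_num,
        contDiffOn_succ_iff_fderiv_of_isOpen (isOpen_slab n)]
      refine ⟨fun x hx => (wsol_deriv2 hc hB hx).differentiableAt.differentiableWithinAt,
        by simp, ?_⟩
      rw [contDiffOn_zero]
      have h2 : ContinuousOn (fun x => ∫ ξ, gt c x ξ) (slab n) :=
        param_cont hB (cont_gt hc) (fun _ hx ξ => gt_norm (slab_subset n hx) ξ)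
      exact h2.congr fun x hx => (wsol_deriv2 hc hB hx).fderiv
    rw [show (2 : WithTop ℕ∞) = 1 + 1 by norm_num,
      contDiffOn_succ_iff_fderiv_of_isOpen (isOpen_slab n)]
    exact ⟨fun x hx => (wsol_deriv hc hB hx).differentiableAt.differentiableWithinAt,
      by simp, h1⟩
  refine ⟨hcd, fun x hx => ?_⟩
  have hi : Integrable (gt c x) := hB.mono'
    ((cont_gt hc).comp (by fun_prop : Continuous fun y : Euc n => (x, y))).aestronglyMeasurable
    (Eventually.of_forall fun ξ => gt_norm (slab_subset n hx) ξ)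
  rw [laplacian_eq_sum ((hcd x hx).contDiffAt ((isOpen_slab n).mem_nhds hx))
    (EuclideanSpace.basisFun (Fin (n + 1)) ℝ), (wsol_deriv2 hc hB hx).fderiv]
  have h1 : ∀ v : Euc (n + 1), (∫ ξ, gt c x ξ) v v = ∫ ξ, gt c x ξ v v := by
    intro v
    rw [ContinuousLinearMap.integral_apply hi, ContinuousLinearMap.integral_apply]
    exact hi.apply_continuousLinearMap v
  simp_rw [h1]
  rw [← integral_finsetSum]
  · simp_rw [gt_trace]
    simp
  · intro i _
    exact (hi.apply_continuousLinearMap _).apply_continuousLinearMap _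

lemma wsol_cont (hc : Continuous c) (hB : Integrable (gB c)) : ContinuousOn (wsol c) (cslab n) :=
  param_cont hB (cont_gz hc) (fun _ hx ξ => gz_norm hx ξ)

lemma wsol_bdry (hc : Continuous c) (hB : Integrable (gB c)) {x : Euc (n + 1)}
    (hx : x ∈ cslab n) :
    HasFDerivWithinAt (wsol c) (∫ ξ, go c x ξ) (cslab n) x := by
  have h := hasFDerivWithinAt_closure_of_tendsto_fderiv (f := wsol c) (s := slab n) (x := x)
    (f' := ∫ ξ, go c x ξ)
    (fun y hy => (wsol_deriv hc hB hy).differentiableAt.differentiableWithinAt)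
    (convex_slab n) (isOpen_slab n)
    (fun y hy => ?_) ?_
  · rwa [closure_slab] at h
  · rw [closure_slab] at hy
    exact (wsol_cont hc hB y hy).mono (slab_subset n)
  · have h2 : ContinuousOn (fun x => ∫ ξ, go c x ξ) (cslab n) :=
      param_cont hB (cont_go hc) (fun _ hx ξ => go_norm hx ξ)
    have h3 := ((h2 x hx).mono (slab_subset n)).tendsto
    refine h3.congr' ?_
    filter_upwards [self_mem_nhdsWithin] with y hy
    exact (wsol_deriv hc hB hy).fderiv.symm

lemma wsol_bdry_en (hc : Continuous c) (hB : Integrable (gB c)) {x : Euc (n + 1)}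
    (hx : lastc x = 0) :
    (∫ ξ, go c x ξ) (en n) = ∫ ξ, pc c x ξ := by
  have hx' : x ∈ cslab n := ⟨hx.ge, by rw [hx]; norm_num⟩
  have hi : Integrable (go c x) := hB.mono'
    ((cont_go hc).comp (by fun_prop : Continuous fun y : Euc n => (x, y))).aestronglyMeasurable
    (Eventually.of_forall fun ξ => go_norm hx' ξ)
  rw [ContinuousLinearMap.integral_apply hi]
  congr 1
  ext ξ
  simp [go, ell_apply, hx, bk_zero]

lemma wsol_bound (hc : Continuous c) (hB : Integrable (gB c)) {x : Euc (n + 1)}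
    (hx : x ∈ cslab n) : |wsol c x| ≤ ∫ ξ, gB c ξ :=
  norm_integral_le_of_norm_le hB (Eventually.of_forall fun ξ => gz_norm hx ξ)

lemma wsol_one {x : Euc (n + 1)} (hx : lastc x = 1) : wsol c x = 0 := by
  simp [wsol, gz, hx, bm_one]

end

open scoped FourierTransform ContDiff in
/-- Fourier inversion data. -/
lemma exists_fourier {n : ℕ} (φ : Euc n → ℝ) (h1 : ContDiff ℝ ∞ φ) (h2 : HasCompactSupport φ) :
    ∃ c : Euc n → ℂ, Continuous c ∧ Integrable (gB c) ∧
      ∀ x : Euc (n + 1), ∫ ξ, pc c x ξ = φ (front x) := by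
  have h1' : ContDiff ℝ ∞ (fun x => (φ x : ℂ)) := Complex.ofRealCLM.contDiff.comp h1
  have h2' : HasCompactSupport (fun x => (φ x : ℂ)) := h2.comp_left (g := fun r : ℝ => (r : ℂ)) (by simp)
  let F : SchwartzMap (Euc n) ℂ := h2'.toSchwartzMap h1'
  let c : SchwartzMap (Euc n) ℂ := 𝓕 F
  have hi : ∀ k : ℕ, Integrable fun ξ => ‖ξ‖ ^ k * ‖c ξ‖ := fun k => c.integrable_pow_mul volume k
  refine ⟨c, c.continuous, ?_, fun x => ?_⟩
  · have := (((hi 0).const_mul 4).add ((hi 1).const_mul (16 * Real.pi))).add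
      ((hi 2).const_mul (16 * Real.pi ^ 2))
    refine this.congr (Eventually.of_forall fun ξ => ?_)
    simp only [gB, freq, Pi.add_apply]
    ring
  · have h3 : 𝓕⁻ c = F := FourierTransform.fourierInv_fourier_eq F
    have h4 : (𝓕⁻ (c : Euc n → ℂ)) (front x) = (φ (front x) : ℂ) := by
      have := congrArg (fun f : SchwartzMap (Euc n) ℂ => f (front x)) h3
      simpa [SchwartzMap.fourierInv_coe, F] using this
    rw [Real.fourierInv_eq'] at h4
    have h5 : Integrable fun v : Euc n =>
        Complex.exp (↑(2 * Real.pi * inner ℝ v (front x)) * Complex.I) • c v := by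
      refine (hi 0).mono' ?_ ?_
      · refine Continuous.aestronglyMeasurable ?_
        have := c.continuous
        fun_prop
      · refine Eventually.of_forall fun v => ?_
        rw [norm_smul, Complex.norm_exp_ofReal_mul_I]
        simp
    have h6 := congrArg Complex.re h4
    rw [Complex.ofReal_re] at h6
    rw [← h6]
    have h7 := Complex.reCLM.integral_comp_comm h5
    rw [Complex.reCLM_apply] at h7
    rw [← h7]
    congr 1
    ext ξ
    simp only [pc, ell_apply, Complex.reCLM_apply, smul_eq_mul, Complex.mul_re,
      Complex.exp_ofReal_mul_I_re, Complex.exp_ofReal_mul_I_im]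
    ring

/-- The barrier. -/
def barr {n : ℕ} (S ε : ℝ) (x : Euc (n + 1)) : ℝ :=
  (S + ε) * (1 - lastc x) + ε * (‖front x‖ ^ 2 + (n + 2) - (n + 1) * lastc x ^ 2)

lemma continuous_barr {n : ℕ} (S ε : ℝ) : Continuous (barr S ε : Euc (n + 1) → ℝ) := by
  unfold barr
  fun_prop

lemma barr_second {n : ℕ} (S ε : ℝ) (x v : Euc (n + 1)) (s : ℝ) :
    barr S ε (x + s • v) + barr S ε (x - s • v) - 2 * barr S ε x
      = ε * (2 * s ^ 2 * (‖front v‖ ^ 2 - (n + 1) * lastc v ^ 2)) := by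
  have h1 := parallelogram_law_with_norm ℝ (front x) (s • front v)
  have h2 : ‖s • front v‖ ^ 2 = s ^ 2 * ‖front v‖ ^ 2 := by
    rw [norm_smul, mul_pow, Real.norm_eq_abs, sq_abs]
  unfold barr
  simp only [front_add, front_sub, front_smul, lastc_add, lastc_sub, lastc_smul]
  rw [h2] at h1
  linear_combination ε * h1

lemma barr_sum {n : ℕ} (S ε : ℝ) (x : Euc (n + 1)) (s : ℝ) :
    ∑ i : Fin (n + 1), (barr S ε (x + s • EuclideanSpace.basisFun (Fin (n + 1)) ℝ i)
      + barr S ε (x - s • EuclideanSpace.basisFun (Fin (n + 1)) ℝ i) - 2 * barr S ε x)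
      = -(2 * ε * s ^ 2) := by
  have hl : ∀ i : Fin n, lastc (EuclideanSpace.single (i.castSucc) (1 : ℝ) : Euc (n + 1)) = 0 := by
    intro i
    simp [lastc, (Fin.castSucc_ne_last i).symm]
  have hf : ∀ i : Fin n, front (EuclideanSpace.single (i.castSucc) (1 : ℝ) : Euc (n + 1))
      = EuclideanSpace.single i (1 : ℝ) := by
    intro i
    ext j
    simp [front, Pi.single_apply]
  have he : (EuclideanSpace.single (Fin.last n) (1 : ℝ) : Euc (n + 1)) = en n := rfl
  simp_rw [barr_second]
  rw [Fin.sum_univ_castSucc]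
  simp only [EuclideanSpace.basisFun_apply, he, hl, hf, front_en, lastc_en]
  simp
  ring

lemma slab_max_aux {n : ℕ} {w : Euc (n + 1) → ℝ} {φ : Euc n → ℝ} {W S : ℝ}
    (hw : HarmonicOn w (slab n)) (hc : ContinuousOn w (cslab n))
    (hb : ∀ x ∈ cslab n, |w x| ≤ W) (h1 : ∀ x, lastc x = 1 → w x = 0)
    (hd : ∀ x, lastc x = 0 → ∃ D : Euc (n + 1) →L[ℝ] ℝ, HasFDerivWithinAt w D (cslab n) x ∧
      D (en n) = φ (front x)) (hS : ∀ x, |φ x| ≤ S) {ε : ℝ} (hε : 0 < ε)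
    {x : Euc (n + 1)} (hx0 : 0 ≤ lastc x) (hx1 : lastc x ≤ 1) : w x ≤ barr S ε x := by
  have hS0 : 0 ≤ S := (abs_nonneg _).trans (hS 0)
  have hW0 : 0 ≤ W := (abs_nonneg _).trans (hb x ⟨hx0, by linarith⟩)
  set R : ℝ := max ‖front x‖ (W / ε + 1) with hR
  have hR1 : W / ε + 1 ≤ R := le_max_right _ _
  have hWε : 0 ≤ W / ε := by positivity
  have hRW : W ≤ ε * R ^ 2 := by
    have h2 : W / ε ≤ R ^ 2 := by nlinarith
    rw [div_le_iff₀ hε] at h2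
    linarith
  set K : Set (Euc (n + 1)) := {y | ‖front y‖ ≤ R ∧ 0 ≤ lastc y ∧ lastc y ≤ 1} with hK
  have hKc : IsCompact K := by
    refine isCompact_of_isClosed_isBounded ?_ ?_
    · have c1 : Continuous fun y : Euc (n + 1) => ‖front y‖ := by fun_prop
      exact (isClosed_le c1 continuous_const).inter
        ((isClosed_le continuous_const continuous_lastc).inter
          (isClosed_le continuous_lastc continuous_const))
    · refine (isBounded_iff_forall_norm_le).2 ⟨R + 1, fun y hy => ?_⟩
      have := norm_le_add y
      rw [abs_of_nonneg hy.2.1] at this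
      linarith [hy.1, hy.2.2]
  have hKs : K ⊆ cslab n := fun y hy => ⟨hy.2.1, by linarith [hy.2.2]⟩
  have hxK : x ∈ K := ⟨le_max_left _ _, hx0, hx1⟩
  obtain ⟨p, hpK, hp⟩ := hKc.exists_isMaxOn ⟨x, hxK⟩
    ((hc.mono hKs).sub (continuous_barr S ε).continuousOn)
  have hp' : ∀ y ∈ K, w y - barr S ε y ≤ w p - barr S ε p := fun y hy => hp hy
  by_contra hcon
  push Not at hcon
  have hpos : 0 < w p - barr S ε p := by linarith [hp' x hxK]
  have hp0 := hpK.2.1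
  have hp1 := hpK.2.2
  have hn0 : (0 : ℝ) ≤ n := Nat.cast_nonneg n
  have hsq : lastc p ^ 2 ≤ 1 := by nlinarith
  have hbq : ‖front p‖ ^ 2 + 1 ≤ ‖front p‖ ^ 2 + (n + 2) - (n + 1) * lastc p ^ 2 := by nlinarith
  have hbar : ε * (‖front p‖ ^ 2 + 1) ≤ barr S ε p := by
    unfold barr
    have := mul_le_mul_of_nonneg_left hbq hε.le
    have := mul_nonneg (by linarith : 0 ≤ S + ε) (by linarith : 0 ≤ 1 - lastc p)
    linarith
  have hpR : ‖front p‖ < R := by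
    by_contra hh
    push Not at hh
    have : R ^ 2 ≤ ‖front p‖ ^ 2 := by
      have : 0 ≤ R := by linarith
      gcongr
    have := mul_le_mul_of_nonneg_left this hε.le
    have := (abs_le.1 (hb p (hKs hpK))).2
    nlinarith
  have hp1' : lastc p < 1 := by
    refine lt_of_le_of_ne hp1 fun h => ?_
    rw [h1 p h] at hpos
    have : 0 ≤ ε * (‖front p‖ ^ 2 + 1) := by positivity
    linarith
  rcases eq_or_lt_of_le hp0 with h0 | h0
  · obtain ⟨D, hD, hDe⟩ := hd p h0.symm
    have hlit := (hasFDerivWithinAt_iff_isLittleO.1 hD)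
    have hev := (isLittleO_iff.1 hlit) (half_pos hε)
    have ht : Tendsto (fun s : ℝ => p + s • en n) (𝓝[>] 0) (𝓝[cslab n] p) := by
      refine tendsto_nhdsWithin_iff.2 ⟨?_, ?_⟩
      · have hcc : Continuous fun s : ℝ => p + s • en n := by fun_prop
        have := hcc.tendsto 0
        simp only [zero_smul, add_zero] at this
        exact this.mono_left nhdsWithin_le_nhds
      · filter_upwards [Ioo_mem_nhdsGT (zero_lt_one)] with s hs
        constructor
        · simp [← h0, hs.1.le]
        · simp [← h0]; linarith [hs.2]
    obtain ⟨s, hs, hs01⟩ := ((ht.eventually hev).and (Ioo_mem_nhdsGT (zero_lt_one))).exists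
    have hs0 := hs01.1
    have hs1 := hs01.2
    simp only [add_sub_cancel_left, map_smul, norm_smul, norm_en, mul_one, hDe, smul_eq_mul,
      Real.norm_eq_abs, abs_of_pos hs0] at hs
    have hs' := (abs_le.1 hs).1
    have hφ := (abs_le.1 (hS (front p))).1
    have hm := hp' (p + s • en n) ⟨by simpa using hpR.le, by simp [← h0, hs0.le], by
      simp [← h0, hs1.le]⟩
    unfold barr at hm
    simp [← h0] at hm
    have e1 := mul_le_mul_of_nonneg_left hφ hs0.le
    have e2 := mul_pos hε hs0
    have e3 : 0 ≤ ε * ((n + 1) * s ^ 2) := by positivity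
    linarith
  · have hps : p ∈ slab n := ⟨h0, by linarith⟩
    have hA := hw.second_diff_sum (isOpen_slab n) hps (EuclideanSpace.basisFun (Fin (n + 1)) ℝ)
    refine not_isLittleO_of_ge (c := 2 * ε) (by positivity) hA ?_
    have hKo : {y : Euc (n + 1) | ‖front y‖ < R ∧ 0 < lastc y ∧ lastc y < 1} ∈ 𝓝 p := by
      have c1 : Continuous fun y : Euc (n + 1) => ‖front y‖ := by fun_prop
      exact ((isOpen_lt c1 continuous_const).inter
        ((isOpen_lt continuous_const continuous_lastc).inter
          (isOpen_lt continuous_lastc continuous_const))).mem_nhds ⟨hpR, h0, hp1'⟩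
    have hev : ∀ v : Euc (n + 1), ∀ᶠ s in 𝓝[>] (0 : ℝ), p + s • v ∈ K := by
      intro v
      have hcc : Continuous fun s : ℝ => p + s • v := by fun_prop
      have ht := hcc.tendsto 0
      simp only [zero_smul, add_zero] at ht
      filter_upwards [nhdsWithin_le_nhds (ht hKo)] with s hs
      exact ⟨hs.1.le, hs.2.1.le, hs.2.2.le⟩
    have hev1 : ∀ᶠ s in 𝓝[>] (0 : ℝ), ∀ i : Fin (n + 1),
        p + s • EuclideanSpace.basisFun (Fin (n + 1)) ℝ i ∈ K :=
      eventually_all.2 fun i => hev _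
    have hev2 : ∀ᶠ s in 𝓝[>] (0 : ℝ), ∀ i : Fin (n + 1),
        p - s • EuclideanSpace.basisFun (Fin (n + 1)) ℝ i ∈ K :=
      eventually_all.2 fun i => by
        simpa only [smul_neg, ← sub_eq_add_neg] using hev (-EuclideanSpace.basisFun (Fin (n + 1)) ℝ i)
    filter_upwards [hev1, hev2] with s hs1 hs2
    have hb := barr_sum S ε p s
    have e : -(2 * ε * s ^ 2) = ∑ i : Fin (n + 1),
      (barr S ε (p + s • EuclideanSpace.basisFun (Fin (n + 1)) ℝ i)
      + barr S ε (p - s • EuclideanSpace.basisFun (Fin (n + 1)) ℝ i) - 2 * barr S ε p) := hb.symm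
    rw [e]
    refine Finset.sum_le_sum fun i _ => ?_
    linarith [hp' _ (hs1 i), hp' _ (hs2 i)]

lemma slab_max {n : ℕ} {w : Euc (n + 1) → ℝ} {φ : Euc n → ℝ} {W S : ℝ}
    (hw : HarmonicOn w (slab n)) (hc : ContinuousOn w (cslab n))
    (hb : ∀ x ∈ cslab n, |w x| ≤ W) (h1 : ∀ x, lastc x = 1 → w x = 0)
    (hd : ∀ x, lastc x = 0 → ∃ D : Euc (n + 1) →L[ℝ] ℝ, HasFDerivWithinAt w D (cslab n) x ∧
      D (en n) = φ (front x)) (hS : ∀ x, |φ x| ≤ S)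
    {x : Euc (n + 1)} (hx0 : 0 ≤ lastc x) (hx1 : lastc x ≤ 1) : w x ≤ S := by
  have hS0 : 0 ≤ S := (abs_nonneg _).trans (hS 0)
  have h : ∀ᶠ ε in 𝓝[>] (0 : ℝ), w x ≤ barr S ε x := by
    filter_upwards [self_mem_nhdsWithin] with ε hε
    exact slab_max_aux hw hc hb h1 hd hS hε hx0 hx1
  have ht : Tendsto (fun ε => barr S ε x) (𝓝[>] 0) (𝓝 (barr S 0 x)) := by
    have hcc : Continuous fun ε => barr S ε x := by unfold barr; fun_prop
    exact (hcc.tendsto 0).mono_left nhdsWithin_le_nhds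
  have := ge_of_tendsto ht h
  unfold barr at this
  nlinarith

open scoped ContDiff in
/-- The auxiliary Neumann problem in a slab. -/
lemma exists_w {n : ℕ} (φ : Euc n → ℝ) (hφ : ContDiff ℝ ∞ φ) (hφ2 : HasCompactSupport φ) {S : ℝ}
    (hS : ∀ x, |φ x| ≤ S) :
    ∃ w : Euc (n + 1) → ℝ, HarmonicOn w (slab n) ∧ ContinuousOn w (cslab n) ∧
      (∀ x, lastc x = 0 → ∃ D : Euc (n + 1) →L[ℝ] ℝ, HasFDerivWithinAt w D (cslab n) x ∧
        D (en n) = φ (front x)) ∧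
      ∀ x, 0 ≤ lastc x → lastc x ≤ 1 → |w x| ≤ S := by
  obtain ⟨c, hc, hB, hi⟩ := exists_fourier φ hφ hφ2
  have hd : ∀ x, lastc x = 0 → ∃ D : Euc (n + 1) →L[ℝ] ℝ,
      HasFDerivWithinAt (wsol c) D (cslab n) x ∧ D (en n) = φ (front x) := fun x hx =>
    ⟨_, wsol_bdry hc hB ⟨hx.ge, by rw [hx]; norm_num⟩, by rw [wsol_bdry_en hc hB hx, hi x]⟩
  have hw := wsol_harm hc hB
  refine ⟨wsol c, hw, wsol_cont hc hB, hd, fun x h0 h1 => ?_⟩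
  refine abs_le'.2 ⟨?_, ?_⟩
  · exact slab_max hw (wsol_cont hc hB) (fun x hx => wsol_bound hc hB hx)
      (fun x hx => wsol_one hx) hd hS h0 h1
  · refine slab_max (w := fun x => - wsol c x) (φ := fun x => - φ x)
      (harmonicOn_neg (isOpen_slab n) hw) (wsol_cont hc hB).neg
      (W := ∫ ξ, gB c ξ) (fun x hx => ?_) (fun x hx => ?_) (fun x hx => ?_)
      (fun x => by rw [abs_neg]; exact hS x) h0 h1
    · rw [abs_neg]; exact wsol_bound hc hB hx
    · rw [wsol_one hx, neg_zero]
    · obtain ⟨D, h1, h2⟩ := hd x hx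
      exact ⟨-D, h1.neg, by simp [h2]⟩

/-! ### Cutoff and mollification -/

open scoped ContDiff in
lemma two_le_infty : (2 : WithTop ℕ∞) ≤ ((⊤ : ℕ∞) : WithTop ℕ∞) :=
  WithTop.coe_le_coe.2 (le_top : (2 : ℕ∞) ≤ ⊤)

open scoped ContDiff Manifold in
lemma exists_cutoff {m : ℕ} {s t : Set (Euc m)} (hs : IsClosed s) (ht : IsClosed t)
    (hd : Disjoint s t) :
    ∃ ψ : Euc m → ℝ, ContDiff ℝ ∞ ψ ∧ (∀ x ∈ s, ψ =ᶠ[𝓝 x] fun _ => 0) ∧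
      (∀ x ∈ t, ψ =ᶠ[𝓝 x] fun _ => 1) ∧ ∀ x, 0 ≤ ψ x ∧ ψ x ≤ 1 := by
  obtain ⟨f, h0, h1, h2⟩ :=
    exists_contMDiffMap_zero_one_nhds_of_isClosed (n := ⊤) 𝓘(ℝ, Euc m) hs ht hd
  refine ⟨f, f.contMDiff.contDiff, fun x hx => ?_, fun x hx => ?_, fun x => h2 x⟩
  · exact (eventually_nhdsSet_iff_forall.1 h0) x hx
  · exact (eventually_nhdsSet_iff_forall.1 h1) x hx

lemma exists_ext {m : ℕ} {Ω K : Set (Euc m)} {h : Euc m → ℝ} (hΩ : IsOpen Ω)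
    (hb : Bornology.IsBounded Ω) (hh : ContDiffOn ℝ 2 h Ω) (hK : IsClosed K) (hKΩ : K ⊆ Ω) :
    ∃ k : Euc m → ℝ, ContDiff ℝ 2 k ∧ HasCompactSupport k ∧ ∀ x ∈ K, k =ᶠ[𝓝 x] h := by
  obtain ⟨ψ, h1, h2, h3, -⟩ := exists_cutoff hΩ.isClosed_compl hK
    (disjoint_compl_left_iff_subset.2 hKΩ)
  refine ⟨fun x => ψ x * h x, ?_, ?_, fun x hx => ?_⟩
  · rw [contDiff_iff_contDiffAt]
    intro x
    by_cases hx : x ∈ Ω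
    · exact (h1.contDiffAt.of_le two_le_infty).mul
        ((hh x hx).contDiffAt (hΩ.mem_nhds hx))
    · refine (contDiffAt_const (c := (0 : ℝ))).congr_of_eventuallyEq ?_
      filter_upwards [h2 x hx] with y hy
      rw [hy, zero_mul]
  · refine HasCompactSupport.intro (K := closure Ω) hb.isCompact_closure fun x hx => ?_
    have := (h2 x (fun hx' => hx (subset_closure hx'))).self_of_nhds
    simp only at this
    rw [this, zero_mul]
  · filter_upwards [h3 x hx] with y hy
    rw [hy, one_mul]

section
variable {m : ℕ} (η : ContDiffBump (0 : Euc m))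

/-- mollification -/
def moll (k : Euc m → ℝ) (x : Euc m) : ℝ := ∫ t, η.normed volume t * k (x - t)

lemma normed_eq_zero {t : Euc m} (ht : η.rOut ≤ ‖t‖) : η.normed volume t = 0 := by
  have h := η.support_normed_eq (μ := (volume : Measure (Euc m)))
  by_contra hh
  have : t ∈ Function.support (η.normed volume) := hh
  rw [h] at this
  simp at this
  linarith

lemma weighted_le {k : Euc m → ℝ} (hk : Continuous k) {a δ : ℝ}
    (h : ∀ t, ‖t‖ < η.rOut → |k t - a| ≤ δ) : |(∫ t, η.normed volume t * k t) - a| ≤ δ := by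
  have hi : Integrable fun t => η.normed volume t * k t :=
    (η.continuous_normed.mul hk).integrable_of_hasCompactSupport
      (η.hasCompactSupport_normed.mul_right)
  have hη := η.integrable_normed (μ := (volume : Measure (Euc m)))
  have h1 : (∫ t, η.normed volume t * k t) - a = ∫ t, η.normed volume t * (k t - a) := by
    have h2 : ∫ t, η.normed volume t * a = a := by
      rw [integral_mul_const, η.integral_normed, one_mul]
    simp_rw [mul_sub]
    rw [integral_sub hi (hη.mul_const a), h2]
  rw [h1]
  have h3 : ∫ t, η.normed volume t * δ = δ := by
    rw [integral_mul_const, η.integral_normed, one_mul]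
  have := norm_integral_le_of_norm_le (f := fun t => η.normed volume t * (k t - a))
    (hη.mul_const δ) (Eventually.of_forall fun t => ?_)
  · rwa [h3] at this
  · rw [norm_mul, Real.norm_eq_abs, Real.norm_eq_abs, abs_of_nonneg (η.nonneg_normed t)]
    by_cases ht : ‖t‖ < η.rOut
    · exact mul_le_mul_of_nonneg_left (h t ht) (η.nonneg_normed t)
    · rw [normed_eq_zero η (not_lt.1 ht)]
      simp

open scoped ContDiff in
lemma moll_contDiff {k : Euc m → ℝ} (hk : Continuous k) : ContDiff ℝ ∞ (moll η k) := by
  have h := η.hasCompactSupport_normed.contDiff_convolution_left (μ := volume) (n := ⊤) (g := k)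
    (ContinuousLinearMap.lsmul ℝ ℝ) (η.contDiff_normed (μ := volume)) hk.locallyIntegrable
  exact h

lemma moll_approx {k : Euc m → ℝ} (hk : Continuous k) {x : Euc m} {a δ : ℝ}
    (h : ∀ t, ‖t‖ < η.rOut → |k (x - t) - a| ≤ δ) : |moll η k x - a| ≤ δ :=
  weighted_le η (k := fun t => k (x - t)) (by fun_prop) h

lemma exists_bound {X E : Type*} [TopologicalSpace X] [NormedAddCommGroup E] {g : X → E}
    (hg : Continuous g) (hc : HasCompactSupport g) : ∃ B : ℝ, 0 ≤ B ∧ ∀ x, ‖g x‖ ≤ B := by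
  obtain ⟨B, hB⟩ := hg.bounded_above_of_compact_support hc
  exact ⟨max B 0, le_max_right _ _, fun x => (hB x).trans (le_max_left _ _)⟩

lemma moll_param {E : Type*} [NormedAddCommGroup E] [NormedSpace ℝ E] {g : Euc m → E}
    {g' : Euc m → Euc m →L[ℝ] E} (hg : Continuous g) (hg' : Continuous g')
    (hc : HasCompactSupport g) (hc' : HasCompactSupport g')
    (hd : ∀ x, HasFDerivAt g (g' x) x) (x : Euc m) :
    HasFDerivAt (fun x => ∫ t, η.normed volume t • g (x - t))
      (∫ t, η.normed volume t • g' (x - t)) x := by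
  obtain ⟨B1, h1, hB1⟩ := exists_bound hg hc
  obtain ⟨B2, h2, hB2⟩ := exists_bound hg' hc'
  have hη := η.integrable_normed (μ := (volume : Measure (Euc m)))
  have cη := η.continuous_normed (μ := (volume : Measure (Euc m)))
  refine param_deriv (s := univ) (B := fun t => η.normed volume t * (B1 + B2)) isOpen_univ
    (G := fun x t => η.normed volume t • g (x - t))
    (G' := fun x t => η.normed volume t • g' (x - t)) (hη.mul_const _) ?_ ?_ ?_ ?_ ?_ (mem_univ x)
  · exact (cη.comp continuous_snd).smul (hg.comp (continuous_fst.sub continuous_snd))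
  · intro x _ t
    rw [norm_smul, Real.norm_eq_abs, abs_of_nonneg (η.nonneg_normed t)]
    exact mul_le_mul_of_nonneg_left (by linarith [hB1 (x - t)]) (η.nonneg_normed t)
  · exact (cη.comp continuous_snd).smul (hg'.comp (continuous_fst.sub continuous_snd))
  · intro x _ t
    rw [norm_smul, Real.norm_eq_abs, abs_of_nonneg (η.nonneg_normed t)]
    exact mul_le_mul_of_nonneg_left (by linarith [hB2 (x - t)]) (η.nonneg_normed t)
  · intro x t
    have := (hd (x - t)).comp x ((hasFDerivAt_id x).sub_const t)
    exact (this.const_smul (η.normed volume t)).congr_fderiv (by simp)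

lemma moll_fderiv {k : Euc m → ℝ} (hk : ContDiff ℝ 2 k) (hc : HasCompactSupport k) (x : Euc m) :
    HasFDerivAt (moll η k) (∫ t, η.normed volume t • fderiv ℝ k (x - t)) x :=
  moll_param η hk.continuous (hk.continuous_fderiv (by norm_num)) hc (hc.fderiv ℝ)
    (fun x => (hk.differentiable (by norm_num) x).hasFDerivAt) x

lemma moll_fderiv_apply {k : Euc m → ℝ} (hk : ContDiff ℝ 2 k) (hc : HasCompactSupport k)
    (x v : Euc m) : fderiv ℝ (moll η k) x v = ∫ t, η.normed volume t * fderiv ℝ k (x - t) v := by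
  have hcf := hk.continuous_fderiv (by norm_num)
  have cη := η.continuous_normed (μ := (volume : Measure (Euc m)))
  have hi : Integrable fun t => η.normed volume t • fderiv ℝ k (x - t) :=
    (cη.smul (by fun_prop : Continuous fun t => fderiv ℝ k (x - t))).integrable_of_hasCompactSupport
      (η.hasCompactSupport_normed.smul_right)
  rw [(moll_fderiv η hk hc x).fderiv, ContinuousLinearMap.integral_apply hi]
  simp

lemma moll_fderiv_abs {k : Euc m → ℝ} (hk : ContDiff ℝ 2 k) (hc : HasCompactSupport k)
    {x v : Euc m} {δ : ℝ} (h : ∀ t, ‖t‖ < η.rOut → |fderiv ℝ k (x - t) v| ≤ δ) :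
    |fderiv ℝ (moll η k) x v| ≤ δ := by
  have hcf := hk.continuous_fderiv (by norm_num)
  rw [moll_fderiv_apply η hk hc]
  have := weighted_le η (k := fun t => fderiv ℝ k (x - t) v) (a := 0) (δ := δ) (by fun_prop)
    (by simpa using h)
  simpa using this

set_option maxSynthPendingDepth 3 in
lemma moll_laplacian {k : Euc m → ℝ} (hk : ContDiff ℝ 2 k) (hc : HasCompactSupport k)
    {x : Euc m} (h : ∀ t, ‖t‖ < η.rOut → laplacian k (x - t) = 0) :
    laplacian (moll η k) x = 0 := by
  have hk1 : ContDiff ℝ 1 (fderiv ℝ k) := hk.fderiv_right (by norm_num)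
  have hcf := hk1.continuous
  have hcf2 := hk1.continuous_fderiv (by norm_num)
  have cη := η.continuous_normed (μ := (volume : Measure (Euc m)))
  have h1 : HasFDerivAt (fderiv ℝ (moll η k))
      (∫ t, η.normed volume t • fderiv ℝ (fderiv ℝ k) (x - t)) x := by
    have := moll_param η hcf hcf2 (hc.fderiv ℝ) ((hc.fderiv ℝ).fderiv ℝ)
      (fun x => (hk1.differentiable (by norm_num) x).hasFDerivAt) x
    refine this.congr_of_eventuallyEq (Eventually.of_forall fun y => ?_)
    exact (moll_fderiv η hk hc y).fderiv
  have hi : Integrable fun t => η.normed volume t • fderiv ℝ (fderiv ℝ k) (x - t) :=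
    (cη.smul (by fun_prop :
      Continuous fun t => fderiv ℝ (fderiv ℝ k) (x - t))).integrable_of_hasCompactSupport
      (η.hasCompactSupport_normed.smul_right)
  have h2 : ContDiffAt ℝ 2 (moll η k) x :=
    (moll_contDiff η hk.continuous).contDiffAt.of_le two_le_infty
  rw [laplacian_eq_sum h2 (EuclideanSpace.basisFun (Fin m) ℝ), h1.fderiv]
  have h3 : ∀ v : Euc m, (∫ t, η.normed volume t • fderiv ℝ (fderiv ℝ k) (x - t)) v v
      = ∫ t, (η.normed volume t • fderiv ℝ (fderiv ℝ k) (x - t)) v v := by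
    intro v
    rw [ContinuousLinearMap.integral_apply hi, ContinuousLinearMap.integral_apply]
    exact hi.apply_continuousLinearMap v
  simp_rw [h3]
  rw [← integral_finsetSum]
  · have : ∀ t, ∑ i, (η.normed volume t • fderiv ℝ (fderiv ℝ k) (x - t))
        (EuclideanSpace.basisFun (Fin m) ℝ i) (EuclideanSpace.basisFun (Fin m) ℝ i) = 0 := by
      intro t
      by_cases ht : ‖t‖ < η.rOut
      · have h4 := h t ht
        rw [laplacian_eq_sum hk.contDiffAt (EuclideanSpace.basisFun (Fin m) ℝ)] at h4
        simp only [ContinuousLinearMap.smul_apply, smul_eq_mul]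
        rw [← Finset.mul_sum, h4, mul_zero]
      · rw [normed_eq_zero η (not_lt.1 ht)]
        simp
    simp_rw [this]
    simp
  · intro i _
    exact (hi.apply_continuousLinearMap _).apply_continuousLinearMap _

end

lemma laplacian_congr {m : ℕ} {u v : Euc m → ℝ} {x : Euc m} (h : u =ᶠ[𝓝 x] v) :
    laplacian u x = laplacian v x := by
  unfold laplacian
  refine Finset.sum_congr rfl fun i _ => ?_
  have : (fun y => fderiv ℝ u y (EuclideanSpace.single i 1)) =ᶠ[𝓝 x]
      fun y => fderiv ℝ v y (EuclideanSpace.single i 1) := by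
    filter_upwards [h.fderiv (𝕜 := ℝ)] with y hy
    rw [hy]
  rw [this.fderiv_eq]

lemma laplacian_shift {m : ℕ} (u : Euc m → ℝ) (a x : Euc m) :
    laplacian (fun y => u (y + a)) x = laplacian u (x + a) := by
  unfold laplacian
  refine Finset.sum_congr rfl fun i _ => ?_
  simp only [fderiv_comp_add_right]
  rw [fderiv_comp_add_right (f := fun y => fderiv ℝ u y (EuclideanSpace.single i 1)) a]

/-- The gradient constant. -/
def gradConst (n : ℕ) (ρ : ℝ) (M : ℝ≥0) : ℝ := lipConst n ρ M * (4 + 12 * (8 * n + 16))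

section
variable {n : ℕ} {ρ : ℝ} {M : ℝ≥0} {Ω : Set (Euc (n + 1))}
    {ν : Euc (n + 1) → Euc (n + 1)} {τ : ℝ} {f : Euc n → ℝ} {h : Euc (n + 1) → ℝ}

lemma Setup.mem_Om (H : Setup ρ M Ω ν τ f h) {z : Euc (n + 1)} (h1 : ‖front z‖ ≤ 13 / 10)
    (h2 : 13 / 10 * τ < lastc z) (h3 : lastc z ≤ 12 / 10) : z ∈ Ω := by
  have hτ := H.τ0
  have hz : ‖z‖ < 10 := by
    have := norm_le_add z
    rw [abs_of_nonneg (by linarith)] at this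
    linarith
  refine (H.gr z (by simpa using hz)).2 ?_
  have h4 := (abs_le.1 (H.f_abs0 (front z))).2
  have := mul_le_mul_of_nonneg_left h1 hτ.le
  linarith

lemma Setup.dn_est (H : Setup ρ M Ω ν τ f h) {z : Euc (n + 1)} (h1 : ‖front z‖ ≤ 13 / 10)
    (h2 : 6 * τ ≤ lastc z) (h3 : lastc z ≤ 8 * τ) :
    |fderiv ℝ h z (en n)| ≤ gradConst n ρ M * τ := by
  have hτ := H.τ0
  have hτ1 := H.τ1
  have hL : 8 ≤ lipConst n ρ M := lipConst_ge H.c11.2.2.1 M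
  have hn0 : (0 : ℝ) ≤ n := Nat.cast_nonneg n
  have hzΩ : z ∈ Ω := H.mem_Om h1 (by linarith) (by linarith)
  have hdz : HasFDerivAt h (fderiv ℝ h z) z :=
    ((H.harm.contDiffAt H.c11.1 hzΩ).differentiableAt (by norm_num)).hasFDerivAt
  have hC0 : 0 ≤ gradConst n ρ M * τ := by unfold gradConst; positivity
  have hline : HasDerivAt (fun s : ℝ => h (z + s • en n)) (fderiv ℝ h z (en n)) 0 := by
    have e1 : HasDerivAt (fun s : ℝ => z + s • en n) (en n) 0 := by
      simpa using ((hasDerivAt_id (0 : ℝ)).smul_const (en n)).const_add z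
    have hdz' : HasFDerivAt h (fderiv ℝ h z) (z + (0 : ℝ) • en n) := by simpa using hdz
    exact hdz'.comp_hasDerivAt 0 e1
  rw [← Real.norm_eq_abs]
  refine hline.le_of_lip' hC0 ?_
  have hsn : ∀ s : ℝ, z + s • en n = snocVec (front z) (lastc z + s) := fun s =>
    euc_ext (by simp) (by simp)
  have hcl : ∀ s : ℝ, |s| < τ → snocVec (front z) (lastc z + s) ∈ closure Ω := by
    intro s hs
    have := abs_lt.1 hs
    exact subset_closure (H.mem_Om (by simpa using h1) (by simp; linarith) (by simp; linarith))
  have hz0 := hcl 0 (by simpa using hτ)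
  rw [add_zero] at hz0
  have key : ∀ b : ℝ, b ≤ 9 * τ → lipConst n ρ M * (4 * τ + (8 * n + 16) * (b + 3 * τ))
      ≤ gradConst n ρ M * τ := by
    intro b hb
    unfold gradConst
    have e1 : (8 * (n : ℝ) + 16) * (b + 3 * τ) ≤ (8 * n + 16) * (12 * τ) :=
      mul_le_mul_of_nonneg_left (by linarith) (by positivity)
    have e2 := mul_le_mul_of_nonneg_left e1 (by linarith : 0 ≤ lipConst n ρ M)
    linarith
  filter_upwards [Metric.ball_mem_nhds (0 : ℝ) hτ] with s hs
  have hs' : |s| < τ := by simpa using hs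
  have hs2 := abs_lt.1 hs'
  simp only [zero_smul, add_zero, sub_zero, Real.norm_eq_abs]
  rw [hsn s]
  conv_lhs => rw [← snocVec_front_lastc z]
  simp only [front_snocVec, lastc_snocVec]
  rcases le_total 0 s with h0 | h0
  · have hv := H.vert_est h1 (a := lastc z) (b := lastc z + s) (by linarith) (by linarith)
      (by linarith) hz0 (hcl s hs')
    have := mul_le_mul_of_nonneg_left (key (lastc z + s) (by linarith)) h0
    rw [abs_of_nonneg h0]
    rw [add_sub_cancel_left] at hv
    linarith
  · have hv := H.vert_est h1 (a := lastc z + s) (b := lastc z) (by linarith) (by linarith)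
      (by linarith) (hcl s hs') hz0
    have := mul_le_mul_of_nonneg_left (key (lastc z) (by linarith)) (neg_nonneg.2 h0)
    rw [abs_of_nonpos h0, abs_sub_comm]
    rw [show lastc z - (lastc z + s) = -s by ring] at hv
    linarith

open scoped ContDiff in
lemma Setup.exists_g0 (H : Setup ρ M Ω ν τ f h) (hb : Bornology.IsBounded Ω) :
    ∃ g : Euc (n + 1) → ℝ, ContDiff ℝ ∞ g ∧
      (∀ x, ‖front x‖ ≤ 12 / 10 → -(3 * τ) ≤ lastc x → lastc x ≤ 1 → laplacian g x = 0) ∧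
      (∀ x, ‖front x‖ ≤ 12 / 10 → -(3 * τ) ≤ lastc x → lastc x ≤ 1 → ∀ y ∈ closure Ω,
        ‖y‖ ≤ 5 / 2 → ‖x - y‖ ≤ 5 * τ → |g x - h y| ≤ lipConst n ρ M * (16 * τ)) ∧
      (∀ x, ‖front x‖ ≤ 12 / 10 → lastc x = -(3 * τ) →
        |fderiv ℝ g x (en n)| ≤ gradConst n ρ M * τ) := by
  have hτ := H.τ0
  have hτ1 := H.τ1
  have hL : 8 ≤ lipConst n ρ M := lipConst_ge H.c11.2.2.1 M
  set K : Set (Euc (n + 1)) := {z | ‖front z‖ ≤ 125 / 100 ∧ 4 * τ ≤ lastc z ∧ lastc z ≤ 12 / 10}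
    with hK
  have hKc : IsClosed K := by
    have c1 : Continuous fun y : Euc (n + 1) => ‖front y‖ := by fun_prop
    exact (isClosed_le c1 continuous_const).inter
      ((isClosed_le continuous_const continuous_lastc).inter
        (isClosed_le continuous_lastc continuous_const))
  have hKΩ : K ⊆ Ω := fun z hz => H.mem_Om (by linarith [hz.1]) (by linarith [hz.2.1]) hz.2.2
  obtain ⟨k, k1, k2, k3⟩ := exists_ext H.c11.1 hb H.harm.1 hKc hKΩ
  let η : ContDiffBump (0 : Euc (n + 1)) := ⟨τ / 2, τ, by linarith, by linarith⟩
  have hη : η.rOut = τ := rfl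
  have hzf : ∀ x t : Euc (n + 1), ‖front x‖ ≤ 12 / 10 → ‖t‖ < η.rOut →
      ‖front (x + (10 * τ) • en n - t)‖ ≤ 125 / 100 := by
    intro x t hx ht
    simp only [front_sub, front_add, front_smul, front_en, smul_zero, add_zero]
    have := norm_sub_le (front x) (front t)
    have := norm_front_le t
    rw [hη] at ht
    linarith
  have hzl : ∀ x t : Euc (n + 1), ‖t‖ < η.rOut →
      lastc x + 9 * τ ≤ lastc (x + (10 * τ) • en n - t) ∧
      lastc (x + (10 * τ) • en n - t) ≤ lastc x + 11 * τ := by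
    intro x t ht
    rw [hη] at ht
    have := abs_le.1 ((abs_lastc_le t).trans ht.le)
    simp only [lastc_sub, lastc_add, lastc_smul, lastc_en]
    constructor <;> linarith
  have hzK : ∀ x t : Euc (n + 1), ‖front x‖ ≤ 12 / 10 → -(3 * τ) ≤ lastc x → lastc x ≤ 1 →
      ‖t‖ < η.rOut → x + (10 * τ) • en n - t ∈ K := fun x t h1 h2 h3 h4 =>
    ⟨hzf x t h1 h4, by linarith [(hzl x t h4).1], by linarith [(hzl x t h4).2]⟩
  refine ⟨fun x => moll η k (x + (10 * τ) • en n), ?_, ?_, ?_, ?_⟩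
  · exact (moll_contDiff η k1.continuous).comp (contDiff_id.add contDiff_const)
  · intro x h1 h2 h3
    rw [laplacian_shift]
    refine moll_laplacian η k1 k2 fun t ht => ?_
    have hz := hzK x t h1 h2 h3 ht
    rw [laplacian_congr (k3 _ hz)]
    exact H.harm.2 _ (hKΩ hz)
  · intro x h1 h2 h3 y hy hy2 hxy
    refine moll_approx η k1.continuous fun t ht => ?_
    have hz := hzK x t h1 h2 h3 ht
    rw [(k3 _ hz).self_of_nhds]
    have hzn : ‖x + (10 * τ) • en n - t‖ ≤ 5 / 2 := by
      have := norm_le_add (x + (10 * τ) • en n - t)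
      rw [abs_of_nonneg (by linarith [hz.2.1])] at this
      linarith [hz.1, hz.2.2]
    refine (H.lip_est (subset_closure (hKΩ hz)) hzn hy hy2).trans ?_
    refine mul_le_mul_of_nonneg_left ?_ (by linarith)
    have e : x + (10 * τ) • en n - t - y = (x - y) + ((10 * τ) • en n - t) := by abel
    rw [e]
    have e1 := norm_add_le (x - y) ((10 * τ) • en n - t)
    have e2 := norm_sub_le ((10 * τ) • en n) t
    rw [norm_smul, norm_en, Real.norm_eq_abs, abs_of_pos (by linarith : 0 < 10 * τ)] at e2
    rw [hη] at ht
    linarith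
  · intro x h1 h2
    rw [fderiv_comp_add_right]
    refine moll_fderiv_abs η k1 k2 fun t ht => ?_
    have hz := hzK x t h1 h2.ge (by linarith) ht
    rw [(k3 _ hz).fderiv_eq]
    exact H.dn_est (by linarith [hz.1]) (by linarith [(hzl x t ht).1]) (by linarith [(hzl x t ht).2])

end

open scoped ContDiff in
lemma contDiff_snocVec {n : ℕ} (a : ℝ) : ContDiff ℝ ∞ (fun v : Euc n => snocVec v a) := by
  rw [contDiff_euclidean]
  intro i
  by_cases hi : i = Fin.last n
  · have : (fun v : Euc n => snocVec v a i) = fun _ => a := by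
      funext v
      simp [snocVec, EuclideanSpace.equiv, hi]
    rw [this]
    exact contDiff_const
  · have : (fun v : Euc n => snocVec v a i) = fun v => v (i.castPred hi) := by
      funext v
      simp [snocVec, EuclideanSpace.equiv, hi]
    rw [this]
    fun_prop

@[simp] lemma front_xOne (n : ℕ) (τ : ℝ) : front (xOne n τ) = 0 := by
  have : xOne n τ = (-(3 * τ)) • en n := rfl
  rw [this, front_smul, front_en, smul_zero]

@[simp] lemma lastc_xOne (n : ℕ) (τ : ℝ) : lastc (xOne n τ) = -(3 * τ) := by
  have : xOne n τ = (-(3 * τ)) • en n := rfl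
  rw [this, lastc_smul, lastc_en, mul_one]

lemma mem_cyl_iff {n : ℕ} {τ : ℝ} {y : Euc (n + 1)} :
    y ∈ cyl (xOne n τ) 1 1 ↔ ‖front y‖ < 1 ∧ -(3 * τ) < lastc y ∧ lastc y < 1 - 3 * τ := by
  simp only [cyl, mem_setOf_eq, front_xOne, lastc_xOne, sub_zero]
  constructor
  · rintro ⟨h1, h2, h3⟩
    exact ⟨h1, by linarith, by linarith⟩
  · rintro ⟨h1, h2, h3⟩
    exact ⟨h1, by linarith, by linarith⟩

lemma isOpen_cyl (n : ℕ) (τ : ℝ) : IsOpen (cyl (xOne n τ) 1 1) := by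
  have : cyl (xOne n τ) 1 1 = {y | ‖front y‖ < 1} ∩
      ({y | -(3 * τ) < lastc y} ∩ {y | lastc y < 1 - 3 * τ}) := by
    ext y
    exact mem_cyl_iff
  rw [this]
  exact (isOpen_lt continuous_front.norm continuous_const).inter
    ((isOpen_lt continuous_const continuous_lastc).inter
      (isOpen_lt continuous_lastc continuous_const))

lemma convex_cyl (n : ℕ) (τ : ℝ) : Convex ℝ (cyl (xOne n τ) 1 1) := by
  have : cyl (xOne n τ) 1 1 = (frontL n) ⁻¹' (ball 0 1) ∩
      (lastL n) ⁻¹' (Ioo (-(3 * τ)) (1 - 3 * τ)) := by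
    ext y
    simp [mem_cyl_iff]
  rw [this]
  exact ((convex_ball (0 : Euc n) 1).linear_preimage (frontL n).toLinearMap).inter
    ((convex_Ioo _ _).linear_preimage (lastL n).toLinearMap)

lemma closure_cyl_subset {n : ℕ} {τ : ℝ} {y : Euc (n + 1)} (hy : y ∈ closure (cyl (xOne n τ) 1 1)) :
    ‖front y‖ ≤ 1 ∧ -(3 * τ) ≤ lastc y ∧ lastc y ≤ 1 - 3 * τ := by
  have hc : IsClosed {y : Euc (n + 1) | ‖front y‖ ≤ 1 ∧ -(3 * τ) ≤ lastc y ∧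
      lastc y ≤ 1 - 3 * τ} :=
    (isClosed_le continuous_front.norm continuous_const).inter
      ((isClosed_le continuous_const continuous_lastc).inter
        (isClosed_le continuous_lastc continuous_const))
  refine closure_minimal (fun z hz => ?_) hc hy
  obtain ⟨h1, h2, h3⟩ := mem_cyl_iff.1 hz
  exact ⟨h1.le, h2.le, h3.le⟩

lemma lowerFace_mem_closure {n : ℕ} {τ : ℝ} {y : Euc (n + 1)} (hy : y ∈ lowerFace (xOne n τ) 1) :
    y ∈ closure (cyl (xOne n τ) 1 1) := by
  simp only [lowerFace, mem_setOf_eq, front_xOne, lastc_xOne, sub_zero] at hy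
  have hcl : Tendsto (fun t : ℝ => snocVec ((1 - t) • front y) (-(3 * τ) + t)) (𝓝[>] 0)
      (𝓝 y) := by
    have e : (fun t : ℝ => snocVec ((1 - t) • front y) (-(3 * τ) + t)) =
        fun t : ℝ => y + t • (en n - snocVec (front y) 0) := by
      funext t
      apply euc_ext
      · simp only [front_snocVec, front_add, front_smul, front_sub, front_en]
        module
      · simp only [lastc_snocVec, lastc_add, lastc_smul, lastc_sub, lastc_en, hy.2]
        ring
    rw [e]
    have : Tendsto (fun t : ℝ => y + t • (en n - snocVec (front y) 0)) (𝓝 0)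
        (𝓝 (y + (0 : ℝ) • (en n - snocVec (front y) 0))) := by
      apply Continuous.tendsto
      fun_prop
    simp only [zero_smul, add_zero] at this
    exact this.mono_left nhdsWithin_le_nhds
  refine mem_closure_of_tendsto hcl ?_
  have : Ioo (0 : ℝ) 1 ∈ 𝓝[>] (0 : ℝ) := Ioo_mem_nhdsGT one_pos
  filter_upwards [this] with t ht
  rw [mem_cyl_iff, front_snocVec, lastc_snocVec, norm_smul, Real.norm_eq_abs,
    abs_of_pos (by linarith [ht.2])]
  refine ⟨?_, by linarith [ht.1], by linarith [ht.2]⟩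
  have := mul_le_mul_of_nonneg_left hy.1 (show (0 : ℝ) ≤ 1 - t by linarith [ht.2])
  linarith [ht.1]

lemma harmonicOn_const {m : ℕ} (c : ℝ) (s : Set (Euc m)) : HarmonicOn (fun _ => c) s := by
  refine ⟨contDiffOn_const, fun x _ => ?_⟩
  simp [laplacian]

section
variable {n : ℕ} {ρ : ℝ} {M : ℝ≥0} {Ω : Set (Euc (n + 1))}
    {ν : Euc (n + 1) → Euc (n + 1)} {τ : ℝ} {f : Euc n → ℝ} {h : Euc (n + 1) → ℝ}

/-- The constant of the comparison before normalisation. -/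
def cmpConst (n : ℕ) (ρ : ℝ) (M : ℝ≥0) : ℝ := 16 * lipConst n ρ M + gradConst n ρ M

open scoped ContDiff in
lemma Setup.exists_g1 (H : Setup ρ M Ω ν τ f h) (hb : Bornology.IsBounded Ω) :
    ∃ g : Euc (n + 1) → ℝ, ContinuousOn g (closure (cyl (xOne n τ) 1 1)) ∧
      HarmonicOn g (cyl (xOne n τ) 1 1) ∧
      (∀ y ∈ lowerFace (xOne n τ) 1, ∃ D : Euc (n + 1) →L[ℝ] ℝ,
        HasFDerivWithinAt g D (closure (cyl (xOne n τ) 1 1)) y ∧ D (en n) = 0) ∧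
      (∀ x ∈ cyl (xOne n τ) 1 1, ∀ y ∈ closure Ω,
        ‖y‖ ≤ 5 / 2 → ‖x - y‖ ≤ 5 * τ → |g x - h y| ≤ cmpConst n ρ M * τ) := by
  have hτ := H.τ0
  have hτ1 := H.τ1
  have hL : 8 ≤ lipConst n ρ M := lipConst_ge H.c11.2.2.1 M
  have hG0 : 0 ≤ gradConst n ρ M * τ := by unfold gradConst; positivity
  obtain ⟨g0, hg0, hlap, hcmp, hder⟩ := H.exists_g0 hb
  obtain ⟨χ, hχ, hχ0, hχ1, hχb⟩ := exists_cutoff (m := n) (s := {x | 12 / 10 ≤ ‖x‖})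
    (t := {x | ‖x‖ ≤ 11 / 10}) (isClosed_le continuous_const continuous_norm)
    (isClosed_le continuous_norm continuous_const)
    (by
      rw [Set.disjoint_left]
      intro x hx hx2
      simp only [mem_setOf_eq] at hx hx2
      linarith)
  set d : Euc n → ℝ := fun v => fderiv ℝ g0 (snocVec v (-(3 * τ))) (en n) with hd
  have hdC : ContDiff ℝ ∞ d :=
    ((hg0.fderiv_right (m := ∞) (by simp)).comp (contDiff_snocVec _)).clm_apply contDiff_const
  have hout : ∀ v : Euc n, 12 / 10 ≤ ‖v‖ → χ v = 0 := fun v hv => (hχ0 v hv).eq_of_nhds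
  obtain ⟨w, hw1, hw2, hw3, hw4⟩ := exists_w (fun v => χ v * d v) (hχ.mul hdC)
    (HasCompactSupport.intro (isCompact_closedBall (0 : Euc n) (12 / 10)) (by
      intro v hv
      simp only [mem_closedBall, dist_zero_right, not_le] at hv
      rw [hout v hv.le, zero_mul]))
    (S := gradConst n ρ M * τ) (by
      intro v
      by_cases hv : 12 / 10 ≤ ‖v‖
      · rw [hout v hv, zero_mul, abs_zero]
        exact hG0
      · have h1 : |d v| ≤ gradConst n ρ M * τ :=
          hder (snocVec v (-(3 * τ))) (by rw [front_snocVec]; linarith) (by simp)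
        rw [abs_mul, abs_of_nonneg (hχb v).1]
        calc χ v * |d v| ≤ 1 * |d v| :=
              mul_le_mul_of_nonneg_right (hχb v).2 (abs_nonneg _)
          _ ≤ _ := by rw [one_mul]; exact h1)
  have hfr : ∀ x : Euc (n + 1), front (x + (3 * τ) • en n) = front x := by
    intro x
    rw [front_add, front_smul, front_en, smul_zero, add_zero]
  have hla : ∀ x : Euc (n + 1), lastc (x + (3 * τ) • en n) = lastc x + 3 * τ := by
    intro x
    rw [lastc_add, lastc_smul, lastc_en, mul_one]
  have hmap : MapsTo (fun x : Euc (n + 1) => x + (3 * τ) • en n)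
      (closure (cyl (xOne n τ) 1 1)) (cslab n) := by
    intro x hx
    obtain ⟨h1, h2, h3⟩ := closure_cyl_subset hx
    show 0 ≤ lastc _ ∧ lastc _ ≤ 2
    rw [hla]
    exact ⟨by linarith, by linarith⟩
  have hmap2 : MapsTo (fun x : Euc (n + 1) => x + (3 * τ) • en n)
      (cyl (xOne n τ) 1 1) (slab n) := by
    intro x hx
    obtain ⟨h1, h2, h3⟩ := mem_cyl_iff.1 hx
    show 0 < lastc _ ∧ lastc _ < 2
    rw [hla]
    exact ⟨by linarith, by linarith⟩
  have hsh : ContDiff ℝ 2 (fun x : Euc (n + 1) => x + (3 * τ) • en n) := by fun_prop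
  refine ⟨fun x => g0 x - w (x + (3 * τ) • en n), ?_, ?_, ?_, ?_⟩
  · exact hg0.continuous.continuousOn.sub (hw2.comp hsh.continuous.continuousOn hmap)
  · refine harmonicOn_sub (isOpen_cyl n τ) ⟨(hg0.of_le two_le_infty).contDiffOn, ?_⟩
      ⟨hw1.1.comp hsh.contDiffOn hmap2, ?_⟩
    · intro x hx
      obtain ⟨h1, h2, h3⟩ := mem_cyl_iff.1 hx
      exact hlap x (by linarith) h2.le (by linarith)
    · intro x hx
      rw [laplacian_shift]
      exact hw1.2 _ (hmap2 hx)
  · intro y hy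
    have hy' := hy
    simp only [lowerFace, mem_setOf_eq, front_xOne, lastc_xOne, sub_zero] at hy'
    obtain ⟨D, hD, hDe⟩ := hw3 (y + (3 * τ) • en n) (by rw [hla, hy'.2]; ring)
    have hsd : HasFDerivWithinAt (fun x : Euc (n + 1) => x + (3 * τ) • en n)
        (ContinuousLinearMap.id ℝ (Euc (n + 1))) (closure (cyl (xOne n τ) 1 1)) y :=
      (hasFDerivWithinAt_id y _).add_const _
    have hc := HasFDerivWithinAt.comp y hD hsd hmap
    have hg := ((hg0.differentiable (by simp)) y).hasFDerivAt.hasFDerivWithinAt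
      (s := closure (cyl (xOne n τ) 1 1))
    refine ⟨_, hg.sub hc, ?_⟩
    have e1 : χ (front y) = 1 :=
      (hχ1 (front y) (show ‖front y‖ ≤ 11 / 10 by linarith [hy'.1])).eq_of_nhds
    have e2 : d (front y) = fderiv ℝ g0 y (en n) := by
      simp only [hd]
      rw [← hy'.2, snocVec_front_lastc]
    rw [hfr, e1, one_mul, e2] at hDe
    simp [hDe]
  · intro x hx y hy hy2 hxy
    obtain ⟨h1, h2, h3⟩ := mem_cyl_iff.1 hx
    have a1 := hcmp x (by linarith) h2.le (by linarith) y hy hy2 hxy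
    have a2 := hw4 (x + (3 * τ) • en n) (by rw [hla]; linarith) (by rw [hla]; linarith)
    unfold cmpConst
    rw [abs_le] at a1 a2 ⊢
    constructor <;> linarith [a1.1, a1.2, a2.1, a2.2]

lemma Setup.exists_g (H : Setup ρ M Ω ν τ f h) (hb : Bornology.IsBounded Ω) :
    ∃ g : Euc (n + 1) → ℝ,
        ContinuousOn g (closure (cyl (xOne n τ) 1 1)) ∧
        HarmonicOn g (cyl (xOne n τ) 1 1) ∧
        (∀ y ∈ lowerFace (xOne n τ) 1,
          DifferentiableWithinAt ℝ g (closure (cyl (xOne n τ) 1 1)) y ∧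
          fderivWithin ℝ g (closure (cyl (xOne n τ) 1 1)) y
            (EuclideanSpace.single (Fin.last n) 1) = 0) ∧
        supOn (fun y => |g y - h y|) (Ω ∩ cyl (xOne n τ) 1 1) < (2 * cmpConst n ρ M + 1) * τ ∧
        supOn (fun y => |g y|) (cyl (xOne n τ) 1 1) =
          supOn (fun y => |h y|) (Ω ∩ cyl (xOne n τ) 1 1) := by
  have hτ := H.τ0
  have hτ1 := H.τ1
  obtain ⟨g1, k1, k2, k3, k4⟩ := H.exists_g1 hb
  set S : Set (Euc (n + 1)) := cyl (xOne n τ) 1 1 with hS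
  set E : ℝ := cmpConst n ρ M * τ with hE
  have hSn : ∀ x ∈ S, ‖x‖ ≤ 2 := by
    intro x hx
    obtain ⟨h1, h2, h3⟩ := mem_cyl_iff.1 hx
    have := norm_le_add x
    have : |lastc x| ≤ 1 := abs_le.2 ⟨by linarith, by linarith⟩
    linarith
  have hp : snocVec (0 : Euc n) (1 / 2) ∈ Ω ∩ S := by
    refine ⟨H.mem_Om (by simp; norm_num) (by simp; linarith) (by simp; norm_num), mem_cyl_iff.2 ?_⟩
    simp only [front_snocVec, lastc_snocVec, norm_zero]
    exact ⟨by norm_num, by linarith, by linarith⟩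
  have hdiff : ∀ x ∈ Ω ∩ S, |g1 x - h x| ≤ E := by
    intro x hx
    have := hSn x hx.2
    exact k4 x hx.2 x (subset_closure hx.1) (by linarith) (by simp; linarith)
  have hE0 : 0 ≤ E := (abs_nonneg _).trans (hdiff _ hp)
  have hbd : ∀ x ∈ Ω ∩ S, |h x| ≤ 1 := fun x hx =>
    H.bd x (subset_closure hx.1) (by have := hSn x hx.2; linarith)
  have hBh : BddAbove ((fun y => |h y|) '' (Ω ∩ S)) := by
    refine ⟨1, ?_⟩
    rintro _ ⟨x, hx, rfl⟩
    exact hbd x hx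
  set m : ℝ := supOn (fun y => |h y|) (Ω ∩ S) with hm
  have hmle : ∀ x ∈ Ω ∩ S, |h x| ≤ m := fun x hx =>
    le_csSup hBh (mem_image_of_mem (fun y => |h y|) hx)
  have hm0 : 0 ≤ m := (abs_nonneg _).trans (hmle _ hp)
  have hg1 : ∀ x ∈ S, |g1 x| ≤ m + E := by
    intro x hx
    obtain ⟨h1, h2, h3⟩ := mem_cyl_iff.1 hx
    have hyS : snocVec (front x) (max (lastc x) (2 * τ)) ∈ Ω ∩ S := by
      have a1 : 2 * τ ≤ max (lastc x) (2 * τ) := le_max_right _ _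
      have a2 : max (lastc x) (2 * τ) < 1 - 3 * τ := max_lt h3 (by linarith)
      refine ⟨H.mem_Om (by rw [front_snocVec]; linarith) (by rw [lastc_snocVec]; linarith)
        (by rw [lastc_snocVec]; linarith), mem_cyl_iff.2 ?_⟩
      rw [front_snocVec, lastc_snocVec]
      exact ⟨h1, by linarith, a2⟩
    have hn : ‖x - snocVec (front x) (max (lastc x) (2 * τ))‖ ≤ 5 * τ := by
      have a := norm_le_add (x - snocVec (front x) (max (lastc x) (2 * τ)))
      rw [front_sub, lastc_sub, front_snocVec, lastc_snocVec, sub_self, norm_zero, zero_add] at a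
      refine a.trans (abs_le.2 ⟨?_, ?_⟩)
      · have : max (lastc x) (2 * τ) ≤ lastc x + 5 * τ := max_le (by linarith) (by linarith)
        linarith
      · have := le_max_left (lastc x) (2 * τ)
        linarith
    have a1 := k4 x hx _ (subset_closure hyS.1) (by have := hSn _ hyS.2; linarith) hn
    have a2 := hmle _ hyS
    have a3 := abs_sub_abs_le_abs_sub (g1 x) (h (snocVec (front x) (max (lastc x) (2 * τ))))
    linarith
  have hBg : BddAbove ((fun y => |g1 y|) '' S) := by
    refine ⟨m + E, ?_⟩
    rintro _ ⟨x, hx, rfl⟩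
    exact hg1 x hx
  set m1 : ℝ := supOn (fun y => |g1 y|) S with hm1
  have hm1le : ∀ x ∈ S, |g1 x| ≤ m1 := fun x hx =>
    le_csSup hBg (mem_image_of_mem (fun y => |g1 y|) hx)
  have hm10 : 0 ≤ m1 := (abs_nonneg _).trans (hm1le _ hp.2)
  have hm1m : m1 ≤ m + E := by
    refine csSup_le ⟨_, mem_image_of_mem _ hp.2⟩ ?_
    rintro _ ⟨x, hx, rfl⟩
    exact hg1 x hx
  have hmm1 : m ≤ m1 + E := by
    refine csSup_le ⟨_, mem_image_of_mem _ hp⟩ ?_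
    rintro _ ⟨x, hx, rfl⟩
    have a1 := hdiff x hx
    have a2 := hm1le x hx.2
    have a3 := abs_sub_abs_le_abs_sub (h x) (g1 x)
    rw [abs_sub_comm (h x)] at a3
    show |h x| ≤ _
    linarith
  have hstrict : ∀ g : Euc (n + 1) → ℝ, (∀ x ∈ Ω ∩ S, |g x - h x| ≤ 2 * E) →
      supOn (fun y => |g y - h y|) (Ω ∩ S) < (2 * cmpConst n ρ M + 1) * τ := by
    intro g hg
    have : supOn (fun y => |g y - h y|) (Ω ∩ S) ≤ 2 * E := by
      refine csSup_le ⟨_, mem_image_of_mem _ hp⟩ ?_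
      rintro _ ⟨x, hx, rfl⟩
      exact hg x hx
    rw [hE] at this
    linarith
  have hun : ∀ y ∈ lowerFace (xOne n τ) 1, UniqueDiffWithinAt ℝ (closure S) y := by
    intro y hy
    refine uniqueDiffOn_convex (convex_cyl n τ).closure ?_ y (lowerFace_mem_closure hy)
    exact ⟨_, interior_maximal subset_closure (isOpen_cyl n τ) hp.2⟩
  rcases hm10.eq_or_lt with h0 | h0
  · refine ⟨fun _ => m, continuousOn_const, harmonicOn_const m S, ?_, hstrict _ ?_, ?_⟩
    · intro y hy
      refine ⟨differentiableWithinAt_const m, ?_⟩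
      simp
    · intro x hx
      have a := abs_le.1 (hmle x hx)
      exact abs_le.2 ⟨by linarith [a.1, a.2], by linarith [a.1, a.2]⟩
    · have : (fun _ : Euc (n + 1) => |m|) '' S = {|m|} :=
        Set.Nonempty.image_const ⟨_, hp.2⟩ _
      unfold supOn
      rw [this, csSup_singleton, abs_of_nonneg hm0]
  · refine ⟨fun x => m / m1 * g1 x, continuousOn_const.mul k1,
      harmonicOn_const_mul (isOpen_cyl n τ) _ k2, ?_, hstrict _ ?_, ?_⟩
    · intro y hy
      obtain ⟨D, hD, hDe⟩ := k3 y hy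
      have hD2 := hD.const_mul (m / m1)
      refine ⟨hD2.differentiableWithinAt, ?_⟩
      rw [hD2.fderivWithin (hun y hy)]
      have : D (EuclideanSpace.single (Fin.last n) 1) = 0 := hDe
      simp [this]
    · intro x hx
      have a1 := hdiff x hx
      have a2 := hm1le x hx.2
      have e : m / m1 * g1 x - h x = (g1 x - h x) + (m - m1) * (g1 x / m1) := by
        field_simp
        ring
      have a3 : |g1 x / m1| ≤ 1 := by
        rw [abs_div, abs_of_pos h0, div_le_one h0]
        exact a2
      have a4 : |m - m1| ≤ E := abs_le.2 ⟨by linarith, by linarith⟩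
      show |m / m1 * g1 x - h x| ≤ _
      rw [e]
      refine (abs_add_le _ _).trans ?_
      rw [abs_mul]
      have a5 := mul_le_mul a4 a3 (abs_nonneg _) hE0
      linarith
    · have hc : 0 ≤ m / m1 := by positivity
      have hmul : m / m1 * m1 = m := by field_simp
      refine le_antisymm (csSup_le ⟨_, mem_image_of_mem _ hp.2⟩ ?_) ?_
      · rintro _ ⟨x, hx, rfl⟩
        show |m / m1 * g1 x| ≤ m
        rw [abs_mul, abs_of_nonneg hc]
        calc m / m1 * |g1 x| ≤ m / m1 * m1 := mul_le_mul_of_nonneg_left (hm1le x hx) hc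
          _ = m := hmul
      · have hB : BddAbove ((fun y => |m / m1 * g1 y|) '' S) := by
          refine ⟨m, ?_⟩
          rintro _ ⟨x, hx, rfl⟩
          show |m / m1 * g1 x| ≤ m
          rw [abs_mul, abs_of_nonneg hc]
          calc m / m1 * |g1 x| ≤ m / m1 * m1 := mul_le_mul_of_nonneg_left (hm1le x hx) hc
            _ = m := hmul
        have hT : ∀ x ∈ S, m / m1 * |g1 x| ≤ supOn (fun y => |m / m1 * g1 y|) S := by
          intro x hx
          have := le_csSup hB (mem_image_of_mem (fun y => |m / m1 * g1 y|) hx)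
          simp only [abs_mul, abs_of_nonneg hc] at this
          simpa only [supOn, abs_mul, abs_of_nonneg hc] using this
        rcases hm0.eq_or_lt with hz | hz
        · have h9 : 0 ≤ supOn (fun y => |m / m1 * g1 y|) S :=
            le_trans (by positivity) (hT _ hp.2)
          exact hz.symm.le.trans h9
        · have hcp : 0 < m / m1 := by positivity
          have : m1 ≤ supOn (fun y => |m / m1 * g1 y|) S / (m / m1) := by
            refine csSup_le ⟨_, mem_image_of_mem _ hp.2⟩ ?_
            rintro _ ⟨x, hx, rfl⟩
            rw [le_div_iff₀ hcp, mul_comm]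
            exact hT x hx
          rw [le_div_iff₀ hcp, mul_comm, hmul] at this
          exact this

end

/-- The supremum normalisation gives a pointwise bound up to the boundary. -/
lemma bound_of_supOn {m : ℕ} {Ω : Set (Euc m)} {h : Euc m → ℝ}
    (hc : ContinuousOn h (closure Ω)) (hs : supOn (fun y => |h y|) (Ω ∩ ball 0 3) = 1) :
    ∀ x ∈ closure Ω, ‖x‖ < 3 → |h x| ≤ 1 := by
  have hB : BddAbove ((fun y => |h y|) '' (Ω ∩ ball 0 3)) := by
    by_contra hB
    have := Real.sSup_of_not_bddAbove hB
    unfold supOn at hs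
    rw [this] at hs
    exact zero_ne_one hs
  have h1 : ∀ x ∈ Ω ∩ ball (0 : Euc m) 3, |h x| ≤ 1 := by
    intro x hx
    rw [← hs]
    exact le_csSup hB (mem_image_of_mem (fun y => |h y|) hx)
  intro x hx hx3
  have hxc : x ∈ closure (Ω ∩ ball 0 3) := by
    rw [mem_closure_iff_nhds] at hx ⊢
    intro t ht
    have : ball (0 : Euc m) 3 ∈ 𝓝 x := isOpen_ball.mem_nhds (by simpa using hx3)
    obtain ⟨z, hz1, hz2⟩ := hx _ (inter_mem ht this)
    exact ⟨z, hz1.1, hz2, hz1.2⟩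
  have hcw : ContinuousWithinAt (fun y => |h y|) (Ω ∩ ball 0 3) x :=
    ((hc x hx).mono (inter_subset_left.trans subset_closure)).abs
  haveI : (𝓝[Ω ∩ ball 0 3] x).NeBot := mem_closure_iff_nhdsWithin_neBot.1 hxc
  exact le_of_tendsto hcw (eventually_nhdsWithin_of_forall h1)

/-- Approximation of the Neumann problem by a mixed problem in
the cylinder of the standard approximation `(x₁, S, Ω ∩ S)`, `S = S(x₁,1,1)`,
`x₁ = x₀ - 3τ e_n`, in coordinates where `x₀ = 0` and `e_n = -ν(x₀)`: there is a
harmonic `g` on `S` with vanishing `e_n`-derivative on the lower face `Γ₋`,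
`sup_{Ω∩S} |g - h| < Cτ` and `sup_S |g| = sup_{Ω∩S} |h|`. -/
theorem standard_approximation {n : ℕ} (ρ : ℝ) (M : ℝ≥0) :
    ∃ C : ℝ, 0 < C ∧
    ∀ (Ω : Set (Euc (n + 1))) (ν : Euc (n + 1) → Euc (n + 1)) (τ : ℝ)
      (f : Euc n → ℝ) (h : Euc (n + 1) → ℝ),
      Bornology.IsBounded Ω → IsC11DomainWith Ω ρ M →
      0 < τ → τ < 1 / 100 →
      (0 : Euc (n + 1)) ∈ frontier Ω →
      AlignedLipGraphOn Ω 0 10 τ f →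
      OutwardNormalFieldOn Ω ν (ball 0 10) →
      ContinuousOn h (closure Ω) → HarmonicOn h Ω →
      NeumannBC Ω ν h (ball 0 10) →
      supOn (fun y => |h y|) (Ω ∩ ball 0 3) = 1 →
      ∃ g : Euc (n + 1) → ℝ,
        ContinuousOn g (closure (cyl (xOne n τ) 1 1)) ∧
        HarmonicOn g (cyl (xOne n τ) 1 1) ∧
        (∀ y ∈ lowerFace (xOne n τ) 1,
          DifferentiableWithinAt ℝ g (closure (cyl (xOne n τ) 1 1)) y ∧
          fderivWithin ℝ g (closure (cyl (xOne n τ) 1 1)) y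
            (EuclideanSpace.single (Fin.last n) 1) = 0) ∧
        supOn (fun y => |g y - h y|) (Ω ∩ cyl (xOne n τ) 1 1) < C * τ ∧
        supOn (fun y => |g y|) (cyl (xOne n τ) 1 1) =
          supOn (fun y => |h y|) (Ω ∩ cyl (xOne n τ) 1 1) := by
  by_cases hρ : 0 < ρ
  · have hL : 8 ≤ lipConst n ρ M := lipConst_ge hρ M
    have hC : 0 ≤ cmpConst n ρ M := by
      unfold cmpConst gradConst
      positivity
    refine ⟨2 * cmpConst n ρ M + 1, by linarith, ?_⟩
    intro Ω ν τ f h hb hc11 hτ hτ1 _ hgr hnu hcont hharm hneu hsup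
    have H : Setup ρ M Ω ν τ f h :=
      { c11 := hc11
        τ0 := hτ
        τ1 := hτ1
        gr := hgr.gr
        lip := hgr.1
        f0 := hgr.2.1
        nu := hnu
        cont := hcont
        harm := hharm
        neu := fun x hx ε hε =>
          neumann_inward hx.1 (hnu x hx) (hneu x hx).1 (hneu x hx).2 hε
        bd := bound_of_supOn hcont hsup }
    exact H.exists_g hb
  · refine ⟨1, one_pos, ?_⟩
    intro Ω ν τ f h _ hc11
    exact absurd hc11.2.2.1 hρ

end NodalNeumann
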